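/- Let G = ⟨a, b; [a,b]ⁿ⟩ with n > 1. Then every automorphism of the free group F(a,b) induces an automorphism of G, and Out(G) ≅ Out(F(a,b)) ≅ GL(2,ℤ). -/

import Mathlib

def innAut (G : Type*) [Group G] : Subgroup (MulAut G) := (MulAut.conj : G →* MulAut G).range

instance innAut_normal (G : Type*) [Group G] : (innAut G).Normal := by
  constructor
  rintro x ⟨g, rfl⟩ f
  refine ⟨f g, ?_⟩
  ext h
  simp [MulAut.conj_apply, MulAut.mul_apply, mul_assoc]

abbrev Out (G : Type*) [Group G] := MulAut G ⧸ innAut G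

def ResiduallyFinite (G : Type*) [Group G] : Prop :=
  ∀ g : G, g ≠ 1 → ∃ N : Subgroup G, N.Normal ∧ Finite (G ⧸ N) ∧ g ∉ N

noncomputable def expSum (i : Fin 2) : FreeGroup (Fin 2) →* Multiplicative ℤ :=
  FreeGroup.lift (fun j => Multiplicative.ofAdd (if j = i then (1 : ℤ) else 0))

noncomputable def σ (i : Fin 2) (w : FreeGroup (Fin 2)) : ℤ :=
  Multiplicative.toAdd (expSum i w)

def NielsenEquiv {G : Type*} [Group G] {n : ℕ} (Y Z : Fin n → G) : Prop :=
  ∃ φ : FreeGroup (Fin n) ≃* FreeGroup (Fin n),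
    ∀ i, FreeGroup.lift Y (φ (FreeGroup.of i)) = Z i

def SameTSystem {G : Type*} [Group G] {n : ℕ} (Y Z : Fin n → G) : Prop :=
  ∃ ψ : G ≃* G, NielsenEquiv (fun i => ψ (Y i)) Z

/-!
Let `Q` be `⟨a, b; [a, b] ^ n⟩`, or the free group when `n = 0`. It is an HNN extension of
`⟨a, [a, b]⟩` with stable letter `b`. Over a field of iterated rational functions, matrices
`a ↦ diag(s, s⁻¹)`, `b ↦ diag(t, t⁻¹) B`, with `B` chosen so that `[a, b]` has eigenvalues `ζ` and
`ζ⁻¹` and `ζ ^ 2` has order `n`, define a representation of `Q` up to sign. By ping-pong for the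
degree in `t`, the degree of a trace counts stable letters.

An automorphism of `Q` maps `(a, b)` to a pair `(X, Y)` for which `tr [X, Y]` is constant: for
`n > 1` because `[X, Y]` is torsion, for `n = 0` because `Aut F(a, b)` preserves the polynomial
`x² + y² + z² - xyz - 4` in the traces of `a`, `b` and `ab` up to a scalar. Hence Fricke's identity
forces the larger of the degrees of `tr X` and `tr Y` to drop under a Nielsen move, as in Markov's
descent, until `X` or `Y` is conjugate into the vertex group `⟨a, [a, b]⟩`. In that case uniqueness
of reduced words leaves only images of `(a, b)` under Nielsen moves and conjugations. So every
automorphism of `Q` is induced by a tame automorphism of the free group. Tame automorphisms send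
`[a, b]` to a conjugate of `[a, b]^±1`, so all of them descend to `Q`; and those acting trivially on
exponent sums are inner, by a normal form in `GL(2, ℤ)`, so that the outer automorphism group is
`GL(2, ℤ)` for both groups.
-/

namespace TorusGroup

open Matrix MatrixGroups

/-! ### Reduced words -/

section Letters

variable {Γ : Type*} [Group Γ]

/-- The power `β ^ (±1)` whose sign is encoded by a Boolean, `true` standing for `+1`. -/
def letter (β : Γ) (ε : Bool) : Γ := if ε then β else β⁻¹

lemma letter_not (β : Γ) (ε : Bool) : letter β (!ε) = (letter β ε)⁻¹ := by
  cases ε <;> simp [letter]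

lemma map_letter {Γ' : Type*} [Group Γ'] (f : Γ →* Γ') (β : Γ) (ε : Bool) :
    f (letter β ε) = letter (f β) ε := by
  cases ε <;> simp [letter]

lemma letter_mem {V : Subgroup Γ} {β : Γ} (hβ : β ∈ V) (ε : Bool) : letter β ε ∈ V := by
  cases ε <;> simpa [letter] using hβ

end Letters

section ReducedWords

variable {Γ : Type*} [Group Γ] {V : Subgroup Γ} {E : Bool → Subgroup Γ} {β : Γ}

/-- A group generated by a vertex group `V` and a stable letter `β` which conjugates the edge
groups `E true` and `E false` of `V` into each other, as in an HNN extension. No faithfulness is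
required: reduced words may a priori represent `1`. -/
structure IsHNNGenerated (V : Subgroup Γ) (E : Bool → Subgroup Γ) (β : Γ) : Prop where
  edge_le : ∀ ε, E ε ≤ V
  edge_conj : ∀ ε, ∀ e ∈ E ε, letter β (!ε) * e * letter β ε ∈ E (!ε)
  closure_eq : Subgroup.closure (V ∪ {β} : Set Γ) = ⊤

/-- `IsReduced V E β ε g ε' m` says that `g` is a reduced word `β^ε h₁ β^ε₂ h₂ ⋯ hₘ` with `m` stable
letters which stays reduced when followed by `β^ε'`. -/
inductive IsReduced (V : Subgroup Γ) (E : Bool → Subgroup Γ) (β : Γ) :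
    Bool → Γ → Bool → ℕ → Prop
  | nil (ε) : IsReduced V E β ε 1 ε 0
  | cons {ε ε' ε'' : Bool} {h g : Γ} {m : ℕ} (hV : h ∈ V) (hE : ε' = !ε → h ∉ E ε')
      (hg : IsReduced V E β ε' g ε'' m) : IsReduced V E β ε (letter β ε * h * g) ε'' (m + 1)

namespace IsReduced

lemma single {ε ε' : Bool} {h : Γ} (hV : h ∈ V) (hE : ε' = !ε → h ∉ E ε') :
    IsReduced V E β ε (letter β ε * h) ε' 1 := by
  simpa only [mul_one] using cons hV hE (nil ε')

lemma mul {ε ε' ε'' : Bool} {g g' : Γ} {m m' : ℕ} (hg : IsReduced V E β ε g ε' m)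
    (hg' : IsReduced V E β ε' g' ε'' m') : IsReduced V E β ε (g * g') ε'' (m + m') := by
  induction hg with
  | nil => simpa only [one_mul, zero_add] using hg'
  | cons hV hE _ ih => simpa only [mul_assoc, add_right_comm] using cons hV hE (ih hg')

lemma inv {ε ε' : Bool} {g : Γ} {m : ℕ} (hg : IsReduced V E β ε g ε' m) :
    IsReduced V E β (!ε') (letter β (!ε') * g⁻¹ * letter β ε) (!ε) m := by
  induction hg with
  | nil ε => simpa [letter_not] using nil (!ε)
  | @cons ε ε' ε'' h g m hV hE _ ih =>
    have hlast : IsReduced V E β (!ε') (letter β (!ε') * h⁻¹) (!ε) 1 := by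
      refine single (inv_mem hV) fun hε hh => ?_
      obtain rfl : ε' = !ε := by simpa using hε.symm
      exact hE rfl (inv_mem_iff.1 hh)
    convert ih.mul hlast using 1
    simp only [letter_not]
    group

lemma exists_eq_mul_letter {ε ε' : Bool} {g : Γ} {m : ℕ}
    (hg : IsReduced V E β ε g ε' (m + 1)) :
    ∃ δ g' h, g = g' * (letter β δ * h) ∧ IsReduced V E β ε g' δ m ∧ h ∈ V ∧
      (ε' = !δ → h ∉ E ε') := by
  generalize hk : m + 1 = k at hg
  induction hg generalizing m with
  | nil => omega
  | @cons ε ε' ε'' h g k hV hE hg ih =>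
    obtain rfl : m = k := by omega
    cases m with
    | zero =>
      cases hg
      exact ⟨ε, 1, h, by simp, nil _, hV, hE⟩
    | succ m =>
      obtain ⟨δ, g', h', rfl, hg', hh', hE'⟩ := ih rfl
      exact ⟨δ, letter β ε * h * g', h', by simp only [mul_assoc], cons hV hE hg', hh', hE'⟩

lemma pow {ε : Bool} {g : Γ} {m : ℕ} (hg : IsReduced V E β ε g ε m) (k : ℕ) :
    IsReduced V E β ε (g ^ k) ε (k * m) := by
  induction k with
  | zero => simpa using nil ε
  | succ k ih => simpa only [pow_succ, add_mul, one_mul] using ih.mul hg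

end IsReduced

namespace IsHNNGenerated

lemma conj_mem (H : IsHNNGenerated V E β) {ε : Bool} {e : Γ} (he : e ∈ E ε) :
    letter β (!ε) * e * letter β ε ∈ V := H.edge_le _ (H.edge_conj ε e he)

lemma exists_letter_mul_eq (H : IsHNNGenerated V E β) {h g : Γ} {ε ε' : Bool} {m : ℕ}
    (hh : h ∈ V) (hg : IsReduced V E β ε g ε' m) (δ : Bool) :
    ∃ h' ∈ V, ∃ ε g' ε' m, IsReduced V E β ε g' ε' m ∧ letter β δ * (h * g) = h' * g' := by
  by_cases hpinch : ε = !δ → h ∉ E ε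
  · exact ⟨1, one_mem _, _, _, _, _, .cons hh hpinch hg, by simp [mul_assoc]⟩
  obtain ⟨rfl, he⟩ := Classical.not_imp.1 hpinch
  rw [not_not] at he
  cases hg with
  | nil => exact ⟨1, one_mem _, δ, _, δ, _, .single hh (by simp), by simp⟩
  | cons hV _ hg =>
    refine ⟨_, mul_mem (H.conj_mem he) hV, _, _, _, _, hg, ?_⟩
    simp only [mul_assoc, Bool.not_not]

lemma exists_eq_mul (H : IsHNNGenerated V E β) (g : Γ) :
    ∃ h ∈ V, ∃ ε g' ε' m, IsReduced V E β ε g' ε' m ∧ g = h * g' := by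
  have hg : g ∈ Subgroup.closure (V ∪ {β} : Set Γ) := H.closure_eq ▸ Subgroup.mem_top g
  have mul_left_of_mem {x y : Γ} (hx : x ∈ V)
      (hy : ∃ h ∈ V, ∃ ε g' ε' m, IsReduced V E β ε g' ε' m ∧ y = h * g') :
      ∃ h ∈ V, ∃ ε g' ε' m, IsReduced V E β ε g' ε' m ∧ x * y = h * g' := by
    obtain ⟨h, hh, ε, g', ε', m, hg', rfl⟩ := hy
    exact ⟨x * h, mul_mem hx hh, ε, g', ε', m, hg', (mul_assoc _ _ _).symm⟩
  induction hg using Subgroup.closure_induction_left with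
  | one => exact ⟨1, one_mem _, true, 1, true, 0, .nil _, (mul_one 1).symm⟩
  | mul_left x hx y _ ih =>
    rcases hx with hx | rfl
    · exact mul_left_of_mem hx ih
    · obtain ⟨h, hh, ε, g', ε', m, hg', rfl⟩ := ih
      exact H.exists_letter_mul_eq hh hg' true
  | inv_mul_cancel x hx y _ ih =>
    rcases hx with hx | rfl
    · exact mul_left_of_mem (inv_mem hx) ih
    · obtain ⟨h, hh, ε, g', ε', m, hg', rfl⟩ := ih
      exact H.exists_letter_mul_eq hh hg' false

lemma exists_conj_mem_or_isReduced_of_mul (H : IsHNNGenerated V E β) {m : ℕ} :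
    ∀ {h}, h ∈ V → ∀ {ε g ε'}, IsReduced V E β ε g ε' m →
      (∃ x, x * (h * g) * x⁻¹ ∈ V) ∨
        ∃ x δ k, IsReduced V E β δ (x * (h * g) * x⁻¹) δ k ∧ 0 < k := by
  induction m using Nat.strong_induction_on with
  | _ m ih =>
  intro h hh ε g ε' hg
  cases m with
  | zero =>
    cases hg
    exact Or.inl ⟨1, by simpa using hh⟩
  | succ m =>
  obtain ⟨δ, g', k, rfl, hg', hk, -⟩ := hg.exists_eq_mul_letter
  by_cases hpinch : ε = !δ → k * h ∉ E ε
  · refine Or.inr ⟨h⁻¹, ε, m + 1, ?_, m.succ_pos⟩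
    convert hg'.mul (.single (mul_mem hk hh) hpinch) using 1
    group
  obtain ⟨hε, he⟩ := Classical.not_imp.1 hpinch
  rw [not_not] at he
  cases hg' with
  | nil => simp at hε
  | @cons _ ε₁ _ h₁ g₁ m hV _ hg₁ =>
    subst hε
    have hconj : letter β δ * (k * h) * letter β (!δ) ∈ V := by simpa using H.conj_mem he
    have key x : x * ((letter β δ * (k * h) * letter β (!δ) * h₁) * g₁) * x⁻¹ =
        (x * letter β δ * k) * (h * (letter β (!δ) * h₁ * g₁ * (letter β δ * k))) *
          (x * letter β δ * k)⁻¹ := by group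
    rcases ih m (by omega) (mul_mem hconj hV) hg₁ with ⟨x, hx⟩ | ⟨x, δ', k', hx, hk'⟩
    · exact Or.inl ⟨_, by rwa [key] at hx⟩
    · exact Or.inr ⟨_, δ', k', by rwa [key] at hx, hk'⟩

lemma exists_conj_mem_or_isReduced (H : IsHNNGenerated V E β) (g : Γ) :
    (∃ x, x * g * x⁻¹ ∈ V) ∨ ∃ x δ k, IsReduced V E β δ (x * g * x⁻¹) δ k ∧ 0 < k := by
  obtain ⟨h, hh, ε, g', ε', m, hg', rfl⟩ := H.exists_eq_mul g
  exact H.exists_conj_mem_or_isReduced_of_mul hh hg'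

end IsHNNGenerated

end ReducedWords

/-! ### Ping-pong over a valued field -/

section Coordinates

variable {R : Type*} [CommRing R]

/-- The underlying matrix. As a homomorphism it can be rewritten by `map_mul`, unlike the bare
subtype projection `SL(2, R) → Matrix (Fin 2) (Fin 2) R`. -/
def mat : SL(2, R) →* Matrix (Fin 2) (Fin 2) R :=
  Matrix.SpecialLinearGroup.coeMonoidHom

lemma mat_injective : Function.Injective (mat : SL(2, R) → Matrix (Fin 2) (Fin 2) R) :=
  Matrix.SpecialLinearGroup.coeMonoidHom_injective

lemma mat_inv (M : SL(2, R)) : mat M⁻¹ = !![mat M 1 1, -mat M 0 1; -mat M 1 0, mat M 0 0] := by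
  rw [← adjugate_fin_two]
  exact Matrix.SpecialLinearGroup.coe_inv M

lemma mat_det (M : SL(2, R)) : mat M 0 0 * mat M 1 1 - mat M 0 1 * mat M 1 0 = 1 := by
  rw [← det_fin_two]
  exact M.2

lemma trace_map_conj {Γ : Type*} [Group Γ] (ρ : Γ →* SL(2, R)) (x g : Γ) :
    (mat (ρ (x * g * x⁻¹))).trace = (mat (ρ g)).trace := by
  rw [map_mul, map_mul, trace_mul_comm, ← map_mul, ← map_mul, inv_mul_cancel_left]

/-- The coordinate expanded by `diag(τ, τ⁻¹) ^ (±1)`, when `τ` is large. -/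
def ix (ε : Bool) : Fin 2 := if ε then 0 else 1

lemma eq_ix_or (ε : Bool) (i : Fin 2) : i = ix ε ∨ i = ix (!ε) := by
  cases ε <;> fin_cases i <;> simp [ix]

lemma mul_apply_ix (ε : Bool) (M N : Matrix (Fin 2) (Fin 2) R) (i j : Fin 2) :
    (M * N) i j = M i (ix ε) * N (ix ε) j + M i (ix (!ε)) * N (ix (!ε)) j := by
  cases ε <;> simp [ix, mul_apply, add_comm]

lemma trace_eq_ix (ε : Bool) (M : Matrix (Fin 2) (Fin 2) R) :
    M.trace = M (ix ε) (ix ε) + M (ix (!ε)) (ix (!ε)) := by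
  cases ε <;> simp [ix, trace_fin_two, add_comm]

/-- The diagonal matrix `diag(τ, τ⁻¹)` in `SL(2, R)`, as a homomorphism in the unit `τ`. -/
def diagSL : Rˣ →* SL(2, R) where
  toFun τ := ⟨!![(τ : R), 0; 0, ((τ⁻¹ : Rˣ) : R)], by simp⟩
  map_one' := Subtype.ext <| by simp [one_fin_two]
  map_mul' x y := Subtype.ext <|
    show !![((x * y : Rˣ) : R), 0; 0, (((x * y)⁻¹ : Rˣ) : R)] =
      !![(x : R), 0; 0, ((x⁻¹ : Rˣ) : R)] * !![(y : R), 0; 0, ((y⁻¹ : Rˣ) : R)] by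
    simp [mul_comm]

lemma mat_diagSL (τ : Rˣ) : mat (diagSL τ) = !![(τ : R), 0; 0, ((τ⁻¹ : Rˣ) : R)] := rfl

lemma trace_diagSL (τ : Rˣ) : (mat (diagSL τ)).trace = τ + (τ⁻¹ : Rˣ) := by
  rw [mat_diagSL, trace_fin_two]
  rfl

lemma mat_letter_diagSL (τ : Rˣ) (ε : Bool) :
    mat (letter (diagSL τ) ε) = diagonal fun i => if i = ix ε then (τ : R) else (τ⁻¹ : Rˣ) := by
  cases ε <;> ext i j <;> fin_cases i <;> fin_cases j <;>
    simp [letter, ← map_inv, mat_diagSL, ix]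

lemma mat_letter_diagSL_mul_ix (τ : Rˣ) (ε : Bool) (M : SL(2, R)) (j : Fin 2) :
    mat (letter (diagSL τ) ε * M) (ix ε) j = τ * mat M (ix ε) j := by
  rw [map_mul, mat_letter_diagSL, diagonal_mul, if_pos rfl]

lemma mat_letter_diagSL_mul_ix_not (τ : Rˣ) (ε : Bool) (M : SL(2, R)) (j : Fin 2) :
    mat (letter (diagSL τ) ε * M) (ix (!ε)) j = (τ⁻¹ : Rˣ) * mat M (ix (!ε)) j := by
  rw [map_mul, mat_letter_diagSL, diagonal_mul, if_neg (by cases ε <;> simp [ix])]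

end Coordinates

section Bounded

variable {K Γ₀ : Type*} [Field K] [LinearOrderedCommGroupWithZero Γ₀] {v : Valuation K Γ₀}

/-- All entries of `M` have valuation at most `r`. -/
def Bounded (v : Valuation K Γ₀) (r : Γ₀) (M : SL(2, K)) : Prop :=
  ∀ i j, v (mat M i j) ≤ r

namespace Bounded

lemma of_one_le {r : Γ₀} (hr : 1 ≤ r) : Bounded v r 1 := by
  intro i j
  rw [map_one, one_apply]
  split_ifs <;> simp [hr]

lemma mul {r s : Γ₀} {M N : SL(2, K)} (hM : Bounded v r M) (hN : Bounded v s N) :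
    Bounded v (r * s) (M * N) := by
  intro i j
  rw [map_mul, mul_apply_ix true]
  refine v.map_add_le ?_ ?_ <;> rw [map_mul] <;> exact mul_le_mul' (hM _ _) (hN _ _)

lemma inv {r : Γ₀} {M : SL(2, K)} (hM : Bounded v r M) : Bounded v r M⁻¹ := by
  intro i j
  rw [mat_inv]
  fin_cases i <;> fin_cases j <;> simp [hM _ _]

lemma trace {r : Γ₀} {M : SL(2, K)} (hM : Bounded v r M) : v (mat M).trace ≤ r := by
  rw [trace_fin_two]
  exact v.map_add_le (hM _ _) (hM _ _)

lemma letter_diagSL {τ : Kˣ} (hτ : 1 < v τ) (ε : Bool) :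
    Bounded v (v τ) (letter (diagSL τ) ε) := by
  have hτ' : (v (τ : K))⁻¹ ≤ v τ := (inv_lt_one_of_one_lt₀ hτ).le.trans hτ.le
  intro i j
  rw [mat_letter_diagSL, diagonal_apply]
  split_ifs <;> simp [hτ']

lemma lt_of_letter_diagSL_mul {τ : Kˣ} (hτ : 1 < v τ) {r : Γ₀} (hr : 0 < r) {M : SL(2, K)}
    (hM : Bounded v r M) (ε : Bool) (j : Fin 2) :
    v (mat (letter (diagSL τ) ε * M) (ix (!ε)) j) < v τ * r := by
  rw [mat_letter_diagSL_mul_ix_not, Units.val_inv_eq_inv_val, map_mul, map_inv₀]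
  calc (v (τ : K))⁻¹ * v (mat M (ix (!ε)) j) ≤ 1 * r :=
        mul_le_mul' (inv_lt_one_of_one_lt₀ hτ).le (hM _ _)
    _ < v τ * r := by gcongr

end Bounded

/-- `M` attains its largest valuation `r` in the row `ix ε` of the column `ix ε'`, and in that
column nowhere else. -/
structure Dominated (v : Valuation K Γ₀) (ε ε' : Bool) (r : Γ₀) (M : SL(2, K)) : Prop where
  bounded : Bounded v r M
  apply_eq : v (mat M (ix ε) (ix ε')) = r
  apply_lt : v (mat M (ix (!ε)) (ix ε')) < r

namespace Dominated

lemma one (v : Valuation K Γ₀) (ε : Bool) : Dominated v ε ε 1 1 where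
  bounded := .of_one_le le_rfl
  apply_eq := by simp
  apply_lt := by cases ε <;> simp [ix]

lemma apply_mul_eq {ε ε' : Bool} {r : Γ₀} {M N : SL(2, K)} (hM : Dominated v ε ε' r M)
    {i : Fin 2} (hN : Bounded v 1 N) (hi : v (mat N i (ix ε)) = 1) :
    v (mat (N * M) i (ix ε')) = r := by
  have hlt : v (mat N i (ix (!ε)) * mat M (ix (!ε)) (ix ε')) <
      v (mat N i (ix ε) * mat M (ix ε) (ix ε')) := by
    rw [map_mul, map_mul, hi, hM.apply_eq, one_mul]
    exact (mul_le_of_le_one_left' (hN _ _)).trans_lt hM.apply_lt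
  rw [map_mul, mul_apply_ix ε, v.map_add_eq_of_lt_left hlt, map_mul, hi, hM.apply_eq, one_mul]

lemma letter_diagSL_mul {ε δ ε' : Bool} {r : Γ₀} {M N : SL(2, K)} {τ : Kˣ} (hτ : 1 < v τ)
    (hr : 0 < r) (hM : Dominated v δ ε' r M) (hN : Bounded v 1 N)
    (hu : v (mat N (ix ε) (ix δ)) = 1) :
    Dominated v ε ε' (v τ * r) (letter (diagSL τ) ε * (N * M)) where
  bounded := (Bounded.letter_diagSL hτ ε).mul (one_mul r ▸ hN.mul hM.bounded)
  apply_eq := by rw [mat_letter_diagSL_mul_ix, map_mul, hM.apply_mul_eq hN hu]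
  apply_lt := (one_mul r ▸ hN.mul hM.bounded : Bounded v r _).lt_of_letter_diagSL_mul hτ hr ε _

end Dominated

end Bounded

section PingPong

variable {Γ K Γ₀ : Type*} [Group Γ] [Field K] [LinearOrderedCommGroupWithZero Γ₀]

/-- A representation of an HNN-generated group over a valued field which plays ping-pong: up to the
integral changes of frame `P` and `P'` the stable letter is the expanding matrix `diag(τ, τ⁻¹)`,
and an integral vertex element breaks the expansion only if it lies in an edge group. -/
structure PingPong (v : Valuation K Γ₀) (ρ : Γ →* SL(2, K)) (V : Subgroup Γ)
    (E : Bool → Subgroup Γ) (β : Γ) (τ : Kˣ) (P P' : Bool → SL(2, K)) : Prop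
    extends IsHNNGenerated V E β where
  one_lt : 1 < v τ
  bounded_vertex : ∀ h ∈ V, Bounded v 1 (ρ h)
  bounded_left : ∀ ε, Bounded v 1 (P ε)
  bounded_right : ∀ ε, Bounded v 1 (P' ε)
  letter_eq : ∀ ε, P ε * ρ (letter β ε) = letter (diagSL τ) ε * P' ε
  unit : ∀ ε ε', ∀ h ∈ V, (ε' = !ε → h ∉ E ε') →
    v (mat (P' ε * ρ h * (P ε')⁻¹) (ix ε) (ix ε')) = 1

variable {v : Valuation K Γ₀} {ρ : Γ →* SL(2, K)} {V : Subgroup Γ} {E : Bool → Subgroup Γ} {β : Γ}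
  {τ : Kˣ} {P P' : Bool → SL(2, K)}

namespace PingPong

lemma pow_pos (H : PingPong v ρ V E β τ P P') (m : ℕ) : 0 < v τ ^ m :=
  _root_.pow_pos (zero_lt_one.trans H.one_lt) m

lemma frame_cons (H : PingPong v ρ V E β τ P P') (ε ε' ε'' : Bool) (h g : Γ) :
    P ε * ρ (letter β ε * h * g) * (P ε'')⁻¹ =
      letter (diagSL τ) ε * (P' ε * ρ h * (P ε')⁻¹ * (P ε' * ρ g * (P ε'')⁻¹)) := by
  simp only [map_mul, ← mul_assoc, ← H.letter_eq, inv_mul_cancel_right]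

lemma bounded_frame (H : PingPong v ρ V E β τ P P') (ε ε' : Bool) {h : Γ} (hh : h ∈ V) :
    Bounded v 1 (P' ε * ρ h * (P ε')⁻¹) := by
  simpa only [mul_one] using
    ((H.bounded_right ε).mul (H.bounded_vertex h hh)).mul (H.bounded_left ε').inv

lemma dominated (H : PingPong v ρ V E β τ P P') {ε ε' : Bool} {g : Γ} {m : ℕ}
    (hg : IsReduced V E β ε g ε' m) : Dominated v ε ε' (v τ ^ m) (P ε * ρ g * (P ε')⁻¹) := by
  induction hg with
  | nil ε => simpa using Dominated.one v ε
  | @cons ε ε' ε'' h g m hV hE _ ih =>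
    rw [H.frame_cons ε ε' ε'', pow_succ']
    exact ih.letter_diagSL_mul H.one_lt (H.pow_pos m) (H.bounded_frame ε ε' hV)
      (H.unit ε ε' h hV hE)

lemma frame_apply_lt (H : PingPong v ρ V E β τ P P') {ε ε' : Bool} {g : Γ} {m : ℕ}
    (hg : IsReduced V E β ε g ε' (m + 1)) (j : Fin 2) :
    v (mat (P ε * ρ g * (P ε')⁻¹) (ix (!ε)) j) < v τ ^ (m + 1) := by
  cases hg with
  | @cons _ ε₁ _ h g _ hV hE hg =>
    rw [H.frame_cons ε ε₁ ε', pow_succ']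
    refine Bounded.lt_of_letter_diagSL_mul H.one_lt (H.pow_pos m) ?_ ε j
    simpa only [one_mul] using (H.bounded_frame ε ε₁ hV).mul (H.dominated hg).bounded

lemma trace_eq (H : PingPong v ρ V E β τ P P') {ε : Bool} {g : Γ} {m : ℕ}
    (hg : IsReduced V E β ε g ε m) (hm : 0 < m) : v (mat (ρ g)).trace = v τ ^ m := by
  obtain ⟨m, rfl⟩ := Nat.exists_eq_succ_of_ne_zero hm.ne'
  have hdom := (H.dominated hg).apply_eq
  have htr : (mat (ρ g)).trace = (mat (P ε * ρ g * (P ε)⁻¹)).trace :=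
    (trace_map_conj (MonoidHom.id _) (P ε) (ρ g)).symm
  rw [htr, trace_eq_ix ε, v.map_add_eq_of_lt_left, hdom]
  exact (H.frame_apply_lt hg _).trans_eq hdom.symm

lemma pow_le (H : PingPong v ρ V E β τ P P') {ε ε' : Bool} {g : Γ} {m : ℕ} {r : Γ₀}
    (hg : IsReduced V E β ε g ε' m) (hr : Bounded v r (ρ g)) : v τ ^ m ≤ r := by
  rw [← (H.dominated hg).apply_eq]
  simpa only [one_mul, mul_one] using
    ((H.bounded_left ε).mul hr).mul (H.bounded_left ε').inv (ix ε) (ix ε')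

lemma bounded_letter (H : PingPong v ρ V E β τ P P') (ε : Bool) :
    Bounded v (v τ) (ρ (letter β ε)) := by
  rw [← inv_mul_cancel_left (P ε) (ρ (letter β ε)), H.letter_eq]
  simpa only [one_mul, mul_one] using
    (H.bounded_left ε).inv.mul ((Bounded.letter_diagSL H.one_lt ε).mul (H.bounded_right ε))

lemma exists_max_trace_eq (H : PingPong v ρ V E β τ P P') (g : Γ) :
    ∃ k : ℕ, max 1 (v (mat (ρ g)).trace) = v τ ^ k := by
  rcases H.exists_conj_mem_or_isReduced g with ⟨x, hx⟩ | ⟨x, δ, k, hr, hk⟩ <;>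
    rw [← trace_map_conj ρ x]
  · exact ⟨0, by rw [pow_zero, max_eq_left (H.bounded_vertex _ hx).trace]⟩
  · exact ⟨k, by rw [H.trace_eq hr hk, max_eq_right (one_le_pow₀ H.one_lt.le)]⟩

lemma exists_conj_mem (H : PingPong v ρ V E β τ P P') {g : Γ} (hg : v (mat (ρ g)).trace ≤ 1) :
    ∃ x, x * g * x⁻¹ ∈ V := by
  rcases H.exists_conj_mem_or_isReduced g with h | ⟨x, δ, k, hr, hk⟩
  · exact h
  · rw [← trace_map_conj ρ x, H.trace_eq hr hk] at hg
    exact absurd hg (one_lt_pow₀ H.one_lt hk.ne').not_ge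

lemma one_lt_trace_conj_mul (H : PingPong v ρ V E β τ P P') {c h h₀ k g : Γ} {ε δ : Bool} {m : ℕ}
    (hc : c ∈ V) (hcE : ∀ k ∈ V, ∀ ε, k⁻¹ * c * k ∉ E ε) (hh : h ∈ V) (hh₀ : h₀ ∈ V) (hk : k ∈ V)
    (hkE : k * h * k⁻¹ ∉ E (!δ)) (hg : IsReduced V E β ε g δ m) :
    1 < v (mat (ρ (h₀ * (g * (letter β δ * k)) * h *
      (h₀ * (g * (letter β δ * k)))⁻¹ * c))).trace := by
  have hmid : IsReduced V E β δ (letter β δ * (k * h * k⁻¹)) (!δ) 1 :=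
    .single (mul_mem (mul_mem hk hh) (inv_mem hk)) fun _ => hkE
  have hlast : IsReduced V E β (!ε) (letter β (!ε) * (h₀⁻¹ * c * h₀)) ε 1 :=
    .single (mul_mem (mul_mem (inv_mem hh₀) hc) hh₀) fun _ => hcE h₀ hh₀ _
  have hword := ((hg.mul hmid).mul hg.inv).mul hlast
  have hconj : h₀ * (g * (letter β δ * k)) * h * (h₀ * (g * (letter β δ * k)))⁻¹ * c =
      h₀ * (g * (letter β δ * (k * h * k⁻¹)) * (letter β (!δ) * g⁻¹ * letter β ε) *
        (letter β (!ε) * (h₀⁻¹ * c * h₀))) * h₀⁻¹ := by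
    simp only [letter_not]
    group
  rw [hconj, trace_map_conj, H.trace_eq hword (by omega)]
  exact one_lt_pow₀ H.one_lt (by omega)

lemma conj_mem_of_isReduced (H : PingPong v ρ V E β τ P P') {c : Γ} (hc : c ∈ V)
    (hcE : ∀ k ∈ V, ∀ ε, k⁻¹ * c * k ∉ E ε) {h₀ : Γ} (hh₀ : h₀ ∈ V) {m : ℕ} :
    ∀ {h}, h ∈ V → ∀ {ε g ε'}, IsReduced V E β ε g ε' m →
      v (mat (ρ (h₀ * g * h * (h₀ * g)⁻¹ * c))).trace ≤ 1 → h₀ * g * h * (h₀ * g)⁻¹ ∈ V := by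
  induction m with
  | zero =>
    intro h hh ε g ε' hg _
    cases hg
    simpa using mul_mem (mul_mem hh₀ hh) (inv_mem hh₀)
  | succ m ih =>
    intro h hh ε g ε' hg ht
    obtain ⟨δ, g', k, rfl, hg', hk, -⟩ := hg.exists_eq_mul_letter
    by_cases hkE : k * h * k⁻¹ ∈ E (!δ)
    · have hconj : letter β δ * (k * h * k⁻¹) * letter β (!δ) ∈ V := by
        simpa using H.conj_mem hkE
      have key : h₀ * (g' * (letter β δ * k)) * h * (h₀ * (g' * (letter β δ * k)))⁻¹ =
          h₀ * g' * (letter β δ * (k * h * k⁻¹) * letter β (!δ)) * (h₀ * g')⁻¹ := by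
        rw [letter_not]
        group
      rw [key] at ht ⊢
      exact ih hconj hg' ht
    · exact absurd ht (H.one_lt_trace_conj_mul hc hcE hh hh₀ hk hkE hg').not_ge

/-- In terms of the action on the tree of the splitting: if `X` and `X * c` are elliptic and `c`
fixes the base vertex but no edge there, then `X` fixes the base vertex too. -/
lemma mem_vertex (H : PingPong v ρ V E β τ P P') {c X : Γ} (hc : c ∈ V)
    (hcE : ∀ k ∈ V, ∀ ε, k⁻¹ * c * k ∉ E ε) (hX : v (mat (ρ X)).trace ≤ 1)
    (hXc : v (mat (ρ (X * c))).trace ≤ 1) : X ∈ V := by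
  obtain ⟨x, hx⟩ := H.exists_conj_mem hX
  obtain ⟨h, hh, ε, g, ε', m, hg, hxg⟩ := H.exists_eq_mul x⁻¹
  have key : X = h * g * (x * X * x⁻¹) * (h * g)⁻¹ := by
    rw [← hxg]
    group
  rw [key] at hXc ⊢
  exact H.conj_mem_of_isReduced hc hcE hh hx hg hXc

lemma mem_edge (H : PingPong v ρ V E β τ P P') {ε δ : Bool} {X g : Γ} {m : ℕ} (hX : X ∈ V)
    (hg : IsReduced V E β ε g δ (m + 1)) (hXg : g⁻¹ * X * g ∈ V) : X ∈ E ε := by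
  by_contra hE
  have hmid : IsReduced V E β (!ε) (letter β (!ε) * X) ε 1 :=
    .single hX fun _ => by simpa using hE
  have hword := (hg.inv.mul hmid).mul hg
  have key : letter β (!δ) * g⁻¹ * letter β ε * (letter β (!ε) * X) * g =
      letter β (!δ) * (g⁻¹ * X * g) := by
    simp only [letter_not]
    group
  have hbound : Bounded v (v τ) (ρ (letter β (!δ) * (g⁻¹ * X * g))) := by
    rw [map_mul]
    simpa only [mul_one] using (H.bounded_letter (!δ)).mul (H.bounded_vertex _ hXg)
  rw [key] at hword
  exact absurd (H.pow_le hword hbound) (lt_self_pow₀ H.one_lt (by omega)).not_ge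

end PingPong

end PingPong

section SignEq

variable {R : Type*} [CommRing R]

/-- Equality up to sign, that is, in the quotient of `SL(2, R)` by `{1, -1}`. -/
def SignEq (M N : SL(2, R)) : Prop := M = N ∨ M = -N

lemma mat_neg (M : SL(2, R)) : mat (-M) = -mat M := Matrix.SpecialLinearGroup.coe_neg M

namespace SignEq

lemma refl (M : SL(2, R)) : SignEq M M := Or.inl rfl

lemma symm {M N : SL(2, R)} (h : SignEq M N) : SignEq N M :=
  h.imp Eq.symm fun h => (neg_eq_iff_eq_neg.2 h).symm

lemma trans {M N L : SL(2, R)} (h : SignEq M N) (h' : SignEq N L) : SignEq M L := by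
  rcases h with rfl | rfl
  · exact h'
  · exact h'.elim (fun h => Or.inr (h ▸ rfl)) fun h => Or.inl (by rw [h, neg_neg])

lemma mul {M N M' N' : SL(2, R)} (h : SignEq M N) (h' : SignEq M' N') :
    SignEq (M * M') (N * N') := by
  rcases h with rfl | rfl <;> rcases h' with rfl | rfl <;> simp [SignEq]

lemma mat_apply_eq_zero {M N : SL(2, R)} (h : SignEq M N) {i j : Fin 2} :
    mat M i j = 0 ↔ mat N i j = 0 := by
  rcases h with rfl | rfl <;> simp [mat_neg]

lemma valuation_mat_apply {Γ₀ : Type*} [LinearOrderedCommGroupWithZero Γ₀] (v : Valuation R Γ₀)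
    {M N : SL(2, R)} (h : SignEq M N) (i j : Fin 2) : v (mat M i j) = v (mat N i j) := by
  rcases h with rfl | rfl <;> simp [mat_neg]

lemma trace {M N : SL(2, R)} (h : SignEq M N) :
    (mat M).trace = (mat N).trace ∨ (mat M).trace = -(mat N).trace := by
  rcases h with rfl | rfl
  · exact Or.inl rfl
  · exact Or.inr (by rw [mat_neg, trace_neg])

lemma valuation_trace {Γ₀ : Type*} [LinearOrderedCommGroupWithZero Γ₀] (v : Valuation R Γ₀)
    {M N : SL(2, R)} (h : SignEq M N) : v (mat M).trace = v (mat N).trace := by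
  rcases h.trace with h | h <;> simp [h]

end SignEq

end SignEq

section DiagPong

variable {Γ K Γ₀ : Type*} [Group Γ] [Field K] [LinearOrderedCommGroupWithZero Γ₀]

/-- A ping-pong situation without change of frame: the two edge groups are a single normal subgroup
acting by signs, the stable letter is diagonal, and the other vertex elements have all their entries
of valuation `1`. -/
structure DiagPong (v : Valuation K Γ₀) (ρ : Γ →* SL(2, K)) (V E : Subgroup Γ) (α : Γ)
    (s : Kˣ) : Prop where
  one_lt : 1 < v s
  normal : E.Normal
  le : E ≤ V
  closure_eq : Subgroup.closure (V ∪ {α} : Set Γ) = ⊤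
  sign : ∀ e ∈ E, SignEq (ρ e) 1
  diag : ∀ h ∈ V, ∀ i, v (mat (ρ h) i i) = 1
  entry : ∀ h ∈ V, h ∉ E → ∀ i j, v (mat (ρ h) i j) = 1
  letter_eq : ρ α = diagSL s

namespace DiagPong

variable {V E : Subgroup Γ} {α : Γ} {v : Valuation K Γ₀} {ρ : Γ →* SL(2, K)} {s : Kˣ}

lemma pingPong (H : DiagPong v ρ V E α s) :
    PingPong v ρ V (fun _ => E) α s (fun _ => 1) (fun _ => 1) where
  one_lt := H.one_lt
  edge_le _ := H.le
  edge_conj ε e he := by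
    simpa only [letter_not, inv_inv] using H.normal.conj_mem e he (letter α (!ε))
  closure_eq := H.closure_eq
  bounded_vertex h hh i j := by
    by_cases hE : h ∈ E
    · rw [(H.sign h hE).valuation_mat_apply]
      exact Bounded.of_one_le le_rfl i j
    · exact (H.entry h hh hE i j).le
  bounded_left _ := .of_one_le le_rfl
  bounded_right _ := .of_one_le le_rfl
  letter_eq ε := by rw [map_letter, H.letter_eq, one_mul, mul_one]
  unit ε ε' h hh hE := by
    rw [one_mul, inv_one, mul_one]
    by_cases hE' : h ∈ E
    · obtain rfl : ε' = ε := by simpa using mt hE (not_not_intro hE')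
      exact H.diag h hh _
    · exact H.entry h hh hE' _ _

lemma exists_zpow_mul_eq (H : DiagPong v ρ V E α s) {d : Γ} (hd : d ∈ Subgroup.zpowers α ⊔ E) :
    ∃ k : ℤ, ∃ e ∈ E, d = α ^ k * e := by
  have := H.normal
  obtain ⟨_, ⟨k, rfl⟩, e, he, rfl⟩ := Subgroup.mem_sup_of_normal_right.1 hd
  exact ⟨k, e, he, rfl⟩

lemma letter_mem_sup (α : Γ) (E : Subgroup Γ) (δ : Bool) :
    letter α δ ∈ Subgroup.zpowers α ⊔ E :=
  letter_mem (Subgroup.mem_sup_left (Subgroup.mem_zpowers α)) δ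

lemma exists_mat_eq_diagonal (H : DiagPong v ρ V E α s) {d : Γ}
    (hd : d ∈ Subgroup.zpowers α ⊔ E) :
    ∃ D : Fin 2 → K, (∀ i, D i ≠ 0) ∧ mat (ρ d) = diagonal D := by
  obtain ⟨k, e, he, rfl⟩ := H.exists_zpow_mul_eq hd
  have hα : mat (ρ (α ^ k)) = diagonal ![((s ^ k : Kˣ) : K), ((s ^ k : Kˣ) : K)⁻¹] := by
    rw [map_zpow, H.letter_eq, ← map_zpow, mat_diagSL, diagonal_fin_two]
    simp
  have hne : ∀ i, ![((s ^ k : Kˣ) : K), ((s ^ k : Kˣ) : K)⁻¹] i ≠ 0 :=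
    Fin.forall_fin_two.2 ⟨(s ^ k).ne_zero, inv_ne_zero (s ^ k).ne_zero⟩
  rw [map_mul, map_mul, hα]
  rcases H.sign e he with he | he
  · exact ⟨_, hne, by rw [he, map_one, mul_one]⟩
  · exact ⟨_, fun i => neg_ne_zero.2 (hne i), by
      rw [he, mat_neg, map_one, mul_neg_one, diagonal_neg]⟩

lemma commute_map (H : DiagPong v ρ V E α s) {d : Γ} (hd : d ∈ Subgroup.zpowers α ⊔ E)
    (δ : Bool) : Commute (ρ d) (ρ (letter α δ)) := by
  obtain ⟨D, -, hD⟩ := H.exists_mat_eq_diagonal hd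
  obtain ⟨D', -, hD'⟩ := H.exists_mat_eq_diagonal (letter_mem_sup α E δ)
  apply mat_injective
  rw [map_mul, map_mul, hD, hD', diagonal_mul_diagonal, diagonal_mul_diagonal]
  simp only [mul_comm]

lemma mat_mul_left_apply_eq_zero (H : DiagPong v ρ V E α s) {d : Γ}
    (hd : d ∈ Subgroup.zpowers α ⊔ E) (g : Γ) (i j : Fin 2) :
    mat (ρ (d * g)) i j = 0 ↔ mat (ρ g) i j = 0 := by
  obtain ⟨D, h0, hD⟩ := H.exists_mat_eq_diagonal hd
  rw [map_mul, map_mul, hD, diagonal_mul, mul_eq_zero, or_iff_right (h0 i)]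

lemma mat_mul_right_apply_eq_zero (H : DiagPong v ρ V E α s) {d : Γ}
    (hd : d ∈ Subgroup.zpowers α ⊔ E) (g : Γ) (i j : Fin 2) :
    mat (ρ (g * d)) i j = 0 ↔ mat (ρ g) i j = 0 := by
  obtain ⟨D, h0, hD⟩ := H.exists_mat_eq_diagonal hd
  rw [map_mul, map_mul, hD, mul_diagonal, mul_eq_zero, or_iff_left (h0 j)]

lemma mat_apply_ne_zero_of_entry (H : DiagPong v ρ V E α s) {h k g : Γ} {ε δ : Bool} {m : ℕ}
    (hh : h ∈ V) (hhE : h ∉ E) (hg : IsReduced V (fun _ => E) α ε g δ m) (hk : k ∈ V)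
    (hkE : k ∉ E) (i j : Fin 2) : mat (ρ (h * (g * (letter α δ * k)))) i j ≠ 0 := by
  obtain ⟨ε', rfl⟩ : ∃ ε', j = ix ε' :=
    (eq_ix_or true j).elim (fun h => ⟨_, h⟩) fun h => ⟨_, h⟩
  have hdom := H.pingPong.dominated (hg.mul (.single (ε' := ε') hk fun _ => hkE))
  rw [one_mul, inv_one, mul_one] at hdom
  have hval := hdom.apply_mul_eq (H.pingPong.bounded_vertex h hh) (H.entry h hh hhE i _)
  rw [← map_mul] at hval
  rw [← v.ne_zero_iff, hval]
  exact (H.pingPong.pow_pos _).ne'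

lemma mat_apply_ne_zero (H : DiagPong v ρ V E α s) {h k g : Γ} {ε δ : Bool} {m : ℕ}
    (hh : h ∈ V) (hg : IsReduced V (fun _ => E) α ε g δ m) (hk : k ∈ V) (hkE : k ∉ E)
    (i j : Fin 2) : mat (ρ (h * (g * (letter α δ * k)))) i j ≠ 0 := by
  induction hg generalizing h with
  | nil δ =>
    by_cases hE : h ∈ E
    · rw [one_mul, Ne, H.mat_mul_left_apply_eq_zero (Subgroup.mem_sup_right hE),
        H.mat_mul_left_apply_eq_zero (letter_mem_sup α E δ), ← v.zero_iff, H.entry k hk hkE]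
      exact one_ne_zero
    · exact H.mat_apply_ne_zero_of_entry hh hE (.nil δ) hk hkE i j
  | @cons ε ε' δ h₁ g m hV hE hg ih =>
    by_cases hE' : h ∈ E
    · rw [Ne, H.mat_mul_left_apply_eq_zero (Subgroup.mem_sup_right hE'), mul_assoc, mul_assoc,
        H.mat_mul_left_apply_eq_zero (letter_mem_sup α E ε)]
      exact ih hV
    · exact H.mat_apply_ne_zero_of_entry hh hE' (.cons hV hE hg) hk hkE i j

lemma exists_eq_mul_sup (H : DiagPong v ρ V E α s) (u : Γ) :
    ∃ h ∈ V, ∃ d ∈ Subgroup.zpowers α ⊔ E, u = h * d ∨ ∃ ε g δ m, ∃ k ∈ V, k ∉ E ∧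
      IsReduced V (fun _ => E) α ε g δ m ∧ u = h * (g * (letter α δ * k)) * d := by
  obtain ⟨h, hh, ε, g, ε', m, hg, rfl⟩ := H.pingPong.exists_eq_mul u
  refine ⟨h, hh, ?_⟩
  induction m generalizing g ε' with
  | zero =>
    cases hg
    exact ⟨1, one_mem _, Or.inl rfl⟩
  | succ m ih =>
    obtain ⟨δ, g', k, rfl, hg', hk, -⟩ := hg.exists_eq_mul_letter
    by_cases hkE : k ∈ E
    · obtain ⟨d, hd, hcore⟩ := ih _ _ hg'
      refine ⟨d * (letter α δ * k),
        mul_mem hd (mul_mem (letter_mem_sup α E δ) (Subgroup.mem_sup_right hkE)), ?_⟩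
      simpa only [← mul_assoc, mul_left_inj] using hcore
    · exact ⟨1, one_mem _, Or.inr ⟨ε, g', δ, m, k, hk, hkE, hg', (mul_one _).symm⟩⟩

lemma eq_of_apply_eq_zero (H : DiagPong v ρ V E α s) {i j : Fin 2} {w : Γ}
    (hw : mat (ρ w) i j = 0) : ∃ k : ℤ, ∃ e ∈ E, w = α ^ k * e := by
  obtain ⟨h, hh, d, hd, rfl | ⟨ε, g, δ, m, k, hk, hkE, hg, rfl⟩⟩ := H.exists_eq_mul_sup w <;>
    rw [H.mat_mul_right_apply_eq_zero hd] at hw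
  · have hhE : h ∈ E := by
      by_contra hhE
      simpa [hw] using H.entry h hh hhE i j
    exact H.exists_zpow_mul_eq (mul_mem (Subgroup.mem_sup_right hhE) hd)
  · exact absurd hw (H.mat_apply_ne_zero hh hg hk hkE i j)

lemma lt_trace_conj_letter_mul (H : DiagPong v ρ V E α s) {c h k g : Γ} {ε δ δ' : Bool} {m : ℕ}
    (hc : c ∈ V) (hcE : c ∉ E) (hh : h ∈ V) (hk : k ∈ V) (hkE : k ∉ E)
    (hg : IsReduced V (fun _ => E) α ε g δ m) :
    v s < v (mat (ρ (h * (g * (letter α δ * k)) * letter α δ' *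
      (h * (g * (letter α δ * k)))⁻¹ * c))).trace := by
  have hstem : IsReduced V (fun _ => E) α δ (letter α δ * k) δ' 1 := .single hk fun _ => hkE
  have hback : IsReduced V (fun _ => E) α δ' (letter α δ' * k⁻¹) (!δ) 1 :=
    .single (inv_mem hk) fun _ => mt inv_mem_iff.1 hkE
  have hlast : IsReduced V (fun _ => E) α (!ε) (letter α (!ε) * (h⁻¹ * c * h)) ε 1 := by
    refine .single (mul_mem (mul_mem (inv_mem hh) hc) hh) fun _ hE => hcE ?_
    simpa [mul_assoc] using H.normal.conj_mem _ hE h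
  have hword := (((hg.mul hstem).mul hback).mul hg.inv).mul hlast
  have hconj : h * (g * (letter α δ * k)) * letter α δ' * (h * (g * (letter α δ * k)))⁻¹ * c =
      h * (g * (letter α δ * k) * (letter α δ' * k⁻¹) * (letter α (!δ) * g⁻¹ * letter α ε) *
        (letter α (!ε) * (h⁻¹ * c * h))) * h⁻¹ := by
    simp only [letter_not]
    group
  rw [hconj, trace_map_conj, H.pingPong.trace_eq hword (by omega)]
  exact lt_self_pow₀ H.one_lt (by omega)

lemma eq_of_trace_letter (H : DiagPong v ρ V E α s) {δ : Bool} {c u : Γ} (hc : c ∈ V)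
    (hcE : c ∉ E) (ht : v (mat (ρ (u * letter α δ * u⁻¹ * c))).trace ≤ v s) :
    ∃ h ∈ V, ∃ k : ℤ, ∃ e ∈ E, u = h * α ^ k * e := by
  obtain ⟨h, hh, d, hd, rfl | ⟨ε, g, δ', m, k, hk, hkE, hg, rfl⟩⟩ := H.exists_eq_mul_sup u
  · obtain ⟨k, e, he, rfl⟩ := H.exists_zpow_mul_eq hd
    exact ⟨h, hh, k, e, he, (mul_assoc _ _ _).symm⟩
  · have hstrip (x : Γ) : ρ (x * d * letter α δ * (x * d)⁻¹ * c) =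
        ρ (x * letter α δ * x⁻¹ * c) := by
      simp only [map_mul, map_inv, _root_.mul_inv_rev, mul_assoc, (H.commute_map hd δ).left_comm,
        mul_inv_cancel_left]
    rw [hstrip] at ht
    exact absurd ht (H.lt_trace_conj_letter_mul hc hcE hh hk hkE hg).not_ge

end DiagPong

end DiagPong

section Scal

variable {K₀ K : Type*} [Field K₀] [Field K]

/-- Extension of scalars. -/
abbrev scal (f : K₀ →+* K) : SL(2, K₀) →* SL(2, K) :=
  Matrix.SpecialLinearGroup.map f

lemma mat_scal (f : K₀ →+* K) (M : SL(2, K₀)) (i j : Fin 2) :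
    mat (scal f M) i j = f (mat M i j) := rfl

lemma trace_scal (f : K₀ →+* K) (M : SL(2, K₀)) : (mat (scal f M)).trace = f (mat M).trace := by
  simp only [trace_fin_two, mat_scal, map_add]

lemma scal_injective (f : K₀ →+* K) : Function.Injective (scal f) := fun M N h =>
  mat_injective <| Matrix.ext fun i j => f.injective <| by rw [← mat_scal, h, mat_scal]

lemma scal_neg (f : K₀ →+* K) (M : SL(2, K₀)) : scal f (-M) = -scal f M :=
  mat_injective <| Matrix.ext fun i j => by
    rw [mat_scal, mat_neg, mat_neg, Matrix.neg_apply, Matrix.neg_apply, mat_scal, map_neg]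

lemma signEq_scal_iff (f : K₀ →+* K) {M N : SL(2, K₀)} :
    SignEq (scal f M) (scal f N) ↔ SignEq M N := by
  simp only [SignEq, ← scal_neg, (scal_injective f).eq_iff]

lemma scal_diagSL (f : K₀ →+* K) (s : K₀ˣ) :
    scal f (diagSL s) = diagSL (Units.map (f : K₀ →* K) s) :=
  mat_injective <| Matrix.ext fun i j => by
    rw [mat_scal, mat_diagSL, mat_diagSL]
    fin_cases i <;> fin_cases j <;> simp

lemma valuation_map_le_one {Γ₀ : Type*} [LinearOrderedCommGroupWithZero Γ₀] {v : Valuation K Γ₀}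
    {f : K₀ →+* K} (hf : ∀ x ≠ 0, v (f x) = 1) (x : K₀) : v (f x) ≤ 1 := by
  rcases eq_or_ne x 0 with rfl | h0
  · simp
  · exact (hf x h0).le

lemma offDiag_eq_zero_of_signEq {Γ₀ : Type*} [LinearOrderedCommGroupWithZero Γ₀]
    {v : Valuation K Γ₀} {y : Kˣ} (hy : v y ≠ 1) {M : SL(2, K)}
    (h : SignEq (diagSL y * M) (M * diagSL y)) : mat M 0 1 = 0 ∧ mat M 1 0 = 0 := by
  have hy0 : v (y : K) ≠ 0 := v.ne_zero_iff.2 y.ne_zero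
  have key {x : Γ₀} (hx : v y * x = x * (v y)⁻¹) : x = 0 := by
    by_contra hx0
    have hinv : v (y : K) = (v y)⁻¹ := mul_right_cancel₀ hx0 (hx.trans (mul_comm _ _))
    refine hy ((pow_eq_one_iff_of_nonneg zero_le two_ne_zero).1 ?_)
    rw [sq]
    nth_rw 2 [hinv]
    exact mul_inv_cancel₀ hy0
  have h01 := h.valuation_mat_apply v 0 1
  have h10 := h.symm.valuation_mat_apply v 1 0
  simp only [map_mul, mat_diagSL, mul_apply, Fin.sum_univ_two, of_apply, cons_val_zero,
    cons_val_one, zero_mul, mul_zero, add_zero, zero_add, Units.val_inv_eq_inv_val,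
    map_inv₀] at h01 h10
  exact ⟨v.zero_iff.1 (key h01), v.zero_iff.1 (key (by rwa [mul_comm, mul_comm _ (v y)⁻¹]))⟩

lemma exists_conj_diagSL_apply_eq_zero (s : Kˣ) {M : SL(2, K)} {i j : Fin 2}
    (h : mat M i j = 0) : ∃ i j, mat (M * diagSL s * M⁻¹) i j = 0 := by
  refine ⟨i, 1 - i, ?_⟩
  rw [map_mul, map_mul, mat_inv, mat_diagSL]
  fin_cases i <;> fin_cases j <;> simp at h <;> simp [mul_apply, h]

end Scal

/-! ### The splitting of a two-generator group over a commutator -/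

local notation "F₂" => FreeGroup (Fin 2)

section Exponents

lemma σ_mul (i : Fin 2) (x y : F₂) : σ i (x * y) = σ i x + σ i y := by simp [σ]

lemma σ_inv (i : Fin 2) (x : F₂) : σ i x⁻¹ = -σ i x := by simp [σ]

lemma σ_one (i : Fin 2) : σ i 1 = 0 := by simp [σ]

lemma σ_zpow (i : Fin 2) (x : F₂) (k : ℤ) : σ i (x ^ k) = k * σ i x := by simp [σ]

lemma σ_conj (i : Fin 2) (x y : F₂) : σ i (x * y * x⁻¹) = σ i y := by
  rw [σ_mul, σ_mul, σ_inv]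
  ring

/-- The first generator of the free group. -/
abbrev xa : F₂ := FreeGroup.of 0

/-- The second generator of the free group. -/
abbrev xb : F₂ := FreeGroup.of 1

/-- The commutator `[a, b]` of the generators, in the convention `[x, y] = x⁻¹ y⁻¹ x y`. -/
def xc : F₂ := xa⁻¹ * xb⁻¹ * xa * xb

lemma monoidHom_ext {Γ : Type*} [Group Γ] {f g : F₂ →* Γ} (ha : f xa = g xa)
    (hb : f xb = g xb) : f = g :=
  FreeGroup.ext_hom _ _ (Fin.forall_fin_two.2 ⟨ha, hb⟩)

lemma σ_xa (i : Fin 2) : σ i xa = if i = 0 then 1 else 0 := by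
  fin_cases i <;> simp [σ, expSum, xa]

lemma σ_xb (i : Fin 2) : σ i xb = if i = 1 then 1 else 0 := by
  fin_cases i <;> simp [σ, expSum, xb]

lemma σ_xc (i : Fin 2) : σ i xc = 0 := by
  simp only [xc, σ_mul, σ_inv]
  ring

/-- The generators of the two edge groups `⟨a⟩` and `⟨b⁻¹ab⟩ = ⟨a[a, b]⟩`, which the stable letter
`b` exchanges. -/
def edgeGen (ε : Bool) : F₂ := if ε then xa else xa * xc

lemma letter_mul_edgeGen_mul_letter (ε : Bool) :
    letter xb (!ε) * edgeGen ε * letter xb ε = edgeGen (!ε) := by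
  cases ε <;> simp [letter, edgeGen, xc, mul_assoc]

lemma σ_edgeGen (ε : Bool) (i : Fin 2) : σ i (edgeGen ε) = if i = 0 then 1 else 0 := by
  cases ε <;> simp [edgeGen, σ_mul, σ_xa, σ_xc]

/-- The embedding of the vertex group as the free group on `edgeGen ε` and `[a, b]`. -/
def incl (ε : Bool) : F₂ →* F₂ := FreeGroup.lift ![edgeGen ε, xc]

lemma incl_xa (ε : Bool) : incl ε xa = edgeGen ε := by simp [incl]

lemma incl_xb (ε : Bool) : incl ε xb = xc := by simp [incl]

lemma range_incl (ε : Bool) : (incl ε).range = Subgroup.closure {xa, xc} := by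
  have hrange : (incl ε).range = Subgroup.closure {edgeGen ε, xc} := by
    rw [incl, FreeGroup.range_lift_eq_closure, range_cons, range_cons, range_empty]
    simp [Set.pair_comm]
  rw [hrange]
  cases ε
  · have hc {x : F₂} : xc ∈ Subgroup.closure {x, xc} := Subgroup.subset_closure (by simp)
    have hx {x : F₂} : x ∈ Subgroup.closure {x, xc} := Subgroup.subset_closure (by simp)
    refine le_antisymm ?_ ?_ <;>
      simp only [Subgroup.closure_le, Set.insert_subset_iff, Set.singleton_subset_iff]
    · exact ⟨mul_mem hx hc, hc⟩
    · exact ⟨(mul_mem_cancel_right hc).1 hx, hc⟩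
  · rfl

end Exponents

section Splitting

variable {Q : Type*} [Group Q]

/-- The vertex group `⟨a, [a, b]⟩` of the splitting of `F₂ ⧸ π.ker` with stable letter `b`,
saturated by `π.ker`. -/
def vertex (π : F₂ →* Q) : Subgroup F₂ :=
  ((Subgroup.closure {xa, xc}).map π).comap π

/-- The edge groups `⟨a⟩` and `⟨a[a, b]⟩` of the splitting of `F₂ ⧸ π.ker` with stable letter `b`,
saturated by `π.ker`. -/
def edge (π : F₂ →* Q) (ε : Bool) : Subgroup F₂ :=
  (Subgroup.zpowers (π (edgeGen ε))).comap π

variable {π : F₂ →* Q} {h g : F₂} {ε : Bool}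

lemma σ_eq_of_map_eq (hπ : ∀ e ∈ π.ker, ∀ i, σ i e = 0) (hg : π h = π g) (i : Fin 2) :
    σ i h = σ i g := by
  have hσ := hπ _ ((MonoidHom.eq_iff π).1 hg) i
  rw [σ_mul, σ_inv] at hσ
  omega

lemma mem_vertex_iff (ε : Bool) : h ∈ vertex π ↔ ∃ w, π h = π (incl ε w) := by
  rw [vertex, ← range_incl ε, MonoidHom.map_range, Subgroup.mem_comap, MonoidHom.mem_range]
  simp only [MonoidHom.comp_apply, eq_comm]

lemma mem_edge_iff : h ∈ edge π ε ↔ ∃ k : ℤ, π h = π (edgeGen ε) ^ k := by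
  simp only [edge, Subgroup.mem_comap, Subgroup.mem_zpowers_iff, eq_comm]

lemma mem_vertex_congr (hg : π h = π g) : h ∈ vertex π ↔ g ∈ vertex π := by
  simp only [vertex, Subgroup.mem_comap, hg]

lemma mem_edge_congr (hg : π h = π g) : h ∈ edge π ε ↔ g ∈ edge π ε := by
  simp only [edge, Subgroup.mem_comap, hg]

lemma edgeGen_mem_edge (π : F₂ →* Q) (ε : Bool) : edgeGen ε ∈ edge π ε :=
  Subgroup.mem_zpowers _

lemma edge_le_vertex (π : F₂ →* Q) (ε : Bool) : edge π ε ≤ vertex π := by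
  intro h hh
  obtain ⟨k, hk⟩ := mem_edge_iff.1 hh
  exact (mem_vertex_iff ε).2 ⟨xa ^ k, by rw [hk, map_zpow, map_zpow, incl_xa]⟩

lemma edgeGen_mem_vertex (π : F₂ →* Q) (ε : Bool) : edgeGen ε ∈ vertex π :=
  edge_le_vertex π ε (edgeGen_mem_edge π ε)

lemma xa_mem_vertex (π : F₂ →* Q) : xa ∈ vertex π := edgeGen_mem_vertex π true

lemma xc_mem_vertex (π : F₂ →* Q) : xc ∈ vertex π :=
  (mem_vertex_iff true).2 ⟨xb, by rw [incl_xb]⟩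

lemma isHNNGenerated (π : F₂ →* Q) : IsHNNGenerated (vertex π) (edge π) xb where
  edge_le := edge_le_vertex π
  edge_conj ε e he := by
    obtain ⟨k, hk⟩ := mem_edge_iff.1 he
    refine mem_edge_iff.2 ⟨k, ?_⟩
    rw [← letter_mul_edgeGen_mul_letter, ← Bool.not_not ε, letter_not xb (!ε)]
    simp only [Bool.not_not, map_mul, map_inv, hk, conj_zpow]
  closure_eq := by
    rw [eq_top_iff, ← FreeGroup.closure_range_of, Subgroup.closure_le, Set.range_subset_iff,
      Fin.forall_fin_two]
    exact ⟨Subgroup.subset_closure (Or.inl (xa_mem_vertex π)),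
      Subgroup.subset_closure (Or.inr rfl)⟩

end Splitting

section TorusRep

variable {K₀ K : Type*} [Field K₀] [Field K]

/-- The matrix `[diag(s, s⁻¹), B]`, the commutator being `[x, y] = x⁻¹ y⁻¹ x y`. -/
def axisComm (s : K₀ˣ) (B : SL(2, K₀)) : SL(2, K₀) := (diagSL s)⁻¹ * B⁻¹ * diagSL s * B

/-- The representation `a ↦ diag(s, s⁻¹)`, `b ↦ diag(t, t⁻¹) B`. The first factor of the image of
`b` commutes with that of `a`, so `[a, b]` is sent to `axisComm s B`, which does not involve `t`. -/
def torusRep (f : K₀ →+* K) (s : K₀ˣ) (t : Kˣ) (B : SL(2, K₀)) : F₂ →* SL(2, K) :=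
  FreeGroup.lift ![scal f (diagSL s), diagSL t * scal f B]

/-- The frame in which `torusRep` diagonalizes the edge generator `edgeGen ε`. -/
def frame (B : SL(2, K₀)) (ε : Bool) : SL(2, K₀) := if ε then 1 else B

/-- The restriction of `torusRep` to the vertex group, in the frame of `edgeGen ε`. -/
def vertexRep (s : K₀ˣ) (B : SL(2, K₀)) (ε : Bool) : F₂ →* SL(2, K₀) :=
  FreeGroup.lift ![diagSL s, frame B ε * axisComm s B * (frame B ε)⁻¹]

variable (f : K₀ →+* K) (s : K₀ˣ) (t : Kˣ) (B : SL(2, K₀))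

lemma torusRep_xa : torusRep f s t B xa = scal f (diagSL s) := by simp [torusRep]

lemma torusRep_xb : torusRep f s t B xb = diagSL t * scal f B := by simp [torusRep]

lemma vertexRep_xa (ε : Bool) : vertexRep s B ε xa = diagSL s := by simp [vertexRep]

lemma vertexRep_xb (ε : Bool) :
    vertexRep s B ε xb = frame B ε * axisComm s B * (frame B ε)⁻¹ := by simp [vertexRep]

lemma torusRep_xc : torusRep f s t B xc = scal f (axisComm s B) := by
  have hcomm : Commute (diagSL t) (scal f (diagSL s)) := by
    rw [scal_diagSL]
    exact (Commute.all t _).map diagSL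
  simp only [xc, axisComm, map_mul, map_inv, torusRep_xa, torusRep_xb, _root_.mul_inv_rev,
    mul_assoc, hcomm.inv_left.left_comm, inv_mul_cancel_left]

lemma frame_conj_torusRep_edgeGen (ε : Bool) :
    scal f (frame B ε) * torusRep f s t B (edgeGen ε) * (scal f (frame B ε))⁻¹ =
      scal f (diagSL s) := by
  cases ε <;>
    simp [edgeGen, frame, torusRep_xa, torusRep_xc, axisComm, mul_assoc]

lemma frame_conj_torusRep_incl (ε : Bool) (w : F₂) :
    scal f (frame B ε) * torusRep f s t B (incl ε w) * (scal f (frame B ε))⁻¹ =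
      scal f (vertexRep s B ε w) := by
  suffices h : (MulAut.conj (scal f (frame B ε))).toMonoidHom.comp
      ((torusRep f s t B).comp (incl ε)) = (scal f).comp (vertexRep s B ε) from
    DFunLike.congr_fun h w
  refine monoidHom_ext ?_ ?_
  · exact (congrArg (fun x => _ * torusRep f s t B x * _) (incl_xa ε)).trans <|
      (frame_conj_torusRep_edgeGen f s t B ε).trans (by simp [vertexRep_xa])
  · simp [incl_xb, torusRep_xc, vertexRep_xb]

end TorusRep

section TorusRepData

variable {Q K₀ K Γ₀ Γ₁ : Type*} [Group Q] [Field K₀] [Field K]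
  [LinearOrderedCommGroupWithZero Γ₀] [LinearOrderedCommGroupWithZero Γ₁]

/-- Parameters for which `torusRep` descends, up to sign, to the image of `π`, and plays ping-pong
at two levels: on the vertex group through the valuation `v₀` of the subfield `K₀`, and on the
splitting with stable letter `b` through the valuation `v`, which is trivial on `K₀`. -/
structure TorusRep (π : F₂ →* Q) (v₀ : Valuation K₀ Γ₀) (v : Valuation K Γ₁) where
  f : K₀ →+* K
  s : K₀ˣ
  t : Kˣ
  B : SL(2, K₀)
  pong : ∀ ε, DiagPong v₀ (vertexRep s B ε) (Subgroup.zpowers xb ⊔ (π.comp (incl ε)).ker)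
    (π.comp (incl ε)).ker xa s
  sign : ∀ e ∈ π.ker, SignEq (torusRep f s t B e) 1
  val_map : ∀ x ≠ 0, v (f x) = 1
  one_lt : 1 < v t
  surj : Function.Surjective π
  exp : ∀ e ∈ π.ker, ∀ i, σ i e = 0
  ne_one : π xc ≠ 1
  trace_eq : ∀ j : ℤ, (mat (diagSL s * axisComm s B ^ j)).trace = (mat (diagSL s)).trace ∨
    (mat (diagSL s * axisComm s B ^ j)).trace = -(mat (diagSL s)).trace →
      π xc ^ j = 1 ∨ π xc ^ j = π xc

namespace TorusRep

variable {π : F₂ →* Q} {v₀ : Valuation K₀ Γ₀} {v : Valuation K Γ₁} (H : TorusRep π v₀ v)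
  {h x y : F₂} {ε ε' : Bool}

/-- The representation itself. -/
abbrev ρ : F₂ →* SL(2, K) := torusRep H.f H.s H.t H.B

/-- The matrix of `h` in the frame of `edgeGen ε'` on the source and of `edgeGen ε` on the
target. -/
def framed (ε ε' : Bool) (h : F₂) : SL(2, K) :=
  scal H.f (frame H.B ε) * H.ρ h * (scal H.f (frame H.B ε'))⁻¹

lemma framed_mul (ε ε' ε'' : Bool) (g h : F₂) :
    H.framed ε ε'' (g * h) = H.framed ε ε' g * H.framed ε' ε'' h := by
  simp only [framed, map_mul, mul_assoc, inv_mul_cancel_left]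

lemma framed_inv (ε ε' : Bool) (h : F₂) : H.framed ε ε' h⁻¹ = (H.framed ε' ε h)⁻¹ := by
  simp only [framed, map_inv, _root_.mul_inv_rev, inv_inv, mul_assoc]

lemma framed_true (h : F₂) : H.framed true true h = H.ρ h := by simp [framed, frame]

lemma framed_edgeGen_zpow (ε : Bool) (k : ℤ) :
    H.framed ε ε (edgeGen ε ^ k) = scal H.f (diagSL (H.s ^ k)) := by
  rw [framed, map_zpow, ← conj_zpow, frame_conj_torusRep_edgeGen, map_zpow, map_zpow]

lemma framed_incl (ε : Bool) (w : F₂) :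
    H.framed ε ε (incl ε w) = scal H.f (vertexRep H.s H.B ε w) :=
  frame_conj_torusRep_incl _ _ _ _ _ _

lemma σ_congr (H : TorusRep π v₀ v) (h : π x = π y) (i : Fin 2) : σ i x = σ i y :=
  σ_eq_of_map_eq H.exp h i

lemma signEq_framed (h : π x = π y) (ε ε' : Bool) :
    SignEq (H.framed ε ε' x) (H.framed ε ε' y) := by
  have hρ : SignEq (H.ρ x) (H.ρ y) := by
    simpa only [map_mul, map_inv, mul_inv_cancel_left, mul_one] using
      (SignEq.refl (H.ρ y)).mul (H.sign _ ((MonoidHom.eq_iff π).1 h))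
  exact ((SignEq.refl _).mul hρ).mul (.refl _)

lemma signEq_of_eq (h : π x = π y) : SignEq (H.ρ x) (H.ρ y) := by
  simpa only [framed_true] using H.signEq_framed h true true

lemma signEq_vertexRep {w : F₂} (hw : π h = π (incl ε w)) :
    SignEq (H.framed ε ε h) (scal H.f (vertexRep H.s H.B ε w)) :=
  H.framed_incl ε w ▸ H.signEq_framed hw ε ε

lemma exists_signEq_scal (ε ε' : Bool) (hh : h ∈ vertex π) :
    ∃ M, SignEq (H.framed ε ε' h) (scal H.f M) := by
  obtain ⟨w, hπw⟩ := (mem_vertex_iff true).1 hh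
  have hw := H.signEq_vertexRep hπw
  rw [framed_true] at hw
  refine ⟨frame H.B ε * vertexRep H.s H.B true w * (frame H.B ε')⁻¹, ?_⟩
  simpa only [framed, map_mul, map_inv] using ((SignEq.refl _).mul hw).mul (.refl _)

lemma bounded_scal (M : SL(2, K₀)) : Bounded v 1 (scal H.f M) := by
  intro i j
  rw [mat_scal]
  exact valuation_map_le_one H.val_map _

lemma bounded_framed (hh : h ∈ vertex π) (ε ε' : Bool) : Bounded v 1 (H.framed ε ε' h) := by
  obtain ⟨M, hM⟩ := H.exists_signEq_scal ε ε' hh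
  intro i j
  rw [hM.valuation_mat_apply]
  exact H.bounded_scal M i j

lemma valuation_framed (hh : h ∈ vertex π) {i j : Fin 2} (h0 : mat (H.framed ε ε' h) i j ≠ 0) :
    v (mat (H.framed ε ε' h) i j) = 1 := by
  obtain ⟨M, hM⟩ := H.exists_signEq_scal ε ε' hh
  rw [hM.valuation_mat_apply, mat_scal]
  rw [Ne, hM.mat_apply_eq_zero, mat_scal, map_eq_zero] at h0
  exact H.val_map _ h0

lemma mem_edge_of_apply_eq_zero (hh : h ∈ vertex π) {i j : Fin 2}
    (h0 : mat (H.framed ε ε h) i j = 0) : h ∈ edge π ε := by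
  obtain ⟨w, hw⟩ := (mem_vertex_iff ε).1 hh
  have hs := H.signEq_vertexRep hw
  rw [hs.mat_apply_eq_zero, mat_scal, map_eq_zero] at h0
  obtain ⟨k, e, he, rfl⟩ := (H.pong ε).eq_of_apply_eq_zero h0
  refine mem_edge_iff.2 ⟨k, ?_⟩
  have he : π (incl ε e) = 1 := he
  rw [hw, map_mul, map_mul, he, mul_one, map_zpow, map_zpow, incl_xa]

lemma map_eq_zpow_σ (H : TorusRep π v₀ v) (hh : h ∈ edge π ε) :
    π h = π (edgeGen ε) ^ σ 0 h := by
  obtain ⟨k, hk⟩ := mem_edge_iff.1 hh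
  have hσ := H.σ_congr (hk.trans (map_zpow π _ k).symm) 0
  rw [σ_zpow, σ_edgeGen, if_pos rfl, mul_one] at hσ
  rw [hk, hσ]

lemma one_lt_valuation_s (H : TorusRep π v₀ v) : 1 < v₀ (H.s : K₀) := (H.pong true).one_lt

lemma valuation_s_zpow_ne_one (H : TorusRep π v₀ v) {k : ℤ} (hk : k ≠ 0) :
    v₀ ((H.s ^ k : K₀ˣ) : K₀) ≠ 1 := by
  rw [Units.val_zpow_eq_zpow_val, map_zpow₀]
  rcases lt_or_gt_of_ne hk with hk | hk
  · exact (zpow_lt_one_of_neg₀ H.one_lt_valuation_s hk).ne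
  · exact (one_lt_zpow₀ H.one_lt_valuation_s hk).ne'

lemma offDiag_eq_zero (hh : h ∈ vertex π) {k : ℤ} (hk : k ≠ 0)
    (hc : π (edgeGen ε ^ k * h) = π (h * edgeGen ε' ^ k)) :
    mat (H.framed ε ε' h) 0 1 = 0 ∧ mat (H.framed ε ε' h) 1 0 = 0 := by
  obtain ⟨M, hM⟩ := H.exists_signEq_scal ε ε' hh
  have hcomm := H.signEq_framed hc ε ε'
  rw [H.framed_mul ε ε, H.framed_mul ε ε', framed_edgeGen_zpow, framed_edgeGen_zpow] at hcomm
  replace hcomm := (((SignEq.refl _).mul hM).symm.trans hcomm).trans (hM.mul (.refl _))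
  rw [← map_mul, ← map_mul, signEq_scal_iff] at hcomm
  simpa only [hM.mat_apply_eq_zero, mat_scal, map_eq_zero] using
    offDiag_eq_zero_of_signEq (H.valuation_s_zpow_ne_one hk) hcomm

lemma conj_edgeGen_of_apply_eq_zero (H : TorusRep π v₀ v) (hh : h ∈ vertex π) {i j : Fin 2}
    (h0 : mat (H.framed ε ε' h) i j = 0) : π (h * edgeGen ε' * h⁻¹) = π (edgeGen ε) := by
  have hconj : H.framed ε ε (h * edgeGen ε' * h⁻¹) =
      H.framed ε ε' h * diagSL (Units.map (H.f : K₀ →* K) H.s) * (H.framed ε ε' h)⁻¹ := by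
    rw [H.framed_mul ε ε', H.framed_mul ε ε', framed_inv, ← zpow_one (edgeGen ε'),
      framed_edgeGen_zpow, zpow_one, scal_diagSL]
  obtain ⟨i, j, hij⟩ := exists_conj_diagSL_apply_eq_zero (Units.map (H.f : K₀ →* K) H.s) h0
  have hmem : h * edgeGen ε' * h⁻¹ ∈ edge π ε :=
    H.mem_edge_of_apply_eq_zero (mul_mem (mul_mem hh (edgeGen_mem_vertex π ε')) (inv_mem hh))
      (hconj ▸ hij)
  rw [H.map_eq_zpow_σ hmem, σ_conj, σ_edgeGen, if_pos rfl, zpow_one]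

lemma diag_ne_zero (hh : h ∈ vertex π) (i : Fin 2) : mat (H.framed ε ε' h) i i ≠ 0 := by
  intro h0
  have hconj := H.conj_edgeGen_of_apply_eq_zero hh h0
  have hoff := (H.offDiag_eq_zero (ε := ε) (ε' := ε') hh one_ne_zero (by
    rw [zpow_one, zpow_one, map_mul, ← hconj]
    simp only [map_mul, map_inv, inv_mul_cancel_right])).1
  have hdet := mat_det (H.framed ε ε' h)
  fin_cases i <;> simp_all

lemma pingPong : PingPong v H.ρ (vertex π) (edge π) xb H.t (fun ε => scal H.f (frame H.B ε))
    fun ε => scal H.f (frame H.B !ε) where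
  toIsHNNGenerated := isHNNGenerated π
  one_lt := H.one_lt
  bounded_vertex h hh := H.framed_true h ▸ H.bounded_framed hh true true
  bounded_left ε := H.bounded_scal _
  bounded_right ε := H.bounded_scal _
  letter_eq ε := by cases ε <;> simp [letter, frame, torusRep_xb]
  unit ε ε' h hh hE := by
    refine H.valuation_framed hh fun h0 => ?_
    rcases Bool.eq_or_eq_not ε' ε with rfl | rfl
    · exact H.diag_ne_zero hh _ h0
    · exact hE rfl (H.mem_edge_of_apply_eq_zero hh h0)

end TorusRep

end TorusRepData

section Vertex

variable {Q K₀ K Γ₀ Γ₁ : Type*} [Group Q] [Field K₀] [Field K]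
  [LinearOrderedCommGroupWithZero Γ₀] [LinearOrderedCommGroupWithZero Γ₁]
  {π : F₂ →* Q} {v₀ : Valuation K₀ Γ₀} {v : Valuation K Γ₁} {g h w w' : F₂} {ε ε' : Bool}

namespace TorusRep

lemma valuation_trace_vertexRep (H : TorusRep π v₀ v) (hw : π h = π (incl true w)) {x : K₀}
    (hx : (mat (H.ρ h)).trace = H.f x ∨ (mat (H.ρ h)).trace = -H.f x) :
    v₀ (mat (vertexRep H.s H.B true w)).trace = v₀ x := by
  have hs := (H.signEq_vertexRep hw).trace
  rw [framed_true, trace_scal] at hs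
  have hpm : (mat (vertexRep H.s H.B true w)).trace = x ∨
      (mat (vertexRep H.s H.B true w)).trace = -x := by
    rw [← H.f.injective.eq_iff, ← H.f.injective.eq_iff, map_neg]
    rcases hs with hs | hs <;> rcases hx with hx | hx <;> simp_all
  rcases hpm with h | h <;> rw [h]
  exact v₀.map_neg x

lemma exists_map_eq_zpow_xc (H : TorusRep π v₀ v)
    (hw : w ∈ Subgroup.zpowers xb ⊔ (π.comp (incl ε)).ker) : ∃ k : ℤ, π (incl ε w) = π xc ^ k := by
  have := (H.pong ε).normal
  obtain ⟨_, ⟨k, rfl⟩, e, he, rfl⟩ := Subgroup.mem_sup_of_normal_right.1 hw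
  have he : π (incl ε e) = 1 := he
  exact ⟨k, by rw [map_mul, map_mul, he, mul_one, map_zpow, map_zpow, incl_xb]⟩

lemma xb_zpow_notMem_ker {j : ℤ} (hj : π xc ^ j ≠ 1) : xb ^ j ∉ (π.comp (incl ε)).ker := by
  rwa [MonoidHom.mem_ker, MonoidHom.comp_apply, map_zpow, map_zpow, incl_xb]

lemma exists_eq_conj_zpow_of_trace_le_one (H : TorusRep π v₀ v) (hh : h ∈ vertex π) {x : K₀}
    (hx : (mat (H.ρ h)).trace = H.f x) (hv : v₀ x ≤ 1) :
    ∃ g ∈ vertex π, ∃ k : ℤ, π h = π (g * xc ^ k * g⁻¹) := by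
  obtain ⟨w, hw⟩ := (mem_vertex_iff true).1 hh
  rw [← H.valuation_trace_vertexRep hw (Or.inl hx)] at hv
  obtain ⟨y, hy⟩ := (H.pong true).pingPong.exists_conj_mem hv
  obtain ⟨k, hk⟩ := H.exists_map_eq_zpow_xc hy
  refine ⟨incl true y⁻¹, (mem_vertex_iff true).2 ⟨y⁻¹, rfl⟩, k, ?_⟩
  simp only [map_mul, map_inv] at hk
  rw [hw]
  simp only [map_mul, map_inv, map_zpow, ← hk]
  group

lemma exists_eq_of_trace_eq (H : TorusRep π v₀ v) (hg : g ∈ vertex π) {j : ℤ}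
    (hj : π xc ^ j ≠ 1) (δ : Bool)
    (ht : (mat (H.ρ (g * letter xa δ * g⁻¹ * xc ^ j))).trace = (mat (H.ρ xa)).trace ∨
      (mat (H.ρ (g * letter xa δ * g⁻¹ * xc ^ j))).trace = -(mat (H.ρ xa)).trace) :
    ∃ p q : ℤ, π g = π (xc ^ p * xa ^ q) := by
  obtain ⟨w, hw⟩ := (mem_vertex_iff true).1 hg
  have hword : π (g * letter xa δ * g⁻¹ * xc ^ j) =
      π (incl true (w * letter xa δ * w⁻¹ * xb ^ j)) := by
    simp only [map_mul, map_inv, map_letter, map_zpow, incl_xa, incl_xb, hw, edgeGen, if_true]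
  rw [torusRep_xa, trace_scal] at ht
  have hle : v₀ (mat (vertexRep H.s H.B true (w * letter xa δ * w⁻¹ * xb ^ j))).trace ≤
      v₀ (H.s : K₀) := by
    rw [H.valuation_trace_vertexRep hword ht]
    exact (Bounded.letter_diagSL H.one_lt_valuation_s true).trace
  obtain ⟨h, hh, q, e, he, rfl⟩ := (H.pong true).eq_of_trace_letter
    (Subgroup.mem_sup_left (Subgroup.zpow_mem_zpowers _ j)) (xb_zpow_notMem_ker hj) hle
  obtain ⟨p, hp⟩ := H.exists_map_eq_zpow_xc hh
  have he : π (incl true e) = 1 := he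
  refine ⟨p, q, ?_⟩
  simp only [hw, map_mul, map_zpow, he, hp, mul_one, incl_xa, edgeGen, if_true]

lemma framed_apply_eq_zero (H : TorusRep π v₀ v) (hh : h ∈ vertex π) {k : ℤ} (hk : k ≠ 0)
    (hc : h⁻¹ * edgeGen ε ^ k * h ∈ edge π ε') : mat (H.framed ε ε' h) 0 1 = 0 := by
  refine (H.offDiag_eq_zero hh hk ?_).1
  have hpow := H.map_eq_zpow_σ hc
  have hσ : σ 0 (h⁻¹ * edgeGen ε ^ k * h) = k := by
    simp [σ_mul, σ_inv, σ_zpow, σ_edgeGen]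
  rw [hσ] at hpow
  rw [map_mul, map_mul, map_zpow, map_zpow, ← hpow]
  simp only [map_mul, map_inv, map_zpow, mul_assoc, mul_inv_cancel_left]

lemma conj_xc_zpow_ne (H : TorusRep π v₀ v) (p : ℤ) :
    π (xa⁻¹ * xc ^ p * xa) ≠ π (xc ^ (p + 1)) := by
  intro h
  by_cases hp : π xc ^ p = 1
  · apply H.ne_one
    rw [map_mul, map_mul, map_zpow, hp, map_zpow, _root_.zpow_add_one, hp] at h
    simpa using h.symm
  have hs : SignEq (vertexRep H.s H.B true (xa⁻¹ * xb ^ p * xa))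
      (vertexRep H.s H.B true (xb ^ (p + 1))) := by
    rw [← signEq_scal_iff H.f, ← H.framed_incl, ← H.framed_incl]
    exact H.signEq_framed (by simpa only [map_mul, map_inv, map_zpow, incl_xa, incl_xb, edgeGen,
      if_true] using h) true true
  have hentry : mat (vertexRep H.s H.B true (xa⁻¹ * xb ^ p * xa)) 1 0 =
      H.s * mat (vertexRep H.s H.B true (xb ^ p)) 1 0 * H.s := by
    simp only [map_mul, map_inv, vertexRep_xa, mul_apply_ix true]
    simp [ix, mat_inv, mat_diagSL]
  have hone := (H.pong true).entry (xb ^ p) (Subgroup.mem_sup_left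
    (Subgroup.zpow_mem_zpowers _ p)) (xb_zpow_notMem_ker hp) 1 0
  have hle := (H.pong true).pingPong.bounded_vertex (xb ^ (p + 1))
    (Subgroup.mem_sup_left (Subgroup.zpow_mem_zpowers _ _)) 1 0
  rw [← hs.valuation_mat_apply, hentry, map_mul, map_mul, hone, mul_one] at hle
  exact (one_lt_mul'' H.one_lt_valuation_s H.one_lt_valuation_s).not_ge hle

lemma conj_xa_ne (H : TorusRep π v₀ v) (hg : g ∈ vertex π) : π (g * xa * g⁻¹) ≠ π (xa * xc) := by
  intro hconj
  have ht : π (g * letter xa true * g⁻¹ * xc ^ (-1 : ℤ)) = π xa := by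
    rw [map_mul, letter, if_pos rfl, hconj, map_mul, map_zpow]
    group
  obtain ⟨p, q, hpq⟩ := H.exists_eq_of_trace_eq hg (by simpa using H.ne_one) true
    (H.signEq_of_eq ht).trace
  apply H.conj_xc_zpow_ne p
  have hcomm : π xc ^ p * π xa * (π xc ^ p)⁻¹ = π xa * π xc := by
    rw [← map_mul π xa, ← hconj, map_mul, map_mul, map_inv, hpq, map_mul, map_zpow, map_zpow]
    group
  rw [mul_inv_eq_iff_eq_mul] at hcomm
  rw [map_mul, map_mul, map_zpow, map_zpow, mul_assoc, hcomm, map_inv]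
  group

lemma not_conj_edgeGen (H : TorusRep π v₀ v) (hh : h ∈ vertex π) {k : ℤ} (hk : k ≠ 0)
    (hc : h⁻¹ * edgeGen ε ^ k * h ∈ edge π !ε) : False := by
  have hconj := H.conj_edgeGen_of_apply_eq_zero hh (H.framed_apply_eq_zero hh hk hc)
  cases ε
  · exact H.conj_xa_ne hh hconj
  · refine H.conj_xa_ne (inv_mem hh) ?_
    have hconj : π (h * (xa * xc) * h⁻¹) = π xa := hconj
    rw [map_mul, map_mul _ h⁻¹, ← hconj]
    simp [mul_assoc]

lemma eq_and_mem_edge_of_conj_zpow (H : TorusRep π v₀ v) (hh : h ∈ vertex π) {k : ℤ}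
    (hk : k ≠ 0) (hc : h⁻¹ * edgeGen ε ^ k * h ∈ edge π ε') : ε' = ε ∧ h ∈ edge π ε := by
  rcases Bool.eq_or_eq_not ε' ε with rfl | rfl
  · exact ⟨rfl, H.mem_edge_of_apply_eq_zero hh (H.framed_apply_eq_zero hh hk hc)⟩
  · exact (H.not_conj_edgeGen hh hk hc).elim

end TorusRep

end Vertex

/-! ### Tame automorphisms -/

section Comm

variable {Γ : Type*} [Group Γ]

/-- The commutator with inverses on the left, as opposed to Mathlib's `⁅x, y⁆`. -/
def comm (x y : Γ) : Γ := x⁻¹ * y⁻¹ * x * y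

lemma map_comm {Γ' : Type*} [Group Γ'] (f : Γ →* Γ') (x y : Γ) :
    f (comm x y) = comm (f x) (f y) := by
  simp only [comm, map_mul, map_inv]

lemma comm_conj (g x y : Γ) :
    comm (g * x * g⁻¹) (g * y * g⁻¹) = g * comm x y * g⁻¹ := by
  simp only [comm]
  group

lemma comm_swap (x y : Γ) : comm y x = (comm x y)⁻¹ := by
  simp only [comm]
  group

lemma comm_inv_left (x y : Γ) : comm x⁻¹ y = x * (comm x y)⁻¹ * x⁻¹ := by
  simp only [comm]
  group

lemma comm_inv_right (x y : Γ) : comm x y⁻¹ = y * (comm x y)⁻¹ * y⁻¹ := by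
  rw [comm_swap y⁻¹ x, comm_inv_left, comm_swap x y, conj_inv, inv_inv]

lemma comm_mul_left (x y : Γ) : comm (x * y) y = y⁻¹ * comm x y * y⁻¹⁻¹ := by
  simp only [comm]
  group

lemma mul_comm_eq_conj (x y : Γ) : x * comm x y = y⁻¹ * x * y := by
  simp only [comm]
  group

end Comm

section Tame

/-- The endomorphism of the free group with given values on the generators. -/
def endo (X Y : F₂) : F₂ →* F₂ := FreeGroup.lift ![X, Y]

@[simp] lemma endo_xa (X Y : F₂) : endo X Y xa = X := by simp [endo]

@[simp] lemma endo_xb (X Y : F₂) : endo X Y xb = Y := by simp [endo]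

/-- The automorphism exchanging the generators. -/
def swapAut : MulAut F₂ :=
  MonoidHom.toMulEquiv (endo xb xa) (endo xb xa) (monoidHom_ext (by simp) (by simp))
    (monoidHom_ext (by simp) (by simp))

/-- The automorphism inverting the first generator. -/
def invAut : MulAut F₂ :=
  MonoidHom.toMulEquiv (endo xa⁻¹ xb) (endo xa⁻¹ xb) (monoidHom_ext (by simp) (by simp))
    (monoidHom_ext (by simp) (by simp))

/-- The automorphism multiplying the first generator by the second one. -/
def transvAut : MulAut F₂ :=
  MonoidHom.toMulEquiv (endo (xa * xb) xb) (endo (xa * xb⁻¹) xb)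
    (monoidHom_ext (by simp) (by simp)) (monoidHom_ext (by simp) (by simp))

@[simp] lemma swapAut_xa : swapAut xa = xb := endo_xa xb xa

@[simp] lemma swapAut_xb : swapAut xb = xa := endo_xb xb xa

@[simp] lemma invAut_xa : invAut xa = xa⁻¹ := endo_xa xa⁻¹ xb

@[simp] lemma invAut_xb : invAut xb = xb := endo_xb xa⁻¹ xb

@[simp] lemma transvAut_xa : transvAut xa = xa * xb := endo_xa (xa * xb) xb

@[simp] lemma transvAut_xb : transvAut xb = xb := endo_xb (xa * xb) xb

/-- The group of tame automorphisms: those generated by inner automorphisms and elementary Nielsen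
transformations. -/
def tame : Subgroup (MulAut F₂) :=
  innAut F₂ ⊔ Subgroup.closure {swapAut, invAut, transvAut}

lemma conj_mem_tame (g : F₂) : MulAut.conj g ∈ tame := Subgroup.mem_sup_left ⟨g, rfl⟩

lemma swapAut_mem_tame : swapAut ∈ tame :=
  Subgroup.mem_sup_right (Subgroup.subset_closure (by simp))

lemma invAut_mem_tame : invAut ∈ tame :=
  Subgroup.mem_sup_right (Subgroup.subset_closure (by simp))

lemma transvAut_mem_tame : transvAut ∈ tame :=
  Subgroup.mem_sup_right (Subgroup.subset_closure (by simp))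

variable {Q : Type*} [Group Q] {π : F₂ →* Q} {X Y X' Y' : F₂}

/-- Modulo the kernel of `π`, the pair `(X, Y)` is the image of `(a, b)` under a tame
automorphism. -/
def TamePair (π : F₂ →* Q) (X Y : F₂) : Prop := ∃ θ ∈ tame, π (θ xa) = π X ∧ π (θ xb) = π Y

namespace TamePair

lemma refl (π : F₂ →* Q) : TamePair π xa xb := ⟨1, one_mem _, rfl, rfl⟩

lemma congr (h : TamePair π X Y) (hX : π X = π X') (hY : π Y = π Y') : TamePair π X' Y' := by
  obtain ⟨θ, hθ, hθX, hθY⟩ := h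
  exact ⟨θ, hθ, hθX.trans hX, hθY.trans hY⟩

lemma conj (h : TamePair π X Y) (g : F₂) : TamePair π (g * X * g⁻¹) (g * Y * g⁻¹) := by
  obtain ⟨θ, hθ, hθX, hθY⟩ := h
  exact ⟨MulAut.conj g * θ, mul_mem (conj_mem_tame g) hθ, by simp [hθX], by simp [hθY]⟩

lemma of_conj (g : F₂) (h : TamePair π (g * X * g⁻¹) (g * Y * g⁻¹)) : TamePair π X Y := by
  simpa [mul_assoc] using h.conj g⁻¹

lemma swap (h : TamePair π X Y) : TamePair π Y X := by
  obtain ⟨θ, hθ, hθX, hθY⟩ := h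
  exact ⟨θ * swapAut, mul_mem hθ swapAut_mem_tame, by simpa using hθY, by simpa using hθX⟩

lemma inv_left (h : TamePair π X Y) : TamePair π X⁻¹ Y := by
  obtain ⟨θ, hθ, hθX, hθY⟩ := h
  exact ⟨θ * invAut, mul_mem hθ invAut_mem_tame, by simpa using hθX, by simpa using hθY⟩

lemma inv_right (h : TamePair π X Y) : TamePair π X Y⁻¹ := h.swap.inv_left.swap

lemma mul_left (h : TamePair π X Y) : TamePair π (X * Y) Y := by
  obtain ⟨θ, hθ, hθX, hθY⟩ := h
  exact ⟨θ * transvAut, mul_mem hθ transvAut_mem_tame, by simp [hθX, hθY], by simpa using hθY⟩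

lemma mul_inv_left (h : TamePair π X Y) : TamePair π (X * Y⁻¹) Y := by
  simpa using h.inv_right.mul_left.inv_right

lemma mul_zpow (h : TamePair π X Y) (k : ℤ) : TamePair π (X * Y ^ k) Y := by
  induction k using Int.induction_on with
  | zero => simpa using h
  | succ n ih => simpa only [mul_assoc, ← _root_.zpow_add_one] using ih.mul_left
  | pred n ih => simpa only [mul_assoc, ← _root_.zpow_sub_one] using ih.mul_inv_left

lemma zpow_mul (h : TamePair π X Y) (k : ℤ) : TamePair π (Y ^ k * X) Y := by
  simpa using (h.inv_left.mul_zpow (-k)).inv_left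

end TamePair

/-- The determinant of the exponent sums of `X` and `Y`. -/
noncomputable def expDet (X Y : F₂) : ℤ := σ 0 X * σ 1 Y - σ 0 Y * σ 1 X

/-- The pair `(X, Y)` has unimodular exponent sums and, modulo the kernel of `π`, the commutator of
`X` and `Y` is conjugate to a nontrivial power of `[a, b]`. -/
structure CommPair (π : F₂ →* Q) (X Y : F₂) : Prop where
  det : IsUnit (expDet X Y)
  exists_isConj : ∃ j : ℤ, π xc ^ j ≠ 1 ∧ IsConj (π xc ^ j) (π (comm X Y))

namespace CommPair

lemma exists_isConj_inv (h : CommPair π X Y) :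
    ∃ j : ℤ, π xc ^ j ≠ 1 ∧ IsConj (π xc ^ j) (π (comm X Y)⁻¹) := by
  obtain ⟨j, hj, hc⟩ := h.exists_isConj
  obtain ⟨q, hq⟩ := isConj_iff.1 hc
  refine ⟨-j, by rwa [_root_.zpow_neg, inv_ne_one], isConj_iff.2 ⟨q, ?_⟩⟩
  rw [map_inv, ← hq, _root_.zpow_neg, conj_inv]

lemma conj (h : CommPair π X Y) (g : F₂) : CommPair π (g * X * g⁻¹) (g * Y * g⁻¹) where
  det := by simpa only [expDet, σ_conj] using h.det
  exists_isConj := by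
    obtain ⟨j, hj, hc⟩ := h.exists_isConj
    exact ⟨j, hj, hc.trans (isConj_iff.2 ⟨π g, by rw [comm_conj]; simp⟩)⟩

lemma swap (h : CommPair π X Y) : CommPair π Y X where
  det := by
    rw [← IsUnit.neg_iff]
    convert h.det using 1
    simp only [expDet]
    ring
  exists_isConj := comm_swap X Y ▸ h.exists_isConj_inv

lemma inv_left (h : CommPair π X Y) : CommPair π X⁻¹ Y where
  det := by
    rw [← IsUnit.neg_iff]
    convert h.det using 1
    simp only [expDet, σ_inv]
    ring
  exists_isConj := by
    obtain ⟨j, hj, hc⟩ := h.exists_isConj_inv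
    exact ⟨j, hj, hc.trans (isConj_iff.2 ⟨π X, by rw [comm_inv_left]; simp⟩)⟩

lemma inv_right (h : CommPair π X Y) : CommPair π X Y⁻¹ := h.swap.inv_left.swap

lemma mul_left (h : CommPair π X Y) : CommPair π (X * Y) Y where
  det := by
    convert h.det using 1
    simp only [expDet, σ_mul]
    ring
  exists_isConj := by
    obtain ⟨j, hj, hc⟩ := h.exists_isConj
    exact ⟨j, hj, hc.trans (isConj_iff.2 ⟨π Y⁻¹, by rw [comm_mul_left]; simp⟩)⟩

lemma mul_inv_left (h : CommPair π X Y) : CommPair π (X * Y⁻¹) Y := by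
  simpa using h.inv_right.mul_left.inv_right

end CommPair

end Tame

/-! ### Pairs whose first member lies in the vertex group -/

section Terminal

variable {Q K₀ K Γ₀ Γ₁ : Type*} [Group Q] [Field K₀] [Field K]
  [LinearOrderedCommGroupWithZero Γ₀] [LinearOrderedCommGroupWithZero Γ₁]
  {π : F₂ →* Q} {v₀ : Valuation K₀ Γ₀} {v : Valuation K Γ₁} {X Y g h k : F₂} {ε ε' : Bool}
  {j q : ℤ}

lemma semiconjBy_xb_edgeGen : SemiconjBy xb (edgeGen false) xa := by
  simp [SemiconjBy, edgeGen, xc, mul_assoc]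

lemma xa_mul_comm (k : F₂) : xa * comm xa (xb * k) = k⁻¹ * edgeGen false * k := by
  rw [mul_comm_eq_conj, _root_.mul_inv_rev]
  simp [edgeGen, xc, mul_assoc]

lemma σ_one_incl (ε : Bool) (w : F₂) : σ 1 (incl ε w) = 0 := by
  have hone : (expSum 1).comp (incl ε) = 1 := monoidHom_ext
    (by simpa [σ, incl_xa] using σ_edgeGen ε 1) (by simpa [σ, incl_xb] using σ_xc 1)
  simpa [σ] using congrArg Multiplicative.toAdd (DFunLike.congr_fun hone w)

namespace TorusRep

lemma σ_one_of_mem_vertex (H : TorusRep π v₀ v) (hh : h ∈ vertex π) : σ 1 h = 0 := by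
  obtain ⟨w, hw⟩ := (mem_vertex_iff true).1 hh
  rw [H.σ_congr hw, σ_one_incl]

lemma trace_conj_edgeGen_false (H : TorusRep π v₀ v) (x : F₂) :
    (mat (H.ρ (x * edgeGen false * x⁻¹))).trace = (mat (H.ρ xa)).trace := by
  rw [trace_map_conj, ← trace_map_conj H.ρ xb, semiconjBy_xb_edgeGen.eq, mul_inv_cancel_right]

lemma exists_conj_edgeGen_eq (H : TorusRep π v₀ v) (hg : g ∈ vertex π) (hj : π xc ^ j ≠ 1)
    (h : π (k⁻¹ * edgeGen false * k) = π (xa * (g * xc ^ j * g⁻¹))) :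
    ∃ q : ℤ, π (k⁻¹ * edgeGen false * k) = π (xa ^ (-q) * (xa * xc ^ j) * xa ^ q) := by
  have hconj : π (g⁻¹ * k⁻¹ * edgeGen false * (g⁻¹ * k⁻¹)⁻¹) =
      π (g⁻¹ * letter xa true * g⁻¹⁻¹ * xc ^ j) := by
    have hsplit : g⁻¹ * k⁻¹ * edgeGen false * (g⁻¹ * k⁻¹)⁻¹ =
        g⁻¹ * (k⁻¹ * edgeGen false * k) * g := by group
    rw [hsplit, map_mul, map_mul, h, ← map_mul, ← map_mul]
    simp [letter, mul_assoc]
  have htrace := (H.signEq_of_eq hconj.symm).trace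
  rw [trace_conj_edgeGen_false] at htrace
  obtain ⟨p, q, hpq⟩ := H.exists_eq_of_trace_eq (inv_mem hg) hj true htrace
  have hg' : π g = (π (xc ^ p * xa ^ q))⁻¹ := by rw [← hpq, map_inv, inv_inv]
  refine ⟨q, h.trans ?_⟩
  simp only [map_mul, map_inv, hg', map_zpow]
  group

lemma zpow_xc_eq (H : TorusRep π v₀ v) (hj : π xc ^ j ≠ 1)
    (h : π (k⁻¹ * edgeGen false * k) = π (xa ^ (-q) * (xa * xc ^ j) * xa ^ q)) :
    π xc ^ j = π xc := by
  have hconj : π (xa ^ q * k⁻¹ * edgeGen false * (xa ^ q * k⁻¹)⁻¹) = π (xa * xc ^ j) := by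
    have hsplit : xa ^ q * k⁻¹ * edgeGen false * (xa ^ q * k⁻¹)⁻¹ =
        xa ^ q * (k⁻¹ * edgeGen false * k) * xa ^ (-q) := by group
    rw [hsplit, map_mul, map_mul, h, ← map_mul, ← map_mul]
    simp [mul_assoc]
  have htrace := (H.signEq_of_eq hconj.symm).trace
  rw [trace_conj_edgeGen_false, map_mul, map_zpow, torusRep_xa, torusRep_xc, ← map_zpow, ← map_mul,
    trace_scal, trace_scal, ← map_neg] at htrace
  exact (H.trace_eq j (htrace.imp (H.f.injective ·) (H.f.injective ·))).resolve_left hj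

lemma exists_xb_mul_eq (H : TorusRep π v₀ v) (hk : k ∈ vertex π)
    (h : π (k⁻¹ * edgeGen false * k) = π (xa ^ (-q) * edgeGen false * xa ^ q)) :
    ∃ r : ℤ, π (xb * k) = π (xa ^ r * (xb * xa ^ q)) := by
  have hmem : (k * xa ^ (-q))⁻¹ * edgeGen false ^ (1 : ℤ) * (k * xa ^ (-q)) ∈ edge π false := by
    refine (mem_edge_congr ?_).2 (edgeGen_mem_edge π false)
    have hsplit : (k * xa ^ (-q))⁻¹ * edgeGen false ^ (1 : ℤ) * (k * xa ^ (-q)) =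
        xa ^ q * (k⁻¹ * edgeGen false * k) * xa ^ (-q) := by group
    rw [hsplit, map_mul, map_mul, h, ← map_mul, ← map_mul]
    simp [mul_assoc]
  obtain ⟨r, hr⟩ := mem_edge_iff.1 (H.eq_and_mem_edge_of_conj_zpow
    (mul_mem hk (zpow_mem (xa_mem_vertex π) _)) one_ne_zero hmem).2
  refine ⟨r, ?_⟩
  have hk' : π k = π (edgeGen false ^ r * xa ^ q) := by
    rw [map_mul, map_zpow, ← hr, ← map_mul]
    simp [mul_assoc]
  rw [map_mul, hk', ← map_mul, ← mul_assoc, (semiconjBy_xb_edgeGen.zpow_right r).eq, mul_assoc]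

lemma tamePair_xa (H : TorusRep π v₀ v) (hk : k ∈ vertex π) (hg : g ∈ vertex π)
    (hj : π xc ^ j ≠ 1) (h : π (comm xa (xb * k)) = π (g * xc ^ j * g⁻¹)) :
    TamePair π xa (xb * k) := by
  obtain ⟨q, hq⟩ := H.exists_conj_edgeGen_eq (k := k) hg hj
    (by rw [← xa_mul_comm, map_mul, h, ← map_mul])
  have hc := H.zpow_xc_eq hj hq
  obtain ⟨r, hr⟩ := H.exists_xb_mul_eq (q := q) hk
    (hq.trans (by simp only [map_mul, map_zpow, hc, edgeGen, Bool.false_eq_true, if_false]))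
  exact (((TamePair.refl π).swap.mul_zpow q).zpow_mul r).swap.congr rfl hr.symm

lemma tamePair_of_mem_edge_true (H : TorusRep π v₀ v) (hX : X ∈ edge π true)
    (hσ : IsUnit (σ 0 X)) (hk : k ∈ vertex π) (hg : g ∈ vertex π) (hj : π xc ^ j ≠ 1)
    (h : π (comm X (xb * k)) = π (g * xc ^ j * g⁻¹)) : TamePair π X (xb * k) := by
  have hpow : π X = π xa ^ σ 0 X := H.map_eq_zpow_σ hX
  rcases Int.isUnit_iff.1 hσ with hσ | hσ
  · rw [hσ, zpow_one] at hpow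
    exact (H.tamePair_xa hk hg hj (by rwa [map_comm, ← hpow, ← map_comm])).congr hpow.symm rfl
  · rw [hσ, _root_.zpow_neg_one, ← map_inv] at hpow
    have hinv : π (comm xa (xb * k)) = π (xa⁻¹ * g * xc ^ (-j) * (xa⁻¹ * g)⁻¹) := by
      rw [← inv_inv xa, comm_inv_left, map_mul, map_mul, map_inv π (comm _ _), map_comm, ← hpow,
        ← map_comm, h, hpow]
      simp only [map_mul, map_inv, map_zpow]
      group
    exact (H.tamePair_xa hk (mul_mem (inv_mem (xa_mem_vertex π)) hg)
      (by rwa [_root_.zpow_neg, inv_ne_one]) hinv).inv_left.congr hpow.symm rfl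

lemma tamePair_of_mem_edge (H : TorusRep π v₀ v) (hX : X ∈ edge π ε) (hσ : IsUnit (σ 0 X))
    (hh : h ∈ vertex π) (hg : g ∈ vertex π) (hj : π xc ^ j ≠ 1)
    (hc : π (comm X (letter xb ε * h)) = π (g * xc ^ j * g⁻¹)) :
    TamePair π X (letter xb ε * h) := by
  cases ε
  · have hX' : xb * X * xb⁻¹ ∈ edge π true := H.pingPong.edge_conj false X hX
    have hY : xb * (letter xb false * h) * xb⁻¹ = (xb * h⁻¹)⁻¹ := by simp [letter]
    have hconj : comm (xb * X * xb⁻¹) (xb * h⁻¹) =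
        h * (comm X (letter xb false * h))⁻¹ * h⁻¹ := by
      rw [← inv_inv (xb * h⁻¹), comm_inv_right, ← hY, comm_conj]
      simp only [letter, Bool.false_eq_true, if_false]
      group
    refine .of_conj xb (hY ▸ (H.tamePair_of_mem_edge_true hX' (σ_conj 0 xb X ▸ hσ) (inv_mem hh)
      (mul_mem hh hg) (j := -j) (by rwa [_root_.zpow_neg, inv_ne_one]) ?_).inv_right)
    rw [hconj, map_mul, map_mul, map_inv π (comm _ _), hc]
    simp only [map_mul, map_inv, map_zpow]
    group
  · exact H.tamePair_of_mem_edge_true hX hσ hh hg hj hc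

end TorusRep

end Terminal

section Terminal

variable {Q K₀ K Γ₀ Γ₁ : Type*} [Group Q] [Field K₀] [Field K]
  [LinearOrderedCommGroupWithZero Γ₀] [LinearOrderedCommGroupWithZero Γ₁]
  {π : F₂ →* Q} {v₀ : Valuation K₀ Γ₀} {v : Valuation K Γ₁} {X Y h z : F₂} {ε ε' : Bool}
  {j : ℤ}

namespace TorusRep

lemma eq_and_mem_edge_of_conj (H : TorusRep π v₀ v) (hh : h ∈ vertex π) (hz : z ∈ edge π ε)
    (h0 : σ 0 z ≠ 0) (hc : h⁻¹ * z * h ∈ edge π ε') : ε' = ε ∧ h ∈ edge π ε := by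
  refine H.eq_and_mem_edge_of_conj_zpow hh h0 ((mem_edge_congr ?_).1 hc)
  simp only [map_mul, map_zpow, H.map_eq_zpow_σ hz]

lemma map_eq_one_of_mem_edge (H : TorusRep π v₀ v) (hh : h ∈ edge π ε) (h0 : σ 0 h = 0) :
    π h = 1 := by
  rw [H.map_eq_zpow_σ hh, h0, zpow_zero]

lemma mem_vertex_of_comm (H : TorusRep π v₀ v) (hj : π xc ^ j ≠ 1)
    (hc : π (comm X Y) = π xc ^ j) (hX : v (mat (H.ρ X)).trace ≤ 1) : X ∈ vertex π := by
  have hcV : comm X Y ∈ vertex π :=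
    (mem_vertex_congr (hc.trans (map_zpow π xc j).symm)).2 (zpow_mem (xc_mem_vertex π) j)
  refine H.pingPong.mem_vertex hcV (fun k _ ε he => hj ?_) hX ?_
  · have hone := H.map_eq_one_of_mem_edge he (by simp only [comm, σ_mul, σ_inv]; ring)
    rw [map_mul, map_mul, hc, map_inv] at hone
    rwa [mul_assoc, inv_mul_eq_one, eq_comm, mul_eq_right] at hone
  · rw [mul_comm_eq_conj, ← inv_inv Y, inv_inv Y⁻¹, trace_map_conj]
    exact hX

lemma exists_eq_mul_letter (H : TorusRep π v₀ v) (hX : X ∈ vertex π)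
    (hc : comm X Y ∈ vertex π) (hσX : σ 0 X ≠ 0) (hσY : σ 1 Y ≠ 0) :
    ∃ h₀ ∈ vertex π, ∃ ε, ∃ h₁ ∈ vertex π,
      Y = h₀ * (letter xb ε * h₁) ∧ h₀⁻¹ * X * h₀ ∈ edge π ε := by
  have P := H.pingPong
  have hYX : Y⁻¹ * X * Y ∈ vertex π := mul_comm_eq_conj X Y ▸ mul_mem hX hc
  obtain ⟨h₀, hh₀, ε, g, δ, m, hr, rfl⟩ := P.exists_eq_mul Y
  have hX₀ : h₀⁻¹ * X * h₀ ∈ vertex π := mul_mem (mul_mem (inv_mem hh₀) hX) hh₀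
  cases hr with
  | nil => exact absurd (by rw [mul_one, H.σ_one_of_mem_vertex hh₀]) hσY
  | @cons _ ε₁ _ h₁ g m hh₁ hE hg =>
    have hedge : h₀⁻¹ * X * h₀ ∈ edge π ε := by
      refine P.mem_edge hX₀ (.cons hh₁ hE hg) ?_
      convert hYX using 1
      group
    cases hg with
    | nil => exact ⟨h₀, hh₀, ε, h₁, hh₁, by rw [mul_one], hedge⟩
    | @cons _ ε₂ _ h₂ g m hh₂ hE₂ hg =>
      -- A second stable letter would conjugate the image of `X` into an edge group once more,
      -- contradicting that the word is reduced.
      have hz := P.edge_conj ε _ hedge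
      have hz₁ := P.mem_edge (mul_mem (mul_mem (inv_mem hh₁) (P.edge_le _ hz)) hh₁)
        (.cons hh₂ hE₂ hg) (by
          convert hYX using 1
          rw [letter_not]
          group)
      have hσz : σ 0 (letter xb (!ε) * (h₀⁻¹ * X * h₀) * letter xb ε) = σ 0 X := by
        rw [letter_not]
        simp only [σ_mul, σ_inv]
        ring
      obtain ⟨rfl, hh₁E⟩ := H.eq_and_mem_edge_of_conj hh₁ hz (hσz ▸ hσX) hz₁
      exact absurd hh₁E (hE rfl)

lemma tamePair_of_comm (H : TorusRep π v₀ v) (hd : IsUnit (expDet X Y)) (hj : π xc ^ j ≠ 1)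
    (hc : π (comm X Y) = π xc ^ j) (hX : v (mat (H.ρ X)).trace ≤ 1) : TamePair π X Y := by
  have hXV := H.mem_vertex_of_comm hj hc hX
  have hcV : comm X Y ∈ vertex π :=
    (mem_vertex_congr (hc.trans (map_zpow π xc j).symm)).2 (zpow_mem (xc_mem_vertex π) j)
  rw [expDet, H.σ_one_of_mem_vertex hXV, mul_zero, sub_zero, IsUnit.mul_iff] at hd
  obtain ⟨h₀, hh₀, ε, h₁, hh₁, rfl, hedge⟩ :=
    H.exists_eq_mul_letter hXV hcV hd.1.ne_zero hd.2.ne_zero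
  have hY : h₀⁻¹ * (h₀ * (letter xb ε * h₁)) * h₀⁻¹⁻¹ = letter xb ε * (h₁ * h₀) := by group
  refine .of_conj h₀⁻¹ (hY ▸ H.tamePair_of_mem_edge (by rwa [inv_inv]) (σ_conj 0 h₀⁻¹ X ▸ hd.1)
    (mul_mem hh₁ hh₀) (inv_mem hh₀) hj ?_)
  rw [← hY, comm_conj, map_mul, map_mul, hc]
  simp only [map_mul, map_zpow]

lemma tamePair_of_trace_le (H : TorusRep π v₀ v) (h : CommPair π X Y)
    (hX : v (mat (H.ρ X)).trace ≤ 1) : TamePair π X Y := by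
  obtain ⟨j, hj, hc⟩ := h.exists_isConj
  obtain ⟨q, hq⟩ := isConj_iff.1 hc.symm
  obtain ⟨g, rfl⟩ := H.surj q
  refine .of_conj g (H.tamePair_of_comm (h.conj g).det hj ?_ (by rwa [trace_map_conj]))
  rw [comm_conj, map_mul, map_mul, map_inv, hq]

lemma trace_comm_le (H : TorusRep π v₀ v) (h : CommPair π X Y) :
    v (mat (comm (H.ρ X) (H.ρ Y))).trace ≤ 1 := by
  obtain ⟨j, -, hc⟩ := h.exists_isConj
  obtain ⟨q, hq⟩ := isConj_iff.1 hc.symm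
  obtain ⟨g, rfl⟩ := H.surj q
  have hconj : π (g * comm X Y * g⁻¹) = π (xc ^ j) := by
    rw [map_mul, map_mul, map_inv, hq, map_zpow]
  rw [← map_comm, ← trace_map_conj H.ρ g, (H.signEq_of_eq hconj).valuation_trace]
  exact (H.pingPong.bounded_vertex _ (zpow_mem (xc_mem_vertex π) j)).trace

end TorusRep

end Terminal

/-! ### Descent on traces -/

section Descent

variable {R : Type*} [CommRing R]

lemma trace_mul_add_trace_mul_inv (X Y : SL(2, R)) :
    (mat (X * Y)).trace + (mat (X * Y⁻¹)).trace = (mat X).trace * (mat Y).trace := by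
  simp only [map_mul, mat_inv, trace_fin_two, mul_apply_ix true]
  simp [ix]
  ring

lemma trace_comm (X Y : SL(2, R)) :
    (mat (comm X Y)).trace = (mat X).trace ^ 2 + (mat Y).trace ^ 2 + (mat (X * Y)).trace ^ 2 -
      (mat X).trace * (mat Y).trace * (mat (X * Y)).trace - 2 := by
  simp only [comm, map_mul, mat_inv, trace_fin_two, mul_apply_ix true]
  simp only [ix, Bool.not_true, if_true, Bool.false_eq_true, if_false, of_apply, cons_val',
    cons_val_zero, cons_val_one, cons_val_fin_one]
  linear_combination ((mat X 0 0 + mat X 1 1) ^ 2 - 2) * mat_det Y +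
    ((mat Y 0 0 + mat Y 1 1) ^ 2 - 2 * (mat Y 0 0 * mat Y 1 1 - mat Y 0 1 * mat Y 1 0)) * mat_det X

variable {F Γ : Type*} [Field F] [LinearOrderedCommGroupWithZero Γ]

-- The traces of `XY` and `XY⁻¹` are the two roots of a quadratic polynomial with sum `tr X tr Y`,
-- which is larger than `tr X`, and product at most `(tr X) ^ 2`.
lemma trace_mul_lt_or_trace_mul_inv_lt (v : Valuation F Γ) {X Y : SL(2, F)}
    (hc : v (mat (comm X Y)).trace ≤ 1) (hY : 1 < v (mat Y).trace)
    (hYX : v (mat Y).trace ≤ v (mat X).trace) :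
    v (mat (X * Y)).trace < v (mat X).trace ∨ v (mat (X * Y⁻¹)).trace < v (mat X).trace := by
  by_contra! ⟨hp, hq⟩
  have hsum := trace_mul_add_trace_mul_inv X Y
  have hprod : (mat (X * Y)).trace * (mat (X * Y⁻¹)).trace =
      (mat X).trace ^ 2 + ((mat Y).trace ^ 2 - ((mat (comm X Y)).trace + 2)) := by
    linear_combination (mat (X * Y)).trace * hsum + trace_comm X Y
  generalize (mat (X * Y)).trace = p at *
  generalize (mat (X * Y⁻¹)).trace = q at *
  generalize (mat X).trace = x at *
  generalize (mat Y).trace = y at *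
  have hx : 1 < v x := hY.trans_le hYX
  have htwo : v (2 : F) ≤ 1 := one_add_one_eq_two (R := F) ▸ v.map_add_le (by simp) (by simp)
  have hone : 1 ≤ v x ^ 2 := one_le_pow₀ hx.le
  have hpq : v p * v q ≤ v x * v x := by
    rw [← map_mul, hprod, ← pow_two]
    refine v.map_add_le (map_pow v x 2).le (v.map_sub_le ?_ (v.map_add_le (hc.trans hone)
      (htwo.trans hone)))
    rw [map_pow]
    gcongr
  have hpos : 0 < v x := zero_lt_one.trans hx
  have hpx : v p ≤ v x := le_of_mul_le_mul_right ((mul_le_mul_right hq _).trans hpq) hpos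
  have hqx : v q ≤ v x := le_of_mul_le_mul_left ((mul_le_mul_left hp _).trans hpq) hpos
  have hle := v.map_add_le hpx hqx
  rw [hsum, map_mul] at hle
  exact (lt_mul_of_one_lt_right hpos hY).not_ge hle

end Descent

section Descent

variable {Q K₀ K Γ₀ Γ₁ : Type*} [Group Q] [Field K₀] [Field K]
  [LinearOrderedCommGroupWithZero Γ₀] [LinearOrderedCommGroupWithZero Γ₁]
  {π : F₂ →* Q} {v₀ : Valuation K₀ Γ₀} {v : Valuation K Γ₁} {X Y : F₂}

namespace TorusRep

lemma exists_trace_lt (H : TorusRep π v₀ v) (h : CommPair π X Y)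
    (hY : 1 < v (mat (H.ρ Y)).trace) (hYX : v (mat (H.ρ Y)).trace ≤ v (mat (H.ρ X)).trace) :
    ∃ Z, CommPair π Z Y ∧ (TamePair π Z Y → TamePair π X Y) ∧
      v (mat (H.ρ Z)).trace < v (mat (H.ρ X)).trace := by
  rcases trace_mul_lt_or_trace_mul_inv_lt v (H.trace_comm_le h) hY hYX with hlt | hlt
  · exact ⟨X * Y, h.mul_left, fun hZ => by simpa using hZ.mul_inv_left, by rwa [map_mul]⟩
  · exact ⟨X * Y⁻¹, h.mul_inv_left, fun hZ => by simpa using hZ.mul_left,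
      by rwa [map_mul, map_inv]⟩

theorem tamePair (H : TorusRep π v₀ v) (h : CommPair π X Y) : TamePair π X Y := by
  obtain ⟨k, hk⟩ := H.pingPong.exists_max_trace_eq X
  obtain ⟨l, hl⟩ := H.pingPong.exists_max_trace_eq Y
  induction hN : k + l using Nat.strong_induction_on generalizing X Y k l with
  | _ N ih =>
  wlog hYX : v (mat (H.ρ Y)).trace ≤ v (mat (H.ρ X)).trace generalizing X Y k l
  · exact (this h.swap l hl k hk (by omega) (not_le.1 hYX).le).swap
  rcases le_or_gt (v (mat (H.ρ Y)).trace) 1 with hY | hY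
  · exact (H.tamePair_of_trace_le h.swap hY).swap
  obtain ⟨Z, hZ, hZX, hlt⟩ := H.exists_trace_lt h hY hYX
  obtain ⟨m, hm⟩ := H.pingPong.exists_max_trace_eq Z
  have hmk : m < k := by
    rw [← pow_lt_pow_iff_right₀ H.one_lt, ← hm, ← hk]
    exact max_lt_iff.2 ⟨lt_max_of_lt_right (hY.trans_le hYX), lt_max_of_lt_right hlt⟩
  exact hZX (ih (m + l) (by omega) hZ m hm l hl rfl)

end TorusRep

end Descent

/-! ### Trace polynomials -/

section CayleyHamilton

variable {R : Type*} [CommRing R]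

lemma mat_inv_eq_trace_smul_sub (M : SL(2, R)) : mat M⁻¹ = (mat M).trace • 1 - mat M := by
  rw [mat_inv]
  ext i j
  fin_cases i <;> fin_cases j <;> simp [trace_fin_two]

lemma mat_mul_self (M : SL(2, R)) : mat M * mat M = (mat M).trace • mat M - 1 := by
  have hinv : mat M⁻¹ * mat M = 1 := by rw [← map_mul, inv_mul_cancel, map_one]
  rw [mat_inv_eq_trace_smul_sub, sub_mul, smul_mul_assoc, one_mul] at hinv
  rw [← hinv, sub_sub_cancel]

lemma mul_swap_eq (M N : Matrix (Fin 2) (Fin 2) R) :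
    N * M = M.trace • N + N.trace • M + ((M * N).trace - M.trace * N.trace) • 1 - M * N := by
  ext i j
  fin_cases i <;> fin_cases j <;>
    simp [Matrix.mul_apply, Fin.sum_univ_two, trace_fin_two] <;> ring

lemma mat_mul_mat_mul_mat (M N : SL(2, R)) :
    mat N * (mat M * mat N) =
      (mat (M * N)).trace • mat N + mat M - (mat M).trace • (1 : Matrix (Fin 2) (Fin 2) R) := by
  rw [← mul_assoc, mul_swap_eq (mat M) (mat N)]
  simp only [sub_mul, add_mul, smul_mul_assoc, one_mul, mul_assoc, mat_mul_self N, mul_sub,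
    mul_smul_comm, mul_one, map_mul]
  module

end CayleyHamilton

/-- Complex polynomials in the traces `x`, `y`, `z` of `ρ xa`, `ρ xb`, `ρ (xa * xb)`, written as
polynomials in `z` over `ℂ[x, y]` so that one can divide by monic polynomials in `z`. -/
abbrev TracePoly := Polynomial (MvPolynomial (Fin 2) ℂ)

namespace TracePoly

section Evaluation

variable {L : Type} [CommRing L]

/-- Evaluation of a trace polynomial at a point, with coefficients mapped by `i`. -/
noncomputable def evalAt (i : ℂ →+* L) (x y z : L) : TracePoly →+* L :=
  Polynomial.eval₂RingHom (MvPolynomial.eval₂Hom i ![x, y]) z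

/-- The trace coordinates `x`, `y`, `z`. -/
noncomputable def coord : Fin 3 → TracePoly :=
  ![Polynomial.C (MvPolynomial.X 0), Polynomial.C (MvPolynomial.X 1), Polynomial.X]

lemma evalAt_coord (i : ℂ →+* L) (x y z : L) (k : Fin 3) :
    evalAt i x y z (coord k) = ![x, y, z] k := by
  fin_cases k <;> simp [evalAt, coord]

lemma evalAt_C_C (i : ℂ →+* L) (x y z : L) (c : ℂ) :
    evalAt i x y z (Polynomial.C (MvPolynomial.C c)) = i c := by
  simp [evalAt]

/-- Evaluation of a trace polynomial at the traces of a representation of the free group. -/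
noncomputable def evalRep (i : ℂ →+* L) (ρ : F₂ →* SL(2, L)) : TracePoly →+* L :=
  evalAt i (mat (ρ xa)).trace (mat (ρ xb)).trace (mat (ρ (xa * xb))).trace

lemma ringHom_ext {T : Type*} [CommRing T] {g h : TracePoly →+* T}
    (hC : ∀ c : ℂ, g (Polynomial.C (MvPolynomial.C c)) = h (Polynomial.C (MvPolynomial.C c)))
    (hX : ∀ k, g (coord k) = h (coord k)) : g = h :=
  Polynomial.ringHom_ext' (MvPolynomial.ringHom_ext hC (Fin.forall_fin_two.2 ⟨hX 0, hX 1⟩)) (hX 2)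

lemma cons_apply_eq_self {α : Type*} (u : Fin 2 → α) : ![u 0, u 1] = u :=
  List.ofFn_injective rfl

lemma evalAt_id_eq (u : Fin 2 → ℂ) (z : ℂ) (p : TracePoly) :
    evalAt (RingHom.id ℂ) (u 0) (u 1) z p = (p.map (MvPolynomial.eval u)).eval z := by
  rw [Polynomial.eval_map, evalAt, cons_apply_eq_self]
  rfl

lemma eq_zero_of_evalAt {p : TracePoly} (h : ∀ x y z : ℂ, evalAt (RingHom.id ℂ) x y z p = 0) :
    p = 0 := by
  ext1 n
  refine MvPolynomial.funext fun u => ?_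
  have hmap : p.map (MvPolynomial.eval u) = 0 :=
    Polynomial.funext fun z => by rw [← evalAt_id_eq, h, Polynomial.eval_zero]
  simpa using congrArg (Polynomial.coeff · n) hmap

end Evaluation

section Words

variable {L : Type} [CommRing L]

/-- The combination of `1`, `ρ xa`, `ρ xb` and `ρ (xa * xb)` with trace polynomials `q k` as
coefficients. -/
noncomputable def combo (i : ℂ →+* L) (ρ : F₂ →* SL(2, L)) (q : Fin 4 → TracePoly) :
    Matrix (Fin 2) (Fin 2) L :=
  evalRep i ρ (q 0) • 1 + evalRep i ρ (q 1) • mat (ρ xa) + evalRep i ρ (q 2) • mat (ρ xb) +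
    evalRep i ρ (q 3) • mat (ρ (xa * xb))

/-- Left multiplication by `ρ w` maps combinations to combinations, with new coefficients that do
not depend on `ρ`. -/
def PreservesCombo (w : F₂) : Prop :=
  ∀ q : Fin 4 → TracePoly, ∃ q' : Fin 4 → TracePoly,
    ∀ (L : Type) [CommRing L] (i : ℂ →+* L) (ρ : F₂ →* SL(2, L)),
      mat (ρ w) * combo i ρ q = combo i ρ q'

lemma preservesCombo_xa : PreservesCombo xa := by
  refine fun q => ⟨![-q 1, q 0 + coord 0 * q 1, -q 3, q 2 + coord 0 * q 3], fun L _ i ρ => ?_⟩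
  have hsq := mat_mul_self (ρ xa)
  have hsq_mul : mat (ρ xa) * (mat (ρ xa) * mat (ρ xb)) =
      (mat (ρ xa)).trace • (mat (ρ xa) * mat (ρ xb)) - mat (ρ xb) := by
    rw [← mul_assoc, hsq, sub_mul, smul_mul_assoc, one_mul]
  simp only [combo, map_mul ρ, map_mul mat, mul_add, mul_smul_comm, hsq, hsq_mul, mul_one]
  simp only [evalRep, map_add, map_neg, map_mul, evalAt_coord, Matrix.cons_val]
  module

lemma preservesCombo_xb : PreservesCombo xb := by
  refine fun q => ⟨![(coord 2 - coord 0 * coord 1) * q 1 - q 2 - coord 0 * q 3,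
    coord 1 * q 1 + q 3, q 0 + coord 0 * q 1 + coord 1 * q 2 + coord 2 * q 3, -q 1],
    fun L _ i ρ => ?_⟩
  simp only [combo, map_mul ρ, map_mul mat, mul_add, mul_smul_comm, mat_mul_self (ρ xb),
    mat_mul_mat_mul_mat, mul_swap_eq (mat (ρ xa)) (mat (ρ xb)), mul_one]
  simp only [evalRep, map_add, map_neg, map_sub, map_mul, evalAt_coord, Matrix.cons_val]
  module

lemma PreservesCombo.mul {w w' : F₂} (h : PreservesCombo w) (h' : PreservesCombo w') :
    PreservesCombo (w * w') := fun q => by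
  obtain ⟨q', hq'⟩ := h' q
  obtain ⟨q'', hq''⟩ := h q'
  exact ⟨q'', fun L _ i ρ => by rw [map_mul, map_mul, mul_assoc, hq', hq'']⟩

lemma PreservesCombo.inv {w : F₂} (h : PreservesCombo w) {r : TracePoly}
    (hr : ∀ (L : Type) [CommRing L] (i : ℂ →+* L) (ρ : F₂ →* SL(2, L)),
      evalRep i ρ r = (mat (ρ w)).trace) : PreservesCombo w⁻¹ := fun q => by
  obtain ⟨q', hq'⟩ := h q
  refine ⟨r • q - q', fun L _ i ρ => ?_⟩
  rw [map_inv, mat_inv_eq_trace_smul_sub, sub_mul, hq', smul_mul_assoc, one_mul, ← hr L i ρ]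
  simp only [combo, Pi.sub_apply, Pi.smul_apply, smul_eq_mul, map_sub, map_mul]
  module

lemma preservesCombo (w : F₂) : PreservesCombo w := by
  induction w using FreeGroup.induction_on with
  | C1 => exact fun q => ⟨q, fun L _ i ρ => by rw [map_one, map_one, one_mul]⟩
  | of j =>
    fin_cases j
    · exact preservesCombo_xa
    · exact preservesCombo_xb
  | inv_of j =>
    fin_cases j
    · exact preservesCombo_xa.inv fun L _ i ρ => evalAt_coord _ _ _ _ 0
    · exact preservesCombo_xb.inv fun L _ i ρ => evalAt_coord _ _ _ _ 1
  | mul x y hx hy => exact hx.mul hy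

lemma exists_evalRep_eq_trace (w : F₂) :
    ∃ p : TracePoly, ∀ (L : Type) [CommRing L] (i : ℂ →+* L) (ρ : F₂ →* SL(2, L)),
      evalRep i ρ p = (mat (ρ w)).trace := by
  obtain ⟨q, hq⟩ := preservesCombo w ![1, 0, 0, 0]
  refine ⟨q 0 + q 0 + q 1 * coord 0 + q 2 * coord 1 + q 3 * coord 2, fun L _ i ρ => ?_⟩
  have hone : combo i ρ ![1, 0, 0, 0] = 1 := by simp [combo]
  have hw := hq L i ρ
  rw [hone, mul_one] at hw
  rw [hw, combo]
  simp only [evalRep, map_add, map_mul, evalAt_coord, Matrix.cons_val, trace_add, trace_smul,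
    trace_one, smul_eq_mul, Fintype.card_fin]
  ring

/-- The polynomial expressing the trace of `ρ w` in the trace coordinates of `ρ`. -/
noncomputable def tracePoly (w : F₂) : TracePoly := (exists_evalRep_eq_trace w).choose

lemma evalRep_tracePoly (w : F₂) (i : ℂ →+* L) (ρ : F₂ →* SL(2, L)) :
    evalRep i ρ (tracePoly w) = (mat (ρ w)).trace :=
  (exists_evalRep_eq_trace w).choose_spec L i ρ

/-- The substitution of trace polynomials describing precomposition of representations with the
endomorphism `φ`. -/
noncomputable def pull (φ : F₂ →* F₂) : TracePoly →+* TracePoly :=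
  Polynomial.eval₂RingHom (MvPolynomial.eval₂Hom (Polynomial.C.comp MvPolynomial.C)
    ![tracePoly (φ xa), tracePoly (φ xb)]) (tracePoly (φ (xa * xb)))

lemma pull_coord (φ : F₂ →* F₂) (k : Fin 3) :
    pull φ (coord k) = tracePoly (φ (![xa, xb, xa * xb] k)) := by
  fin_cases k <;> simp [pull, coord]

lemma evalRep_pull (φ : F₂ →* F₂) (i : ℂ →+* L) (ρ : F₂ →* SL(2, L)) (p : TracePoly) :
    evalRep i ρ (pull φ p) = evalRep i (ρ.comp φ) p := by
  suffices h : (evalRep i ρ).comp (pull φ) = evalRep i (ρ.comp φ) from RingHom.congr_fun h p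
  refine ringHom_ext (fun c => by simp [pull, evalRep, evalAt]) fun k => ?_
  rw [RingHom.comp_apply, pull_coord, evalRep_tracePoly, evalRep, evalAt_coord]
  fin_cases k <;> rfl

end Words

section Fricke

variable {L : Type} [CommRing L]

/-- The polynomial `x² + y² + z² - xyz - 4`, whose value at `ρ` is `tr (ρ xc) - 2`. -/
noncomputable def fricke : TracePoly :=
  Polynomial.X ^ 2 - Polynomial.C (MvPolynomial.X 0 * MvPolynomial.X 1) * Polynomial.X +
    Polynomial.C (MvPolynomial.X 0 ^ 2 + MvPolynomial.X 1 ^ 2 - 4)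

lemma natDegree_fricke : fricke.natDegree = 2 := by
  unfold fricke
  compute_degree!

lemma monic_fricke : fricke.Monic := by
  unfold fricke
  monicity!

lemma evalRep_fricke (i : ℂ →+* L) (ρ : F₂ →* SL(2, L)) :
    evalRep i ρ fricke = (mat (ρ xc)).trace - 2 := by
  have hxc : ρ xc = comm (ρ xa) (ρ xb) := by simp only [xc, comm, map_mul, map_inv]
  rw [hxc, trace_comm]
  simp only [evalRep, evalAt, fricke, Polynomial.coe_eval₂RingHom, Polynomial.eval₂_C,
    Polynomial.eval₂_X, map_add, map_sub, map_mul, map_pow, MvPolynomial.coe_eval₂Hom,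
    MvPolynomial.eval₂_X, map_ofNat, cons_val_zero, cons_val_one, cons_val_fin_one]
  ring

lemma exists_add_inv_eq (z : ℂ) : ∃ x : ℂˣ, (x : ℂ) + (x⁻¹ : ℂˣ) = z := by
  obtain ⟨r, hr⟩ := IsAlgClosed.exists_pow_nat_eq (z ^ 2 - 4) (n := 2) two_pos
  have h : (z + r) / 2 * ((z - r) / 2) = 1 := by linear_combination -hr / 4
  refine ⟨⟨(z + r) / 2, (z - r) / 2, h, by rwa [mul_comm]⟩, ?_⟩
  simp only [Units.inv_mk]
  ring

lemma exists_evalRep_eq_evalAt (x y z : ℂ) :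
    ∃ ρ : F₂ →* SL(2, ℂ), evalRep (RingHom.id ℂ) ρ = evalAt (RingHom.id ℂ) x y z := by
  obtain ⟨w, hw⟩ := exists_add_inv_eq z
  let A : SL(2, ℂ) := ⟨!![x, -1; 1, 0], by simp [det_fin_two]⟩
  let B : SL(2, ℂ) := ⟨!![0, (w : ℂ); -((w⁻¹ : ℂˣ) : ℂ), y], by simp [det_fin_two]⟩
  have hA : mat A = !![x, -1; 1, 0] := rfl
  have hB : mat B = !![0, (w : ℂ); -((w⁻¹ : ℂˣ) : ℂ), y] := rfl
  have hAB : (mat A * mat B).trace = z := by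
    rw [hA, hB, ← hw]
    simp [trace_fin_two, add_comm]
  have ha : FreeGroup.lift ![A, B] xa = A := by simp [xa]
  have hb : FreeGroup.lift ![A, B] xb = B := by simp [xb]
  refine ⟨FreeGroup.lift ![A, B], ?_⟩
  rw [evalRep, map_mul, ha, hb, map_mul, hAB, hA, hB]
  simp [trace_fin_two]

lemma pull_pull {φ ψ : F₂ →* F₂} (h : φ.comp ψ = MonoidHom.id _) (p : TracePoly) :
    pull φ (pull ψ p) = p := by
  refine sub_eq_zero.1 (eq_zero_of_evalAt fun x y z => ?_)
  obtain ⟨ρ, hρ⟩ := exists_evalRep_eq_evalAt x y z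
  rw [← hρ, map_sub, evalRep_pull, evalRep_pull, MonoidHom.comp_assoc, h, MonoidHom.comp_id,
    sub_self]

/-- The representation of the free group by diagonal matrices with the given eigenvalues. -/
def diagRep (x y : Lˣ) : F₂ →* SL(2, L) := diagSL.comp (FreeGroup.lift ![x, y])

lemma evalRep_diagRep (i : ℂ →+* L) (x y : Lˣ) : evalRep i (diagRep x y) =
    evalAt i (x + (x⁻¹ : Lˣ)) (y + (y⁻¹ : Lˣ)) ((x * y : Lˣ) + ((x * y)⁻¹ : Lˣ)) := by
  have ha : FreeGroup.lift ![x, y] xa = x := by simp [xa]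
  have hb : FreeGroup.lift ![x, y] xb = y := by simp [xb]
  simp only [evalRep, diagRep, MonoidHom.comp_apply, map_mul (FreeGroup.lift _), ha, hb,
    trace_diagSL]

lemma evalRep_diagRep_comp_fricke (i : ℂ →+* L) (x y : Lˣ) (φ : F₂ →* F₂) :
    evalRep i ((diagRep x y).comp φ) fricke = 0 := by
  have hxc : FreeGroup.lift ![x, y] (φ xc) = 1 := by
    simp only [xc, map_mul, map_inv]
    rw [mul_right_comm _ (_⁻¹) (FreeGroup.lift _ _), inv_mul_cancel, one_mul, inv_mul_cancel]
  rw [evalRep_fricke, diagRep, MonoidHom.comp_apply, MonoidHom.comp_apply, hxc, map_one, map_one,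
    trace_one, Fintype.card_fin, Nat.cast_ofNat, sub_self]

-- If the two eigenvalues give the equation for `y` and for `y⁻¹`, then subtracting the two
-- equations isolates the leading coefficient.
lemma eq_zero_of_evalRep_diagRep {p : TracePoly} (hdeg : p.natDegree ≤ 1)
    (h : ∀ x y : ℂˣ, evalRep (RingHom.id ℂ) (diagRep x y) p = 0) : p = 0 := by
  obtain ⟨p₁, p₀, rfl⟩ := Polynomial.exists_eq_X_add_C_of_natDegree_le_one hdeg
  have hev : ∀ (u : Fin 2 → ℂ) (x y : ℂˣ), (x : ℂ) + (x⁻¹ : ℂˣ) = u 0 →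
      (y : ℂ) + (y⁻¹ : ℂˣ) = u 1 → MvPolynomial.eval u p₁ * ((x * y : ℂˣ) + ((x * y)⁻¹ : ℂˣ)) +
        MvPolynomial.eval u p₀ = 0 := fun u x y hx hy => by
    have hxy := h x y
    rw [evalRep_diagRep, hx, hy, evalAt_id_eq] at hxy
    simpa only [Polynomial.map_add, Polynomial.map_mul, Polynomial.map_C, Polynomial.map_X,
      Polynomial.eval_add, Polynomial.eval_mul, Polynomial.eval_C, Polynomial.eval_X] using hxy
  have hp₁ : p₁ * (MvPolynomial.X 0 ^ 2 - 4) * (MvPolynomial.X 1 ^ 2 - 4) = 0 := by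
    refine MvPolynomial.funext fun u => ?_
    obtain ⟨x, hx⟩ := exists_add_inv_eq (u 0)
    obtain ⟨y, hy⟩ := exists_add_inv_eq (u 1)
    have hpos := hev u x y hx hy
    have hneg := hev u x y⁻¹ hx (by rw [← hy, inv_inv, add_comm])
    simp only [mul_inv, inv_inv, Units.val_mul] at hpos hneg
    simp only [map_mul, map_sub, map_pow, MvPolynomial.eval_X, map_zero, map_ofNat, ← hx, ← hy]
    have hx2 : ((x : ℂ) + (x⁻¹ : ℂˣ)) ^ 2 - 4 = ((x : ℂ) - (x⁻¹ : ℂˣ)) ^ 2 := by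
      linear_combination 4 * x.mul_inv
    have hy2 : ((y : ℂ) + (y⁻¹ : ℂˣ)) ^ 2 - 4 = ((y : ℂ) - (y⁻¹ : ℂˣ)) ^ 2 := by
      linear_combination 4 * y.mul_inv
    rw [hx2, hy2]
    linear_combination ((x : ℂ) - (x⁻¹ : ℂˣ)) * ((y : ℂ) - (y⁻¹ : ℂˣ)) * (hpos - hneg)
  have hX : ∀ k : Fin 2, (MvPolynomial.X k ^ 2 - 4 : MvPolynomial (Fin 2) ℂ) ≠ 0 := fun k hk => by
    have := congrArg (MvPolynomial.eval 0) hk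
    rw [map_sub, map_pow, MvPolynomial.eval_X, map_ofNat] at this
    norm_num at this
  obtain rfl : p₁ = 0 := by simpa [hX] using hp₁
  obtain rfl : p₀ = 0 := by
    refine MvPolynomial.funext fun u => ?_
    obtain ⟨x, hx⟩ := exists_add_inv_eq (u 0)
    obtain ⟨y, hy⟩ := exists_add_inv_eq (u 1)
    simpa using hev u x y hx hy
  simp

lemma fricke_dvd_pull (φ : F₂ →* F₂) : fricke ∣ pull φ fricke := by
  rw [← Polynomial.modByMonic_eq_zero_iff_dvd monic_fricke]
  refine eq_zero_of_evalRep_diagRep ?_ fun x y => ?_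
  · have hne : fricke ≠ 1 := fun h => by simpa [h] using natDegree_fricke
    have hlt := Polynomial.natDegree_modByMonic_lt (pull φ fricke) monic_fricke hne
    rw [natDegree_fricke] at hlt
    omega
  · rw [Polynomial.modByMonic_eq_sub_mul_div, map_sub, map_mul, evalRep_pull,
      evalRep_diagRep_comp_fricke, ← MonoidHom.comp_id (diagRep x y),
      evalRep_diagRep_comp_fricke, zero_mul, sub_zero]

-- The polynomials `fricke` and `pull φ fricke` divide each other, so their quotient is a unit.
lemma exists_pull_fricke_eq (φ : MulAut F₂) : ∃ γ : ℂ,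
    pull φ.toMonoidHom fricke = fricke * Polynomial.C (MvPolynomial.C γ) := by
  obtain ⟨g, hg⟩ := fricke_dvd_pull φ.toMonoidHom
  obtain ⟨g', hg'⟩ := fricke_dvd_pull (φ⁻¹).toMonoidHom
  have hcomp : φ.toMonoidHom.comp (φ⁻¹).toMonoidHom = MonoidHom.id F₂ :=
    MonoidHom.ext (MulAut.apply_inv_self F₂ φ)
  have hmul : fricke * (g * pull φ.toMonoidHom g') = fricke * 1 := by
    rw [← mul_assoc, ← hg, ← map_mul, ← hg', mul_one, pull_pull hcomp]
  have hunit : IsUnit g := IsUnit.of_mul_eq_one _ (mul_left_cancel₀ monic_fricke.ne_zero hmul)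
  obtain ⟨r, hr, rfl⟩ := Polynomial.isUnit_iff.1 hunit
  obtain ⟨γ, -, rfl⟩ := MvPolynomial.isUnit_iff_eq_C_of_isReduced.1 hr
  exact ⟨γ, hg⟩

theorem exists_trace_map_xc_eq (φ : MulAut F₂) : ∃ γ : ℂ,
    ∀ (L : Type) [CommRing L] (i : ℂ →+* L) (ρ : F₂ →* SL(2, L)),
      (mat (ρ (φ xc))).trace = i γ * ((mat (ρ xc)).trace - 2) + 2 := by
  obtain ⟨γ, hγ⟩ := exists_pull_fricke_eq φ
  refine ⟨γ, fun L _ i ρ => ?_⟩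
  have htrace := congrArg (evalRep i ρ) hγ
  rw [evalRep_pull, evalRep_fricke, map_mul, evalRep_fricke, evalRep, evalAt_C_C] at htrace
  change (mat (ρ (φ xc))).trace - 2 = _ at htrace
  linear_combination htrace

end Fricke

end TracePoly

/-! ### Lifting automorphisms -/

section Exponents

lemma σ_endo (i : Fin 2) (X Y w : F₂) :
    σ i (endo X Y w) = σ 0 w * σ i X + σ 1 w * σ i Y := by
  induction w using FreeGroup.induction_on with
  | C1 => simp only [map_one, σ_one, zero_mul, add_zero]
  | of j =>
    fin_cases j
    · change σ i (endo X Y xa) = σ 0 xa * σ i X + σ 1 xa * σ i Y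
      simp [σ_xa]
    · change σ i (endo X Y xb) = σ 0 xb * σ i X + σ 1 xb * σ i Y
      simp [σ_xb]
  | inv_of j h =>
    simp only [map_inv, σ_inv, h]
    ring
  | mul x y hx hy =>
    simp only [map_mul, σ_mul, hx, hy]
    ring

lemma expDet_endo (X Y U W : F₂) :
    expDet (endo X Y U) (endo X Y W) = expDet U W * expDet X Y := by
  simp only [expDet, σ_endo]
  ring

lemma expDet_xa_xb : expDet xa xb = 1 := by simp [expDet, σ_xa, σ_xb]

end Exponents

section Automorphism

variable {Q K₀ K Γ₀ Γ₁ : Type*} [Group Q] [Field K₀] [Field K]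
  [LinearOrderedCommGroupWithZero Γ₀] [LinearOrderedCommGroupWithZero Γ₁]
  {π : F₂ →* Q} {v₀ : Valuation K₀ Γ₀} {v : Valuation K Γ₁}

lemma SignEq.trace_le_one {M : SL(2, K)} (h : SignEq M 1) : v (mat M).trace ≤ 1 :=
  h.valuation_trace v ▸ (Bounded.of_one_le le_rfl).trace

lemma PingPong.trace_le_one_of_pow {Γ : Type*} [Group Γ] {V : Subgroup Γ} {E : Bool → Subgroup Γ}
    {β : Γ} {ρ : Γ →* SL(2, K)} {τ : Kˣ} {P P' : Bool → SL(2, K)} (H : PingPong v ρ V E β τ P P')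
    {g : Γ} {n : ℕ} (hn : 0 < n) (h : v (mat (ρ (g ^ n))).trace ≤ 1) :
    v (mat (ρ g)).trace ≤ 1 := by
  rcases H.exists_conj_mem_or_isReduced g with ⟨x, hx⟩ | ⟨x, δ, k, hr, hk⟩
  · exact trace_map_conj ρ x g ▸ (H.bounded_vertex _ hx).trace
  · have hpos : 0 < n * k := Nat.mul_pos hn hk
    have htrace := H.trace_eq (hr.pow n) hpos
    rw [conj_pow, trace_map_conj] at htrace
    exact absurd h (htrace ▸ (one_lt_pow₀ H.one_lt hpos.ne').not_ge)

lemma map_endo {X Y : F₂} {φ : MulAut Q} (hX : π X = φ (π xa)) (hY : π Y = φ (π xb)) (w : F₂) :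
    π (endo X Y w) = φ (π w) :=
  DFunLike.congr_fun (monoidHom_ext (f := π.comp (endo X Y)) (g := φ.toMonoidHom.comp π)
    (by simpa using hX) (by simpa using hY)) w

namespace TorusRep

/-- The trace of the image of `[a, b]` under every automorphism of `Q` lies in the ground field and
is integral there. -/
def IntegralTrace (H : TorusRep π v₀ v) : Prop :=
  ∀ (φ : MulAut Q) (w : F₂), π w = φ (π xc) → ∃ x, v₀ x ≤ 1 ∧ (mat (H.ρ w)).trace = H.f x

lemma integralTrace_of_pow (H : TorusRep π v₀ v) {n : ℕ} (hn : 0 < n) (hc : π xc ^ n = 1) :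
    H.IntegralTrace := by
  intro φ w hw
  have hwn : π (w ^ n) = 1 := by rw [map_pow, hw, ← map_pow, hc, map_one]
  obtain ⟨y, hy⟩ := H.pingPong.exists_conj_mem
    (H.pingPong.trace_le_one_of_pow hn (H.sign _ hwn).trace_le_one)
  obtain ⟨u, hu⟩ := (mem_vertex_iff true).1 hy
  have hun : π (incl true (u ^ n)) = 1 := by
    rw [map_pow, map_pow, ← hu, ← map_pow, conj_pow, map_mul, map_mul, hwn, mul_one, ← map_mul,
      mul_inv_cancel, map_one]
  have hle : v₀ (mat (vertexRep H.s H.B true u)).trace ≤ 1 :=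
    (H.pong true).pingPong.trace_le_one_of_pow hn ((H.pong true).sign _ hun).trace_le_one
  have htrace := (H.signEq_vertexRep hu).trace
  rw [framed_true, trace_map_conj, trace_scal, ← map_neg] at htrace
  rcases htrace with h | h
  · exact ⟨_, hle, h⟩
  · exact ⟨_, by rwa [Valuation.map_neg], h⟩

lemma exists_eq_conj_zpow (H : TorusRep π v₀ v) {w : F₂} {x : K₀} (hx : v₀ x ≤ 1)
    (hw : (mat (H.ρ w)).trace = H.f x) : ∃ g, ∃ j : ℤ, π w = π (g * xc ^ j * g⁻¹) := by
  obtain ⟨y, hy⟩ := H.pingPong.exists_conj_mem (hw ▸ valuation_map_le_one H.val_map x)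
  obtain ⟨g, -, j, hg⟩ :=
    H.exists_eq_conj_zpow_of_trace_le_one hy ((trace_map_conj H.ρ y w).trans hw) hx
  refine ⟨y⁻¹ * g, j, ?_⟩
  have hsplit : w = y⁻¹ * (y * w * y⁻¹) * y := by group
  rw [hsplit, map_mul, map_mul π y⁻¹, hg]
  simp only [map_mul, map_inv, map_zpow]
  group

lemma isUnit_expDet (H : TorusRep π v₀ v) {X Y : F₂} {φ : MulAut Q} (hX : π X = φ (π xa))
    (hY : π Y = φ (π xb)) : IsUnit (expDet X Y) := by
  obtain ⟨X', hX'⟩ := H.surj (φ⁻¹ (π xa))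
  obtain ⟨Y', hY'⟩ := H.surj (φ⁻¹ (π xb))
  have hX'' : π (endo X Y X') = π xa := by rw [map_endo hX hY, hX', MulAut.apply_inv_self]
  have hY'' : π (endo X Y Y') = π xb := by rw [map_endo hX hY, hY', MulAut.apply_inv_self]
  refine IsUnit.of_mul_eq_one_right (expDet X' Y') ?_
  rw [← expDet_endo, ← expDet_xa_xb]
  simp only [expDet, H.σ_congr hX'', H.σ_congr hY'']

lemma commPair (H : TorusRep π v₀ v) (hI : H.IntegralTrace) {φ : MulAut Q} {X Y : F₂}
    (hX : π X = φ (π xa)) (hY : π Y = φ (π xb)) : CommPair π X Y where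
  det := H.isUnit_expDet hX hY
  exists_isConj := by
    have hc : π (comm X Y) = φ (π xc) := by
      rw [← map_endo hX hY]
      simp [xc, comm]
    obtain ⟨x, hx, hx'⟩ := hI φ _ hc
    obtain ⟨g, j, hg⟩ := H.exists_eq_conj_zpow hx hx'
    rw [map_mul, map_mul, map_inv, map_zpow] at hg
    refine ⟨j, fun hj => H.ne_one ?_, isConj_iff.2 ⟨π g, hg.symm⟩⟩
    rw [hc, hj, mul_one, mul_inv_cancel] at hg
    simpa using hg

theorem exists_tame (H : TorusRep π v₀ v) (hI : H.IntegralTrace) (φ : MulAut Q) :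
    ∃ θ ∈ tame, ∀ w, φ (π w) = π (θ w) := by
  obtain ⟨X, hX⟩ := H.surj (φ (π xa))
  obtain ⟨Y, hY⟩ := H.surj (φ (π xb))
  obtain ⟨θ, hθ, hθX, hθY⟩ := H.tamePair (H.commPair hI hX hY)
  refine ⟨θ, hθ, fun w => ?_⟩
  exact DFunLike.congr_fun (monoidHom_ext (f := φ.toMonoidHom.comp π) (g := π.comp θ.toMonoidHom)
    (by simpa using (hθX.trans hX).symm) (by simpa using (hθY.trans hY).symm)) w

lemma integralTrace_id {K₀ K : Type} [Field K₀] [Field K] {v₀ : Valuation K₀ Γ₀}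
    {v : Valuation K Γ₁} (H : TorusRep (MonoidHom.id F₂) v₀ v) (i : ℂ →+* K₀)
    (hi : ∀ c, v₀ (i c) ≤ 1) {κ : ℂ} (hκ : (mat (H.ρ xc)).trace = H.f (i κ)) :
    H.IntegralTrace := by
  rintro φ w (rfl : w = φ xc)
  obtain ⟨γ, hγ⟩ := TracePoly.exists_trace_map_xc_eq φ
  refine ⟨i (γ * (κ - 2) + 2), hi _, ?_⟩
  rw [hγ K (H.f.comp i) H.ρ, hκ]
  simp only [RingHom.comp_apply, map_add, map_mul, map_sub, map_ofNat]

end TorusRep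

end Automorphism

/-! ### Tame automorphisms acting trivially on the abelianization -/

section PositiveForm

variable {Γ : Type*} [Group Γ] {d i L R x y g p : Γ}

/-- Relations of `GL(2, ℤ)` between the coordinate exchange `d`, the reflection `i` and the two
elementary matrices `L` and `R`. -/
structure GLRelations (d i L R : Γ) : Prop where
  d_inv : d⁻¹ = d
  i_inv : i⁻¹ = i
  d_conj_L : d * L * d⁻¹ = R
  i_conj_L : i * L * i⁻¹ = L⁻¹
  i_conj_R : i * R * i⁻¹ = R⁻¹
  L_inv_mul_R : L⁻¹ * R = d * i * L

/-- The elements `x * p * y` with `p` a positive word in `L` and `R`, and `x`, `y` in the finite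
group generated by `d` and `i`. -/
def positiveForms (d i L R : Γ) : Set Γ :=
  {g | ∃ x ∈ Subgroup.closure {d, i}, ∃ p ∈ Submonoid.closure {L, R},
    ∃ y ∈ Subgroup.closure {d, i}, g = x * p * y}

lemma left_mem_closure_pair (x y : Γ) : x ∈ Subgroup.closure {x, y} :=
  Subgroup.subset_closure (by simp)

lemma right_mem_closure_pair (x y : Γ) : y ∈ Subgroup.closure {x, y} :=
  Subgroup.subset_closure (by simp)

lemma mem_positiveForms_of_mem_closure (hp : p ∈ Submonoid.closure {L, R}) :
    p ∈ positiveForms d i L R := ⟨1, one_mem _, p, hp, 1, one_mem _, by simp⟩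

lemma mul_mul_mem_positiveForms (hx : x ∈ Subgroup.closure {d, i})
    (hy : y ∈ Subgroup.closure {d, i}) (hg : g ∈ positiveForms d i L R) :
    x * g * y ∈ positiveForms d i L R := by
  obtain ⟨x', hx', p, hp, y', hy', rfl⟩ := hg
  exact ⟨x * x', mul_mem hx hx', p, hp, y' * y, mul_mem hy' hy, by simp only [mul_assoc]⟩

lemma mul_mem_positiveForms (hx : x ∈ Subgroup.closure {d, i}) (hg : g ∈ positiveForms d i L R) :
    x * g ∈ positiveForms d i L R := by
  simpa using mul_mul_mem_positiveForms hx (one_mem _) hg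

namespace GLRelations

lemma d_conj_R (H : GLRelations d i L R) : d * R * d⁻¹ = L := by
  rw [← H.d_conj_L]
  nth_rw 1 [← H.d_inv]
  nth_rw 3 [← H.d_inv]
  group

lemma conj_mem_letters (H : GLRelations d i L R) (hx : x ∈ Subgroup.closure {d, i})
    (hy : y ∈ ({L, R, L⁻¹, R⁻¹} : Set Γ)) : x * y * x⁻¹ ∈ ({L, R, L⁻¹, R⁻¹} : Set Γ) := by
  have hgen : ∀ z ∈ ({d, i} : Set Γ), ∀ y ∈ ({L, R, L⁻¹, R⁻¹} : Set Γ),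
      z * y * z⁻¹ ∈ ({L, R, L⁻¹, R⁻¹} : Set Γ) := by
    rintro z (rfl | rfl) y (rfl | rfl | rfl | rfl) <;>
      simp only [← conj_inv, H.d_conj_L, H.d_conj_R, H.i_conj_L, H.i_conj_R, inv_inv] <;> simp
  have hinv : ∀ z ∈ ({d, i} : Set Γ), z⁻¹ = z := by
    rintro z (rfl | rfl)
    exacts [H.d_inv, H.i_inv]
  have hsplit (z w : Γ) : z * w * y * (z * w)⁻¹ = z * (w * y * w⁻¹) * z⁻¹ := by group
  induction hx using Subgroup.closure_induction_left with
  | one => simpa using hy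
  | mul_left z hz w _ ih => exact hsplit z w ▸ hgen z hz _ ih
  | inv_mul_cancel z hz w _ ih =>
    rw [hinv z hz, hsplit]
    exact hgen z hz _ ih

lemma conj_d_mem_closure (H : GLRelations d i L R) (hp : p ∈ Submonoid.closure {L, R}) :
    d * p * d⁻¹ ∈ Submonoid.closure {L, R} := by
  have hle : Submonoid.closure {L, R} ≤
      (Submonoid.closure {L, R}).comap (MulAut.conj d).toMonoidHom := by
    rw [Submonoid.closure_le]
    rintro y (rfl | rfl)
    · exact Submonoid.subset_closure (Or.inr H.d_conj_L)
    · exact Submonoid.subset_closure (Or.inl H.d_conj_R)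
  exact hle hp

lemma L_inv_mul_mem_positiveForms (H : GLRelations d i L R) (hp : p ∈ Submonoid.closure {L, R}) :
    L⁻¹ * p ∈ positiveForms d i L R := by
  have hL : L ∈ Submonoid.closure {L, R} := Submonoid.subset_closure (Or.inl rfl)
  have hd := left_mem_closure_pair d i
  have hi := right_mem_closure_pair d i
  induction hp using Submonoid.closure_induction_left with
  | one =>
    rw [mul_one, ← H.i_conj_L]
    exact mul_mul_mem_positiveForms hi (inv_mem hi) (mem_positiveForms_of_mem_closure hL)
  | mul_left z hz p hp _ =>
    rcases hz with rfl | rfl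
    · rw [inv_mul_cancel_left]
      exact mem_positiveForms_of_mem_closure hp
    · rw [← mul_assoc, H.L_inv_mul_R, mul_assoc]
      exact mul_mem_positiveForms (mul_mem hd hi)
        (mem_positiveForms_of_mem_closure (mul_mem hL hp))

lemma letter_mul_mem_positiveForms (H : GLRelations d i L R)
    (hy : y ∈ ({L, R, L⁻¹, R⁻¹} : Set Γ)) (hp : p ∈ Submonoid.closure {L, R}) :
    y * p ∈ positiveForms d i L R := by
  rcases hy with rfl | rfl | rfl | rfl
  · exact mem_positiveForms_of_mem_closure
      (mul_mem (Submonoid.subset_closure (Or.inl rfl)) hp)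
  · exact mem_positiveForms_of_mem_closure
      (mul_mem (Submonoid.subset_closure (Or.inr rfl)) hp)
  · exact H.L_inv_mul_mem_positiveForms hp
  · have hd := left_mem_closure_pair d i
    have hconj : R⁻¹ * p = d⁻¹ * (L⁻¹ * (d * p * d⁻¹)) * d := by
      rw [← H.d_conj_R]
      group
    exact hconj ▸ mul_mul_mem_positiveForms (inv_mem hd) hd
      (H.L_inv_mul_mem_positiveForms (H.conj_d_mem_closure hp))

lemma letter_mul_positiveForms (H : GLRelations d i L R)
    (hy : y ∈ ({L, R, L⁻¹, R⁻¹} : Set Γ)) (hg : g ∈ positiveForms d i L R) :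
    y * g ∈ positiveForms d i L R := by
  obtain ⟨x, hx, p, hp, z, hz, rfl⟩ := hg
  have hsplit : y * (x * p * z) = x * (x⁻¹ * y * x⁻¹⁻¹ * p) * z := by group
  exact hsplit ▸ mul_mul_mem_positiveForms hx hz
    (H.letter_mul_mem_positiveForms (H.conj_mem_letters (inv_mem hx) hy) hp)

theorem mem_positiveForms (H : GLRelations d i L R) (hg : g ∈ Subgroup.closure {d, i, L}) :
    g ∈ positiveForms d i L R := by
  have hd := left_mem_closure_pair d i
  have hi := right_mem_closure_pair d i
  induction hg using Subgroup.closure_induction_left with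
  | one => exact mem_positiveForms_of_mem_closure (one_mem _)
  | mul_left x hx g _ ih =>
    rcases hx with rfl | rfl | rfl
    · exact mul_mem_positiveForms hd ih
    · exact mul_mem_positiveForms hi ih
    · exact H.letter_mul_positiveForms (by simp) ih
  | inv_mul_cancel x hx g _ ih =>
    rcases hx with rfl | rfl | rfl
    · exact mul_mem_positiveForms (inv_mem hd) ih
    · exact mul_mem_positiveForms (inv_mem hi) ih
    · exact H.letter_mul_positiveForms (by simp) ih

end GLRelations

end PositiveForm

section ExpHom

variable {Q : Type*} [Group Q] {π : F₂ →* Q}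

/-- The matrices of the automorphisms of `Q` in the exponent sums of `a` and `b`, which are assumed
to be well defined on `Q`. -/
noncomputable def expHom (hπ : Function.Surjective π)
    (hσ : ∀ x y, π x = π y → ∀ i, σ i x = σ i y) : MulAut Q →* Matrix (Fin 2) (Fin 2) ℤ where
  toFun φ := Matrix.of fun i j => σ i (Function.surjInv hπ (φ (π (FreeGroup.of j))))
  map_one' := by
    ext i j
    refine (hσ _ _ (Function.surjInv_eq hπ (π (FreeGroup.of j))) i).trans ?_
    fin_cases i <;> fin_cases j <;> simp [σ_xa, σ_xb]
  map_mul' φ ψ := by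
    ext i j
    simp only [of_apply, mul_apply, Fin.sum_univ_two]
    set X := Function.surjInv hπ (φ (π (FreeGroup.of 0)))
    set Y := Function.surjInv hπ (φ (π (FreeGroup.of 1)))
    set w := Function.surjInv hπ (ψ (π (FreeGroup.of j))) with hw
    have h : π (endo X Y w) = φ (ψ (π (FreeGroup.of j))) := by
      rw [map_endo (Function.surjInv_eq hπ _) (Function.surjInv_eq hπ _), hw,
        Function.surjInv_eq hπ]
    rw [hσ _ (endo X Y w) (by rw [Function.surjInv_eq hπ, h, MulAut.mul_apply]), σ_endo]
    ring

variable {hπ : Function.Surjective π} {hσ : ∀ x y, π x = π y → ∀ i, σ i x = σ i y}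

lemma expHom_apply {φ : MulAut Q} {w : F₂} {j : Fin 2} (h : φ (π (FreeGroup.of j)) = π w)
    (i : Fin 2) : expHom hπ hσ φ i j = σ i w :=
  hσ _ _ ((Function.surjInv_eq hπ _).trans h) i

/-- The action of the automorphisms of the free group on exponent sums. -/
noncomputable def expMat : MulAut F₂ →* Matrix (Fin 2) (Fin 2) ℤ :=
  expHom (π := MonoidHom.id _) Function.surjective_id (fun _ _ h i => congrArg (σ i) h)

lemma expMat_apply (θ : MulAut F₂) (i j : Fin 2) : expMat θ i j = σ i (θ (FreeGroup.of j)) :=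
  expHom_apply (by rfl) i

lemma expMat_eq (θ : MulAut F₂) :
    expMat θ = !![σ 0 (θ xa), σ 0 (θ xb); σ 1 (θ xa), σ 1 (θ xb)] := by
  ext i j
  rw [expMat_apply]
  fin_cases i <;> fin_cases j <;> rfl

lemma expHom_eq_expMat {φ : MulAut Q} {θ : MulAut F₂} (h : ∀ w, φ (π w) = π (θ w)) :
    expHom hπ hσ φ = expMat θ := by
  ext i j
  rw [expMat_apply, expHom_apply (h _)]

lemma expHom_conj (hπ : Function.Surjective π) (hσ : ∀ x y, π x = π y → ∀ i, σ i x = σ i y)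
    (q : Q) : expHom hπ hσ (MulAut.conj q) = 1 := by
  obtain ⟨g, rfl⟩ := hπ q
  rw [expHom_eq_expMat (θ := MulAut.conj g) (fun w => by simp), expMat_eq, one_fin_two]
  simp [σ_mul, σ_inv, σ_xa, σ_xb]

lemma expMat_swapAut : expMat swapAut = !![0, 1; 1, 0] := by
  rw [expMat_eq]
  simp [σ_xa, σ_xb]

lemma expMat_invAut : expMat invAut = !![-1, 0; 0, 1] := by
  rw [expMat_eq]
  simp [σ_inv, σ_xa, σ_xb]

lemma expMat_transvAut : expMat transvAut = !![1, 0; 1, 1] := by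
  rw [expMat_eq]
  simp [σ_mul, σ_xa, σ_xb]

@[simp]
lemma swapAut_inv : swapAut⁻¹ = swapAut := rfl

@[simp]
lemma invAut_inv : invAut⁻¹ = invAut := rfl

lemma mulAut_ext {θ η : MulAut F₂} (ha : θ xa = η xa) (hb : θ xb = η xb) : θ = η :=
  MulEquiv.toMonoidHom_injective (monoidHom_ext ha hb)

end ExpHom

section SignedPerm

/-- The automorphism `θ` permutes the generators up to inversion. -/
def SignedPerm (θ : MulAut F₂) : Prop :=
  ∃ k l : ℤˣ, θ xa = xa ^ (k : ℤ) ∧ θ xb = xb ^ (l : ℤ) ∨ θ xa = xb ^ (k : ℤ) ∧ θ xb = xa ^ (l : ℤ)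

variable {θ : MulAut F₂}

namespace SignedPerm

lemma one : SignedPerm 1 := ⟨1, 1, Or.inl (by simp)⟩

lemma swapAut_mul (h : SignedPerm θ) : SignedPerm (swapAut * θ) := by
  obtain ⟨k, l, ⟨ha, hb⟩ | ⟨ha, hb⟩⟩ := h
  · exact ⟨k, l, Or.inr (by simp [ha, hb])⟩
  · exact ⟨k, l, Or.inl (by simp [ha, hb])⟩

lemma invAut_mul (h : SignedPerm θ) : SignedPerm (invAut * θ) := by
  obtain ⟨k, l, ⟨ha, hb⟩ | ⟨ha, hb⟩⟩ := h
  · exact ⟨-k, l, Or.inl (by simp [ha, hb])⟩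
  · exact ⟨k, -l, Or.inr (by simp [ha, hb])⟩

lemma of_mem_closure (hθ : θ ∈ Subgroup.closure {swapAut, invAut}) : SignedPerm θ := by
  induction hθ using Subgroup.closure_induction_left with
  | one => exact one
  | mul_left η hη θ _ ih =>
    rcases hη with rfl | rfl
    exacts [ih.swapAut_mul, ih.invAut_mul]
  | inv_mul_cancel η hη θ _ ih =>
    rcases hη with rfl | rfl
    exacts [ih.swapAut_mul, ih.invAut_mul]

lemma sum_expMat_le (h : SignedPerm θ) :
    expMat θ 0 0 + expMat θ 0 1 + (expMat θ 1 0 + expMat θ 1 1) ≤ 2 := by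
  have hle (u : ℤˣ) : (u : ℤ) ≤ 1 := by rcases Int.units_eq_one_or u with rfl | rfl <;> simp
  obtain ⟨k, l, ⟨ha, hb⟩ | ⟨ha, hb⟩⟩ := h <;>
  · have hk := hle k
    have hl := hle l
    rw [expMat_eq, ha, hb]
    simp only [σ_zpow, σ_xa, σ_xb, of_apply, cons_val_zero, cons_val_one]
    simp
    omega

lemma eq_one (h : SignedPerm θ) (hθ : expMat θ = 1) : θ = 1 := by
  have h00 : expMat θ 0 0 = 1 := by rw [hθ, one_apply_eq]
  have h11 : expMat θ 1 1 = 1 := by rw [hθ, one_apply_eq]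
  rw [expMat_apply] at h00 h11
  obtain ⟨k, l, ⟨ha, hb⟩ | ⟨ha, _⟩⟩ := h
  · have hk : (k : ℤ) = 1 := by simpa [ha, σ_zpow, σ_xa] using h00
    have hl : (l : ℤ) = 1 := by simpa [hb, σ_zpow, σ_xb] using h11
    exact mulAut_ext (by simp [ha, hk]) (by simp [hb, hl])
  · simp [ha, σ_zpow, σ_xb] at h00

end SignedPerm

end SignedPerm

section OutFree

/-- The outer class of an automorphism of the free group. -/
abbrev toOut : MulAut F₂ →* Out F₂ := QuotientGroup.mk' (innAut F₂)

lemma toOut_eq_one_iff {θ : MulAut F₂} : toOut θ = 1 ↔ θ ∈ innAut F₂ :=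
  QuotientGroup.eq_one_iff θ

lemma toOut_conj_mul (g : F₂) (θ : MulAut F₂) : toOut (MulAut.conj g * θ) = toOut θ := by
  rw [map_mul, toOut_eq_one_iff.2 ⟨g, rfl⟩, one_mul]

lemma glRelations_toOut : GLRelations (toOut swapAut) (toOut invAut) (toOut transvAut)
    (toOut (swapAut * transvAut * swapAut⁻¹)) where
  d_inv := by rw [← map_inv, swapAut_inv]
  i_inv := by rw [← map_inv, invAut_inv]
  d_conj_L := by simp only [map_mul, map_inv]
  i_conj_L := by
    have h : invAut * transvAut * invAut⁻¹ = MulAut.conj xb⁻¹ * transvAut⁻¹ := by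
      rw [eq_mul_inv_iff_mul_eq]
      exact mulAut_ext (by simp)
        (by simp)
    rw [← map_inv, ← map_mul, ← map_mul, h, toOut_conj_mul, map_inv]
  i_conj_R := by
    have h : invAut * (swapAut * transvAut * swapAut⁻¹) * invAut⁻¹ =
        (swapAut * transvAut * swapAut⁻¹)⁻¹ := by
      rw [eq_inv_iff_mul_eq_one]
      exact mulAut_ext
        (by simp)
        (by simp)
    rw [← map_inv, ← map_mul, ← map_mul, h, map_inv]
  L_inv_mul_R := by
    have h : transvAut⁻¹ * (swapAut * transvAut * swapAut⁻¹) =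
        MulAut.conj xb * (swapAut * invAut * transvAut) := by
      rw [inv_mul_eq_iff_eq_mul]
      exact mulAut_ext (by simp)
        (by simp [mul_assoc])
    rw [← map_inv, ← map_mul, h, toOut_conj_mul, map_mul, map_mul]

lemma toOut_mem_closure {θ : MulAut F₂} (hθ : θ ∈ tame) :
    toOut θ ∈ Subgroup.closure {toOut swapAut, toOut invAut, toOut transvAut} := by
  have hmap : toOut θ ∈ tame.map toOut := Subgroup.mem_map_of_mem _ hθ
  rw [tame, Subgroup.map_sup, MonoidHom.map_closure, QuotientGroup.map_mk'_self, bot_sup_eq] at hmap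
  simpa [Set.image_insert_eq] using hmap

/-- The action of outer automorphisms of the free group on exponent sums. -/
noncomputable def outExpMat : Out F₂ →* Matrix (Fin 2) (Fin 2) ℤ :=
  QuotientGroup.lift (innAut _) expMat (by
    rintro _ ⟨g, rfl⟩
    exact expHom_conj _ _ g)

lemma outExpMat_toOut (θ : MulAut F₂) : outExpMat (toOut θ) = expMat θ := rfl

lemma eq_one_or_three_le_sum {p : Out F₂} (hp : p ∈ Submonoid.closure
      {toOut transvAut, toOut (swapAut * transvAut * swapAut⁻¹)}) :
    p = 1 ∨ 3 ≤ outExpMat p 0 0 + outExpMat p 0 1 + (outExpMat p 1 0 + outExpMat p 1 1) := by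
  suffices h : (1 ≤ outExpMat p 0 0 + outExpMat p 0 1 ∧ 1 ≤ outExpMat p 1 0 + outExpMat p 1 1) ∧
      (p = 1 ∨ 3 ≤ outExpMat p 0 0 + outExpMat p 0 1 + (outExpMat p 1 0 + outExpMat p 1 1)) from
    h.2
  have hL : outExpMat (toOut transvAut) = !![1, 0; 1, 1] := expMat_transvAut
  have hR : outExpMat (toOut (swapAut * transvAut * swapAut⁻¹)) = !![1, 1; 0, 1] := by
    rw [outExpMat_toOut, swapAut_inv, map_mul, map_mul, expMat_swapAut,
      expMat_transvAut, mul_fin_two, mul_fin_two]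
    simp
  induction hp using Submonoid.closure_induction_left with
  | one => simp
  | mul_left x hx p _ ih =>
    rcases hx with rfl | rfl
    · rw [map_mul, hL]
      simp only [mul_apply, Fin.sum_univ_two]
      simp
      omega
    · rw [map_mul, hR]
      simp only [mul_apply, Fin.sum_univ_two]
      simp
      omega

lemma exists_toOut_eq_of_mem_closure {z : Out F₂}
    (hz : z ∈ Subgroup.closure {toOut swapAut, toOut invAut}) :
    ∃ η ∈ Subgroup.closure {swapAut, invAut}, toOut η = z := by
  rwa [← Set.image_pair, ← MonoidHom.map_closure] at hz

theorem mem_innAut_of_expMat_eq_one {θ : MulAut F₂} (hθ : θ ∈ tame) (h : expMat θ = 1) :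
    θ ∈ innAut F₂ := by
  obtain ⟨x, hx, p, hp, y, hy, hxy⟩ := glRelations_toOut.mem_positiveForms (toOut_mem_closure hθ)
  obtain ⟨ξ, hξ, rfl⟩ := exists_toOut_eq_of_mem_closure hx
  obtain ⟨η, hη, rfl⟩ := exists_toOut_eq_of_mem_closure hy
  have hp' : outExpMat p = expMat (ξ⁻¹ * η⁻¹) := by
    have hsplit : p = toOut (ξ⁻¹ * θ * η⁻¹) := by
      rw [map_mul, map_mul, hxy, map_inv, map_inv]
      group
    rw [hsplit, outExpMat_toOut, map_mul, map_mul, h, mul_one, map_mul]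
  have hp1 : p = 1 := by
    refine (eq_one_or_three_le_sum hp).resolve_right fun h3 => ?_
    have hle := (SignedPerm.of_mem_closure (mul_mem (inv_mem hξ) (inv_mem hη))).sum_expMat_le
    rw [← hp'] at hle
    omega
  rw [hp1, mul_one, ← map_mul] at hxy
  have hξη : ξ * η = 1 := (SignedPerm.of_mem_closure (mul_mem hξ hη)).eq_one (by
    rw [← outExpMat_toOut, ← hxy, outExpMat_toOut, h])
  rwa [hξη, map_one, toOut_eq_one_iff] at hxy

end OutFree

/-! ### The outer automorphism group -/

section RealizedMatrices

lemma exists_tame_of_det_eq_one (g : SL(2, ℤ)) : ∃ θ ∈ tame, expMat θ = g.1 := by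
  let E : MulAut F₂ →* GL (Fin 2) ℤ := expMat.toHomUnits
  have hclosure : Subgroup.closure {ModularGroup.S, ModularGroup.T} ≤
      (tame.map E).comap Matrix.SpecialLinearGroup.toGL := by
    rw [Subgroup.closure_le]
    rintro x (rfl | rfl)
    · refine ⟨invAut * swapAut, mul_mem invAut_mem_tame swapAut_mem_tame, Units.ext ?_⟩
      change expMat _ = _
      rw [map_mul, expMat_invAut, expMat_swapAut, mul_fin_two]
      simp [ModularGroup.S, Matrix.SpecialLinearGroup.toGL]
    · refine ⟨swapAut * transvAut * swapAut,
        mul_mem (mul_mem swapAut_mem_tame transvAut_mem_tame) swapAut_mem_tame, Units.ext ?_⟩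
      change expMat _ = _
      rw [map_mul, map_mul, expMat_transvAut, expMat_swapAut, mul_fin_two, mul_fin_two]
      simp [ModularGroup.T, Matrix.SpecialLinearGroup.toGL]
  rw [SpecialLinearGroup.SL2Z_generators] at hclosure
  obtain ⟨θ, hθ, h⟩ := hclosure (Subgroup.mem_top g)
  exact ⟨θ, hθ, congrArg Units.val h⟩

lemma exists_tame_of_isUnit_det {M : Matrix (Fin 2) (Fin 2) ℤ} (h : IsUnit M.det) :
    ∃ θ ∈ tame, expMat θ = M := by
  rcases Int.isUnit_iff.1 h with h | h
  · exact exists_tame_of_det_eq_one ⟨M, h⟩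
  · obtain ⟨θ, hθ, h1⟩ := exists_tame_of_det_eq_one
      ⟨M * !![-1, 0; 0, 1], by rw [det_mul, h, det_fin_two_of]; norm_num⟩
    refine ⟨θ * invAut, mul_mem hθ invAut_mem_tame, ?_⟩
    rw [map_mul, h1, expMat_invAut, mul_assoc, mul_fin_two]
    simp [← one_fin_two]

end RealizedMatrices

/-- The automorphisms of the free group sending `[a, b]` to a conjugate of `[a, b]` or of its
inverse. -/
def commutatorStabilizer : Subgroup (MulAut F₂) where
  carrier := {θ | ∃ g, ∃ k : ℤˣ, θ xc = g * xc ^ (k : ℤ) * g⁻¹}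
  one_mem' := ⟨1, 1, by simp⟩
  mul_mem' := by
    rintro θ η ⟨g, k, hg⟩ ⟨h, l, hh⟩
    refine ⟨θ h * g, k * l, ?_⟩
    rw [MulAut.mul_apply, hh, map_mul, map_mul, map_inv, map_zpow, hg, conj_zpow, ← _root_.zpow_mul,
      Units.val_mul]
    group
  inv_mem' := by
    rintro θ ⟨g, k, hg⟩
    refine ⟨θ⁻¹ g⁻¹, k, θ.injective ?_⟩
    simp only [map_mul, map_inv, map_zpow, MulAut.apply_inv_self, hg, conj_zpow,
      ← _root_.zpow_mul, ← Units.val_mul, Int.units_mul_self, Units.val_one, zpow_one]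
    group

lemma tame_le_commutatorStabilizer : tame ≤ commutatorStabilizer := by
  refine sup_le ?_ ((Subgroup.closure_le _).2 ?_)
  · rintro _ ⟨g, rfl⟩
    exact ⟨g, 1, by simp⟩
  · rintro η (rfl | rfl | rfl)
    · exact ⟨1, -1, by simp [xc, mul_assoc]⟩
    · exact ⟨xa, -1, by simp [xc, mul_assoc]⟩
    · exact ⟨xb⁻¹, 1, by simp [xc, mul_assoc]⟩

section Quotient

variable {Q : Type*} [Group Q] {π : F₂ →* Q} {n : ℕ} {θ : MulAut F₂}

lemma σ_eq_zero_of_mem_ker (hker : π.ker = Subgroup.normalClosure {xc ^ n}) :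
    ∀ e ∈ π.ker, ∀ l, σ l e = 0 := by
  intro e he l
  have hle : π.ker ≤ (expSum l).ker := by
    rw [hker]
    refine Subgroup.normalClosure_le_normal (Set.singleton_subset_iff.2 ?_)
    change σ l (xc ^ n) = 0
    rw [← zpow_natCast, σ_zpow, σ_xc, mul_zero]
  exact hle he

lemma map_xc_pow_eq_one (hker : π.ker = Subgroup.normalClosure {xc ^ n}) : π xc ^ n = 1 := by
  rw [← map_pow, ← MonoidHom.mem_ker, hker]
  exact Subgroup.subset_normalClosure rfl

lemma map_eq_one_of_mem_tame (hker : π.ker = Subgroup.normalClosure {xc ^ n}) (hθ : θ ∈ tame)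
    {w : F₂} (hw : π w = 1) : π (θ w) = 1 := by
  have hle : π.ker ≤ (π.comp θ.toMonoidHom).ker := by
    conv_lhs => rw [hker]
    refine Subgroup.normalClosure_le_normal (Set.singleton_subset_iff.2 ?_)
    obtain ⟨g, k, hg⟩ := tame_le_commutatorStabilizer hθ
    have hcomm : (g * xc ^ (k : ℤ) * g⁻¹) ^ n = g * (xc ^ n) ^ (k : ℤ) * g⁻¹ := by
      rw [conj_pow, ← zpow_natCast, ← zpow_natCast, zpow_comm]
    change π (θ (xc ^ n)) = 1
    rw [map_pow, hg, hcomm, map_mul, map_mul, map_zpow, map_pow,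
      map_xc_pow_eq_one hker, map_inv]
    group
  exact hle hw

theorem exists_induced (hπ : Function.Surjective π)
    (hker : π.ker = Subgroup.normalClosure {xc ^ n}) (hθ : θ ∈ tame) :
    ∃ φ : MulAut Q, ∀ w, φ (π w) = π (θ w) := by
  have hF (η : MulAut F₂) (hη : η ∈ tame) : ∃ F : Q →* Q, ∀ w, F (π w) = π (η w) :=
    ⟨π.liftOfSurjective hπ ⟨π.comp η.toMonoidHom, fun _ => map_eq_one_of_mem_tame hker hη⟩,
      MonoidHom.liftOfRightInverse_comp_apply _ _ _ _⟩
  obtain ⟨F, hF₁⟩ := hF θ hθ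
  obtain ⟨F', hF₂⟩ := hF θ⁻¹ (inv_mem hθ)
  refine ⟨MonoidHom.toMulEquiv F F' ?_ ?_, hF₁⟩ <;>
  · ext q
    obtain ⟨w, rfl⟩ := hπ q
    simp [hF₁, hF₂]

lemma expHom_eq_one_iff_mem_innAut (hπ : Function.Surjective π)
    (hσ : ∀ x y, π x = π y → ∀ i, σ i x = σ i y)
    (htame : ∀ φ : MulAut Q, ∃ θ ∈ tame, ∀ w, φ (π w) = π (θ w)) {φ : MulAut Q} :
    expHom hπ hσ φ = 1 ↔ φ ∈ innAut Q := by
  constructor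
  · intro h
    obtain ⟨θ, hθ, hφ⟩ := htame φ
    rw [expHom_eq_expMat hφ] at h
    obtain ⟨g, rfl⟩ := mem_innAut_of_expMat_eq_one hθ h
    refine ⟨π g, MulEquiv.ext fun q => ?_⟩
    obtain ⟨w, rfl⟩ := hπ q
    simp [hφ]
  · rintro ⟨q, rfl⟩
    exact expHom_conj hπ hσ q

theorem nonempty_out_equiv (hπ : Function.Surjective π)
    (hker : π.ker = Subgroup.normalClosure {xc ^ n})
    (htame : ∀ φ : MulAut Q, ∃ θ ∈ tame, ∀ w, φ (π w) = π (θ w)) :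
    Nonempty (Out Q ≃* GL (Fin 2) ℤ) := by
  have hσ (x y : F₂) (h : π x = π y) := σ_eq_of_map_eq (σ_eq_zero_of_mem_ker hker) h
  let E : MulAut Q →* GL (Fin 2) ℤ := (expHom hπ hσ).toHomUnits
  have hsurj : Function.Surjective E := by
    intro M
    obtain ⟨θ, hθ, h⟩ := exists_tame_of_isUnit_det ((isUnit_iff_isUnit_det _).1 M.isUnit)
    obtain ⟨φ, hφ⟩ := exists_induced hπ hker hθ
    exact ⟨φ, Units.ext ((expHom_eq_expMat hφ).trans h)⟩
  have hE_ker : innAut Q = E.ker := by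
    ext φ
    rw [MonoidHom.mem_ker, Units.ext_iff, Units.val_one, ← expHom_eq_one_iff_mem_innAut hπ hσ htame]
    rfl
  exact ⟨(QuotientGroup.quotientMulEquivOfEq hE_ker).trans
    (QuotientGroup.quotientKerEquivOfSurjective E hsurj)⟩

end Quotient

/-! ### Powers of a matrix in terms of its eigenvalues -/

section RootOfUnity

lemma exists_orderOf_eq (m : ℕ) : ∃ ζ : ℂˣ, orderOf ζ = m := by
  rcases eq_or_ne m 0 with rfl | hm
  · refine ⟨Units.mk0 2 two_ne_zero, ?_⟩
    rw [← orderOf_units, Units.val_mk0, orderOf_eq_zero_iff]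
    intro h
    simpa using h.norm_eq_one
  · have h := Complex.isPrimitiveRoot_exp m hm
    exact ⟨Units.mk0 _ (h.ne_zero hm), by rw [← orderOf_units, Units.val_mk0, ← h.eq_orderOf]⟩

lemma exists_orderOf_sq_eq (n : ℕ) :
    ∃ ζ : ℂˣ, orderOf (ζ ^ 2) = n ∧ ∀ j : ℤ, ζ ^ (2 * j + 1) ≠ -1 := by
  rcases Nat.even_or_odd n with hn | hn
  · obtain ⟨ζ, hζ⟩ := exists_orderOf_eq (2 * n)
    refine ⟨ζ, ?_, fun j hj => ?_⟩
    · rw [orderOf_pow_of_dvd two_ne_zero (hζ ▸ dvd_mul_right 2 n), hζ,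
        Nat.mul_div_cancel_left n two_pos]
    · have hdvd : ((2 * n : ℕ) : ℤ) ∣ (2 * j + 1) * 2 := by
        rw [← hζ, orderOf_dvd_iff_zpow_eq_one, _root_.zpow_mul, hj]
        norm_num
      obtain ⟨k, rfl⟩ := hn
      obtain ⟨l, hl⟩ := hdvd
      have hodd : 2 * j + 1 = 2 * (k * l) := by
        push_cast at hl
        linarith
      omega
  · obtain ⟨ζ, hζ⟩ := exists_orderOf_eq n
    refine ⟨ζ, ?_, fun j hj => ?_⟩
    · rw [Nat.Coprime.orderOf_pow (hζ ▸ Nat.coprime_two_right.2 hn), hζ]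
    · have hone : (-1 : ℂˣ) ^ n = 1 := by
        rw [← hj, ← zpow_natCast, zpow_comm, zpow_natCast, ← hζ, pow_orderOf_eq_one,
          _root_.one_zpow]
      rw [hn.neg_one_pow] at hone
      norm_num [Units.ext_iff] at hone

end RootOfUnity

section Chebyshev

variable {k : Type*} [Field k] {ζ : kˣ}

/-- The coefficient of `M` in the power `M ^ j` of a matrix `M` with eigenvalues `ζ` and `ζ⁻¹`,
a Chebyshev polynomial of the second kind in the trace. -/
def cheb (ζ : kˣ) (j : ℤ) : k := ((ζ : k) ^ j - (ζ : k) ^ (-j)) / (ζ - (ζ : k)⁻¹)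

lemma sub_inv_ne_zero (h1 : ζ ^ 2 ≠ 1) : (ζ : k) - (ζ : k)⁻¹ ≠ 0 := by
  intro h
  apply h1
  rw [Units.ext_iff, Units.val_pow_eq_pow_val, Units.val_one, sq]
  nth_rw 1 [sub_eq_zero.1 h]
  exact inv_mul_cancel₀ ζ.ne_zero

lemma cheb_zero : cheb ζ 0 = 0 := by simp [cheb]

lemma cheb_neg (j : ℤ) : cheb ζ (-j) = -cheb ζ j := by
  simp only [cheb, neg_neg]
  ring

lemma cheb_one (h1 : ζ ^ 2 ≠ 1) : cheb ζ 1 = 1 := by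
  simp [cheb, div_self (sub_inv_ne_zero h1)]

lemma cheb_add_one (j : ℤ) :
    cheb ζ (j + 1) = (ζ + (ζ : k)⁻¹) * cheb ζ j - cheb ζ (j - 1) := by
  have h0 := ζ.ne_zero
  have hj := zpow_ne_zero j h0
  simp only [cheb, _root_.zpow_neg, zpow_add_one₀ h0, zpow_sub_one₀ h0]
  rw [← mul_div_assoc, ← sub_div]
  congr 1
  field_simp
  ring

lemma cheb_eq_zero_iff (h1 : ζ ^ 2 ≠ 1) {j : ℤ} : cheb ζ j = 0 ↔ (ζ ^ 2) ^ j = 1 := by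
  have hj := zpow_ne_zero j ζ.ne_zero
  rw [cheb, div_eq_zero_iff, or_iff_left (sub_inv_ne_zero h1), sub_eq_zero, _root_.zpow_neg,
    ← mul_eq_one_iff_eq_inv₀ hj, Units.ext_iff, ← zpow_natCast, zpow_comm]
  simp [sq]

lemma cheb_sub_mul (h1 : ζ ^ 2 ≠ 1) (j : ℤ) :
    (cheb ζ j - cheb ζ (j - 1)) * (1 + ζ) = (ζ : k) ^ j + (ζ : k) ^ (1 - j) := by
  have h0 := ζ.ne_zero
  have hj := zpow_ne_zero j h0
  rw [show (1 : ℤ) - j = -(j - 1) by ring]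
  simp only [cheb, _root_.zpow_neg, zpow_sub_one₀ h0]
  rw [← sub_div, div_mul_eq_mul_div, div_eq_iff (sub_inv_ne_zero h1)]
  field_simp
  ring

lemma cheb_sub_ne_zero (h1 : ζ ^ 2 ≠ 1) (hζ : ∀ j : ℤ, ζ ^ (2 * j + 1) ≠ -1) (j : ℤ) :
    cheb ζ j - cheb ζ (j - 1) ≠ 0 := by
  intro h
  have hsub := cheb_sub_mul h1 j
  rw [h, zero_mul] at hsub
  refine hζ (j - 1) (Units.ext ?_)
  rw [show 2 * (j - 1) + 1 = j - (1 - j) by ring, Units.val_zpow_eq_zpow_val,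
    zpow_sub₀ ζ.ne_zero, div_eq_iff (zpow_ne_zero _ ζ.ne_zero), Units.val_neg, Units.val_one]
  linear_combination -hsub

lemma zpow_eq_one_of_cheb_sub (h1 : ζ ^ 2 ≠ 1) {j : ℤ}
    (h : cheb ζ j - cheb ζ (j - 1) = 1 ∨ cheb ζ j - cheb ζ (j - 1) = -1) :
    (ζ ^ 2) ^ j = 1 ∨ (ζ ^ 2) ^ (j - 1) = 1 := by
  have h0 := ζ.ne_zero
  have hj := zpow_ne_zero j h0
  have hsub := cheb_sub_mul h1 j
  rw [zpow_sub₀ h0, zpow_one] at hsub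
  have hprod : (((ζ : k) ^ j) ^ 2 - 1) * (((ζ : k) ^ j) ^ 2 - ζ ^ 2) = 0 := by
    rcases h with h | h <;> rw [h] at hsub <;> field_simp at hsub
    · linear_combination (-((ζ : k) ^ j + 1) * ((ζ : k) ^ j + ζ)) * hsub
    · linear_combination (-((ζ : k) ^ j - 1) * ((ζ : k) ^ j - ζ)) * hsub
  have hval : (((ζ ^ 2) ^ j : kˣ) : k) = ((ζ : k) ^ j) ^ 2 := by
    rw [← zpow_natCast, zpow_comm]
    simp
  refine (mul_eq_zero.1 hprod).imp (fun h => ?_) fun h => ?_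
  · rw [Units.ext_iff, hval, Units.val_one, sub_eq_zero.1 h]
  · rw [_root_.zpow_sub_one, mul_inv_eq_one, Units.ext_iff, hval, sub_eq_zero.1 h,
      Units.val_pow_eq_pow_val]

variable {K : Type*} [Field K] {M : SL(2, K)} (i : k →+* K)

lemma mat_zpow (h1 : ζ ^ 2 ≠ 1) (hM : (mat M).trace = i (ζ + (ζ : k)⁻¹)) (j : ℤ) :
    mat (M ^ j) = i (cheb ζ j) • mat M - i (cheb ζ (j - 1)) • (1 : Matrix (Fin 2) (Fin 2) K) := by
  induction j using Int.induction_on with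
  | zero =>
    rw [zpow_zero, map_one, cheb_zero, zero_sub, cheb_neg, cheb_one h1]
    simp
  | succ n ih =>
    rw [_root_.zpow_add_one, map_mul, ih, sub_mul, smul_mul_assoc, mat_mul_self, hM, cheb_add_one,
      add_sub_cancel_right]
    simp only [map_sub, map_mul, smul_mul_assoc, one_mul]
    module
  | pred n ih =>
    have hrec : cheb ζ (-(n : ℤ) - 1 - 1) =
        (ζ + (ζ : k)⁻¹) * cheb ζ (-(n : ℤ) - 1) - cheb ζ (-n) := by
      have hadd := cheb_add_one (ζ := ζ) (-(n : ℤ) - 1)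
      rw [sub_add_cancel] at hadd
      rw [hadd]
      ring
    have hMM : mat M * mat M⁻¹ = 1 := by rw [← map_mul, mul_inv_cancel, map_one]
    rw [_root_.zpow_sub_one, map_mul, ih, sub_mul, smul_mul_assoc, smul_mul_assoc, one_mul, hMM,
      mat_inv_eq_trace_smul_sub, hM, hrec]
    simp only [map_sub, map_mul]
    module

lemma signEq_one_iff_mem_center {M : SL(2, K)} : SignEq M 1 ↔ M ∈ Subgroup.center SL(2, K) := by
  rw [Matrix.SpecialLinearGroup.mem_center_iff, Fintype.card_fin]
  constructor
  · rintro (rfl | rfl)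
    · exact ⟨1, one_pow 2, map_one _⟩
    · exact ⟨-1, by norm_num, by rw [map_neg, map_one]; rfl⟩
  · rintro ⟨r, hr, hM⟩
    refine (sq_eq_one_iff.1 hr).imp ?_ ?_ <;> rintro rfl <;> refine mat_injective ?_
    · exact hM.symm.trans (map_one _)
    · rw [mat_neg, map_one, ← map_one (scalar (Fin 2)), ← map_neg]
      exact hM.symm

lemma signEq_zpow_one (h1 : ζ ^ 2 ≠ 1) (hM : (mat M).trace = i (ζ + (ζ : k)⁻¹)) {j : ℤ}
    (hj : (ζ ^ 2) ^ j = 1) : SignEq (M ^ j) 1 := by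
  have hmat := mat_zpow i h1 hM j
  rw [(cheb_eq_zero_iff h1).2 hj, map_zero, zero_smul, zero_sub, ← neg_smul] at hmat
  rw [signEq_one_iff_mem_center, Matrix.SpecialLinearGroup.mem_center_iff]
  refine ⟨_, ?_, (smul_one_eq_diagonal _).symm.trans hmat.symm⟩
  have hdet := (M ^ j).det_coe
  change (mat (M ^ j)).det = 1 at hdet
  rwa [hmat, det_smul, det_one, mul_one] at hdet

end Chebyshev

/-! ### Construction of the representation -/

section ResiduallyGeneric

variable {k K₀ Γ₀ : Type*} [Field k] [Field K₀] [LinearOrderedCommGroupWithZero Γ₀]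

/-- The matrix `M` has eigenvalues `ζ` and `ζ⁻¹`, and its reduction modulo the maximal ideal of
`v₀` has a diagonal entry `1` and no zero off the diagonal. Then no power of `M` has an entry that
vanishes residually, unless the power is a scalar. -/
structure ResiduallyGeneric (v₀ : Valuation K₀ Γ₀) (i : k →+* K₀) (ζ : kˣ) (M : SL(2, K₀)) :
    Prop where
  trace_eq : (mat M).trace = i (ζ + (ζ : k)⁻¹)
  exists_diag : ∃ a, v₀ (mat M a a - 1) < 1
  offDiag : ∀ a b, a ≠ b → v₀ (mat M a b) = 1

lemma mat_inv_apply_self {R : Type*} [CommRing R] (M : SL(2, R)) {a b : Fin 2} (hab : a ≠ b) :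
    mat M⁻¹ a a = mat M b b := by
  rw [mat_inv]
  fin_cases a <;> fin_cases b <;> simp at hab ⊢

namespace ResiduallyGeneric

variable {v₀ : Valuation K₀ Γ₀} {i : k →+* K₀} {ζ : kˣ} {M : SL(2, K₀)} {a b : Fin 2}

lemma valuation_zpow_apply_self_of_lt (hM : ResiduallyGeneric v₀ i ζ M)
    (hval : ∀ c ≠ 0, v₀ (i c) = 1) (h1 : ζ ^ 2 ≠ 1) (hneg : ∀ j : ℤ, ζ ^ (2 * j + 1) ≠ -1)
    (ha : v₀ (mat M a a - 1) < 1) (j : ℤ) : v₀ (mat (M ^ j) a a) = 1 := by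
  have hunit := hval _ (cheb_sub_ne_zero h1 hneg j)
  have hsmall : v₀ (i (cheb ζ j) * (mat M a a - 1)) < 1 := by
    rw [map_mul]
    exact mul_lt_one_of_nonneg_of_lt_one_right (valuation_map_le_one hval _) zero_le ha
  have happly : mat (M ^ j) a a =
      i (cheb ζ j - cheb ζ (j - 1)) + i (cheb ζ j) * (mat M a a - 1) := by
    rw [mat_zpow i h1 hM.trace_eq, Matrix.sub_apply, Matrix.smul_apply, Matrix.smul_apply,
      one_apply_eq, smul_eq_mul, smul_eq_mul, map_sub]
    ring
  rw [happly, v₀.map_add_eq_of_lt_left (by rwa [hunit]), hunit]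

lemma valuation_zpow_apply_self (hM : ResiduallyGeneric v₀ i ζ M)
    (hval : ∀ c ≠ 0, v₀ (i c) = 1) (h1 : ζ ^ 2 ≠ 1) (hneg : ∀ j : ℤ, ζ ^ (2 * j + 1) ≠ -1)
    (j : ℤ) (b : Fin 2) : v₀ (mat (M ^ j) b b) = 1 := by
  obtain ⟨a, ha⟩ := hM.exists_diag
  have hv := hM.valuation_zpow_apply_self_of_lt hval h1 hneg ha
  rcases eq_or_ne a b with rfl | hab
  · exact hv j
  · rw [← mat_inv_apply_self _ hab, ← _root_.zpow_neg]
    exact hv (-j)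

lemma valuation_zpow_apply (hM : ResiduallyGeneric v₀ i ζ M)
    (hval : ∀ c ≠ 0, v₀ (i c) = 1) (h1 : ζ ^ 2 ≠ 1) {j : ℤ} (hj : (ζ ^ 2) ^ j ≠ 1)
    (hab : a ≠ b) : v₀ (mat (M ^ j) a b) = 1 := by
  rw [mat_zpow i h1 hM.trace_eq, Matrix.sub_apply, Matrix.smul_apply, Matrix.smul_apply,
    one_apply_ne hab, smul_zero, sub_zero, smul_eq_mul, map_mul, hM.offDiag a b hab, mul_one,
    hval _ fun h => hj ((cheb_eq_zero_iff h1).1 h)]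

lemma not_signEq_one (hM : ResiduallyGeneric v₀ i ζ M) : ¬ SignEq M 1 := by
  intro h
  have h01 := hM.offDiag 0 1 zero_ne_one
  rw [h.mat_apply_eq_zero.2 (by simp), map_zero] at h01
  exact zero_ne_one h01

lemma diagPong {Γ : Type*} [Group Γ] {ρ : Γ →* SL(2, K₀)} {E : Subgroup Γ} [E.Normal] {α β : Γ}
    {s : K₀ˣ} (hβ : ResiduallyGeneric v₀ i ζ (ρ β)) (hval : ∀ c ≠ 0, v₀ (i c) = 1)
    (h1 : ζ ^ 2 ≠ 1) (hneg : ∀ j : ℤ, ζ ^ (2 * j + 1) ≠ -1) (hs : 1 < v₀ s)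
    (hα : ρ α = diagSL s) (htop : Subgroup.closure {α, β} = ⊤) (hE : ∀ e ∈ E, SignEq (ρ e) 1)
    (hβE : ∀ j : ℤ, (ζ ^ 2) ^ j = 1 → β ^ j ∈ E) :
    DiagPong v₀ ρ (Subgroup.zpowers β ⊔ E) E α s := by
  have hpow : ∀ h ∈ Subgroup.zpowers β ⊔ E, ∃ j : ℤ,
      (h ∉ E → (ζ ^ 2) ^ j ≠ 1) ∧ SignEq (ρ h) (ρ β ^ j) := by
    intro h hh
    obtain ⟨_, ⟨j, rfl⟩, e, he, rfl⟩ := Subgroup.mem_sup_of_normal_right.1 hh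
    refine ⟨j, fun hj hz => hj (mul_mem (hβE j hz) he), ?_⟩
    simpa only [map_mul, map_zpow, mul_one] using (SignEq.refl (ρ β ^ j)).mul (hE e he)
  have hdiag : ∀ h ∈ Subgroup.zpowers β ⊔ E, ∀ a, v₀ (mat (ρ h) a a) = 1 := by
    intro h hh a
    obtain ⟨j, -, hj⟩ := hpow h hh
    rw [hj.valuation_mat_apply, hβ.valuation_zpow_apply_self hval h1 hneg]
  refine ⟨hs, inferInstance, le_sup_right, ?_, hE, hdiag, ?_, hα⟩
  · refine eq_top_mono (Subgroup.closure_mono ?_) htop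
    rintro _ (rfl | rfl)
    · exact Or.inr rfl
    · exact Or.inl (Subgroup.mem_sup_left (Subgroup.mem_zpowers _))
  · intro h hh hhE a b
    obtain ⟨j, hj, hsign⟩ := hpow h hh
    rcases eq_or_ne a b with rfl | hab
    · exact hdiag h hh a
    · rw [hsign.valuation_mat_apply, hβ.valuation_zpow_apply hval h1 (hj hhE) hab]

end ResiduallyGeneric

end ResiduallyGeneric

section Matrices

variable {K₀ : Type*} [Field K₀]

/-- The matrix of `[a, b]`, of trace `2 - g`. -/
def commMat (q g : K₀) : SL(2, K₀) :=
  ⟨!![1 + g * q, 1; -g * (1 + g * q * (1 + q)), 1 - g - g * q], by rw [det_fin_two_of]; ring⟩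

/-- The matrix of `b`, up to a diagonal matrix, that makes `[a, b]` the matrix `commMat q g` when
`a` is `diag(s, s⁻¹)` and `q = (s ^ 2 - 1)⁻¹`. -/
def letterMat (q g : K₀) : SL(2, K₀) :=
  ⟨!![1 + g * q * (1 + q), 1 + q; g * q, 1], by rw [det_fin_two_of]; ring⟩

lemma mat_commMat (q g : K₀) : mat (commMat q g) =
    !![1 + g * q, 1; -g * (1 + g * q * (1 + q)), 1 - g - g * q] := rfl

lemma mat_letterMat (q g : K₀) :
    mat (letterMat q g) = !![1 + g * q * (1 + q), 1 + q; g * q, 1] := rfl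

lemma mat_conj_commMat (q g : K₀) :
    mat (letterMat q g * commMat q g * (letterMat q g)⁻¹) =
      !![1 - g - g * q, 1 + g * q * (1 + q); -g, 1 + g * q] := by
  rw [map_mul, map_mul, mat_inv, mat_letterMat, mat_commMat]
  ext i j
  fin_cases i <;> fin_cases j <;> simp [mul_apply, Fin.sum_univ_two] <;> ring

lemma axisComm_letterMat {s : K₀ˣ} {q : K₀} (hq : q * ((s : K₀) ^ 2 - 1) = 1) (g : K₀) :
    axisComm s (letterMat q g) = commMat q g := by
  have hs := s.ne_zero
  rw [axisComm, mul_assoc, mul_assoc, inv_mul_eq_iff_eq_mul, inv_mul_eq_iff_eq_mul]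
  apply mat_injective
  simp only [map_mul, mat_letterMat, mat_commMat, mat_diagSL, Units.val_inv_eq_inv_val]
  ext i j
  fin_cases i <;> fin_cases j <;> simp [mul_apply, Fin.sum_univ_two] <;> field_simp
  · linear_combination (-g * (1 + g * q * (1 + q))) * hq
  · linear_combination (1 - g * (1 + q)) * hq
  · linear_combination (-g * (1 + g * q)) * hq
  · linear_combination -g * hq

variable {k Γ₀ : Type*} [Field k] [LinearOrderedCommGroupWithZero Γ₀] {v₀ : Valuation K₀ Γ₀}

lemma valuation_one_add {x : K₀} (hx : v₀ x < 1) : v₀ (1 + x) = 1 := by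
  rw [v₀.map_add_eq_of_lt_left (by rwa [map_one]), map_one]

lemma one_lt_valuation_sq_sub_one {s : K₀} (hs : 1 < v₀ s) : 1 < v₀ (s ^ 2 - 1) := by
  have hsq : 1 < v₀ (s ^ 2) := by
    rw [map_pow]
    exact one_lt_pow₀ hs two_ne_zero
  rwa [v₀.map_sub_eq_of_lt_left (by rwa [map_one])]

variable {i : k →+* K₀} {ζ : kˣ} {q g : K₀}

lemma valuation_one_add_mul (hq : v₀ q < 1) (hg : v₀ g = 1) :
    v₀ (1 + g * q * (1 + q)) = 1 := by
  refine valuation_one_add ?_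
  rwa [map_mul, map_mul, hg, one_mul, valuation_one_add hq, mul_one]

lemma residuallyGeneric_commMat (htr : 2 - g = i (ζ + (ζ : k)⁻¹)) (hq : v₀ q < 1)
    (hg : v₀ g = 1) : ResiduallyGeneric v₀ i ζ (commMat q g) where
  trace_eq := by
    rw [← htr, mat_commMat, trace_fin_two_of]
    ring
  exists_diag := ⟨0, by simpa [mat_commMat, hg] using hq⟩
  offDiag a b hab := by
    rw [mat_commMat]
    fin_cases a <;> fin_cases b <;> simp [hg, valuation_one_add_mul hq hg] at hab ⊢

lemma residuallyGeneric_conj_commMat (htr : 2 - g = i (ζ + (ζ : k)⁻¹)) (hq : v₀ q < 1)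
    (hg : v₀ g = 1) :
    ResiduallyGeneric v₀ i ζ (letterMat q g * commMat q g * (letterMat q g)⁻¹) where
  trace_eq := by
    rw [← htr, mat_conj_commMat, trace_fin_two_of]
    ring
  exists_diag := ⟨1, by simpa [mat_conj_commMat, hg] using hq⟩
  offDiag a b hab := by
    rw [mat_conj_commMat]
    fin_cases a <;> fin_cases b <;> simp [hg, valuation_one_add_mul hq hg] at hab ⊢

lemma two_sub_add_inv_ne_zero (h1 : ζ ^ 2 ≠ 1) : (2 : k) - (ζ + (ζ : k)⁻¹) ≠ 0 := by
  intro h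
  have hsq : (ζ : k) ^ 2 = 1 := by
    field_simp [ζ.ne_zero] at h
    have hζ : (ζ : k) - 1 = 0 := pow_eq_zero_iff two_ne_zero |>.1 (by linear_combination -h)
    linear_combination (ζ + 1 : k) * hζ
  exact h1 (Units.ext hsq)

theorem exists_residuallyGeneric {s : K₀ˣ} (hs : 1 < v₀ s) (hval : ∀ c ≠ 0, v₀ (i c) = 1)
    (h1 : ζ ^ 2 ≠ 1) :
    ∃ B, ∀ ε, ResiduallyGeneric v₀ i ζ (frame B ε * axisComm s B * (frame B ε)⁻¹) := by
  have hvs := one_lt_valuation_sq_sub_one hs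
  have hq : v₀ ((s : K₀) ^ 2 - 1)⁻¹ < 1 := by
    rw [map_inv₀]
    exact inv_lt_one_of_one_lt₀ hvs
  have hcomm := axisComm_letterMat (s := s)
    (inv_mul_cancel₀ (v₀.ne_zero_iff.1 (zero_lt_one.trans hvs).ne'))
  have htr : 2 - i (2 - (ζ + (ζ : k)⁻¹)) = i (ζ + (ζ : k)⁻¹) := by
    rw [map_sub, map_ofNat, sub_sub_cancel]
  have hg := hval _ (two_sub_add_inv_ne_zero h1)
  refine ⟨letterMat ((s : K₀) ^ 2 - 1)⁻¹ (i (2 - (ζ + (ζ : k)⁻¹))), fun ε => ?_⟩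
  rw [hcomm]
  cases ε
  · simpa [frame] using residuallyGeneric_conj_commMat htr hq hg
  · simpa [frame] using residuallyGeneric_commMat htr hq hg

end Matrices

section Construction

variable {k K₀ K Γ₀ Γ₁ Q : Type*} [Field k] [Field K₀] [Field K] [Group Q]
  [LinearOrderedCommGroupWithZero Γ₀] [LinearOrderedCommGroupWithZero Γ₁]
  {v₀ : Valuation K₀ Γ₀} {v : Valuation K Γ₁} {i : k →+* K₀} {ζ : kˣ}
  {f : K₀ →+* K} {s : K₀ˣ} {t : Kˣ} {B : SL(2, K₀)} {π : F₂ →* Q} {n : ℕ}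

lemma trace_diagSL_mul_axisComm (s : K₀ˣ) (B : SL(2, K₀)) :
    (mat (diagSL s * axisComm s B)).trace = (mat (diagSL s)).trace := by
  rw [axisComm, mul_assoc, mul_assoc, mul_inv_cancel_left, map_mul, trace_mul_comm, ← map_mul,
    mul_assoc, mul_inv_cancel, mul_one]

lemma trace_diagSL_mul_axisComm_zpow (h1 : ζ ^ 2 ≠ 1)
    (htr : (mat (axisComm s B)).trace = i (ζ + (ζ : k)⁻¹)) (j : ℤ) :
    (mat (diagSL s * axisComm s B ^ j)).trace =
      i (cheb ζ j - cheb ζ (j - 1)) * (mat (diagSL s)).trace := by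
  rw [map_mul, mat_zpow i h1 htr, mul_sub, trace_sub, Matrix.mul_smul, Matrix.mul_smul, mul_one,
    trace_smul, trace_smul, ← map_mul, trace_diagSL_mul_axisComm, smul_eq_mul, smul_eq_mul,
    map_sub, sub_mul]

lemma trace_diagSL_ne_zero (hs : 1 < v₀ s) : (mat (diagSL s)).trace ≠ 0 := by
  rw [trace_diagSL, Units.val_inv_eq_inv_val]
  intro h
  have hv : v₀ (s : K₀) = (v₀ s)⁻¹ := by
    rw [← map_inv₀, ← v₀.map_neg (s : K₀)⁻¹, ← eq_neg_of_add_eq_zero_left h]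
  exact (inv_lt_one_of_one_lt₀ hs).not_gt (hv ▸ hs)

lemma zpow_eq_one_of_trace_eq (hs : 1 < v₀ s) (h1 : ζ ^ 2 ≠ 1)
    (htr : (mat (axisComm s B)).trace = i (ζ + (ζ : k)⁻¹)) {j : ℤ}
    (hj : (mat (diagSL s * axisComm s B ^ j)).trace = (mat (diagSL s)).trace ∨
      (mat (diagSL s * axisComm s B ^ j)).trace = -(mat (diagSL s)).trace) :
    (ζ ^ 2) ^ j = 1 ∨ (ζ ^ 2) ^ (j - 1) = 1 := by
  have hne := trace_diagSL_ne_zero hs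
  rw [trace_diagSL_mul_axisComm_zpow h1 htr] at hj
  refine zpow_eq_one_of_cheb_sub h1 (hj.imp (fun h => ?_) fun h => ?_) <;>
    refine i.injective (mul_right_cancel₀ hne (h.trans ?_)) <;> simp

lemma signEq_torusRep_of_mem_ker (hker : π.ker = Subgroup.normalClosure {xc ^ n})
    (hpow : SignEq (axisComm s B ^ n) 1) : ∀ e ∈ π.ker, SignEq (torusRep f s t B e) 1 := by
  have hle : π.ker ≤ (Subgroup.center SL(2, K)).comap (torusRep f s t B) := by
    rw [hker]
    refine Subgroup.normalClosure_le_normal (Set.singleton_subset_iff.2 ?_)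
    rw [SetLike.mem_coe, Subgroup.mem_comap, ← signEq_one_iff_mem_center, map_pow, torusRep_xc,
      ← map_pow, ← map_one (scal f), signEq_scal_iff]
    exact hpow
  exact fun e he => signEq_one_iff_mem_center.2 (hle he)

lemma signEq_vertexRep_of_mem_ker (hsign : ∀ e ∈ π.ker, SignEq (torusRep f s t B e) 1) {ε : Bool} :
    ∀ e ∈ (π.comp (incl ε)).ker, SignEq (vertexRep s B ε e) 1 := by
  intro e he
  rw [← signEq_scal_iff f, ← frame_conj_torusRep_incl f s t, map_one]
  simpa only [mul_one, mul_inv_cancel] using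
    ((SignEq.refl (scal f (frame B ε))).mul (hsign _ he)).mul (.refl (scal f (frame B ε))⁻¹)

lemma closure_xa_xb : Subgroup.closure ({xa, xb} : Set F₂) = ⊤ := by
  rw [← FreeGroup.closure_range_of]
  congr 1
  ext x
  simp [Fin.exists_fin_two, eq_comm]

theorem exists_torusRep (hπ : Function.Surjective π)
    (hker : π.ker = Subgroup.normalClosure {xc ^ n}) (hn : n ≠ 1) (hζ : orderOf (ζ ^ 2) = n)
    (hneg : ∀ j : ℤ, ζ ^ (2 * j + 1) ≠ -1) (hval : ∀ c ≠ 0, v₀ (i c) = 1) (hs : 1 < v₀ s)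
    (hf : ∀ x ≠ 0, v (f x) = 1) (ht : 1 < v t) :
    ∃ H : TorusRep π v₀ v, (mat (H.ρ xc)).trace = H.f (i (ζ + (ζ : k)⁻¹)) := by
  have h1 : ζ ^ 2 ≠ 1 := fun h => hn (by rw [← hζ, h, orderOf_one])
  have hxc (j : ℤ) (hj : (ζ ^ 2) ^ j = 1) : π xc ^ j = 1 := by
    obtain ⟨l, rfl⟩ := orderOf_dvd_iff_zpow_eq_one.2 hj
    rw [hζ, _root_.zpow_mul, zpow_natCast, map_xc_pow_eq_one hker, _root_.one_zpow]
  obtain ⟨B, hB⟩ := exists_residuallyGeneric (s := s) hs hval h1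
  have hC : ResiduallyGeneric v₀ i ζ (axisComm s B) := by simpa [frame] using hB true
  have hCn : SignEq (axisComm s B ^ n) 1 := by
    rw [← zpow_natCast]
    exact signEq_zpow_one i h1 hC.trace_eq (by rw [zpow_natCast, ← hζ, pow_orderOf_eq_one])
  have hsign := signEq_torusRep_of_mem_ker (f := f) (t := t) hker hCn
  refine ⟨⟨f, s, t, B, fun ε => ?_, hsign, hf, ht, hπ, σ_eq_zero_of_mem_ker hker, ?_, ?_⟩, ?_⟩
  · refine ResiduallyGeneric.diagPong (vertexRep_xb s B ε ▸ hB ε) hval h1 hneg hs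
      (vertexRep_xa s B ε) closure_xa_xb (signEq_vertexRep_of_mem_ker hsign) fun j hj => ?_
    rw [MonoidHom.mem_ker, map_zpow, MonoidHom.comp_apply, incl_xb, hxc j hj]
  · intro h
    refine hC.not_signEq_one ?_
    rw [← signEq_scal_iff f, ← torusRep_xc f s t, map_one]
    exact hsign _ (MonoidHom.mem_ker.2 h)
  · intro j hj
    refine (zpow_eq_one_of_trace_eq hs h1 hC.trace_eq hj).imp (hxc j) fun h => ?_
    rw [← sub_add_cancel j 1, _root_.zpow_add_one, hxc _ h, one_mul]
  · exact (congrArg (fun M => (mat M).trace) (torusRep_xc f s t B)).trans <| by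
      rw [trace_scal, hC.trace_eq]

end Construction

section RationalFunctions

variable (F : Type*) [Field F]

open Classical in
/-- The valuation at infinity of the field of rational functions; it fixes the decidability
instance that `RatFunc.inftyValuation` asks for. -/
noncomputable def degVal : Valuation (RatFunc F) (WithZero (Multiplicative ℤ)) :=
  RatFunc.inftyValuation F

lemma degVal_C {c : F} (hc : c ≠ 0) : degVal F (RatFunc.C c) = 1 := by
  classical exact RatFunc.inftyValuation.C F hc

lemma one_lt_degVal_X : 1 < degVal F RatFunc.X := by
  rw [degVal, RatFunc.inftyValuation.X]
  decide

end RationalFunctions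

section Lift

variable {Q : Type*} [Group Q] {π : F₂ →* Q} {n : ℕ}

lemma exists_torusRep_ratFunc (hπ : Function.Surjective π)
    (hker : π.ker = Subgroup.normalClosure {xc ^ n}) (hn : n ≠ 1) :
    ∃ (H : TorusRep π (degVal ℂ) (degVal (RatFunc ℂ))) (κ : ℂ),
      (mat (H.ρ xc)).trace = H.f (RatFunc.C κ) := by
  obtain ⟨ζ, hζ, hneg⟩ := exists_orderOf_sq_eq n
  obtain ⟨H, hH⟩ := exists_torusRep (v₀ := degVal ℂ) (v := degVal (RatFunc ℂ)) (f := RatFunc.C)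
    (s := Units.mk0 RatFunc.X RatFunc.X_ne_zero) (t := Units.mk0 RatFunc.X RatFunc.X_ne_zero)
    hπ hker hn hζ hneg (fun _ => degVal_C ℂ) (one_lt_degVal_X ℂ) (fun _ => degVal_C _)
    (one_lt_degVal_X _)
  exact ⟨H, _, hH⟩

theorem exists_tame_lift (hπ : Function.Surjective π)
    (hker : π.ker = Subgroup.normalClosure {xc ^ n}) (hn : 1 < n) (φ : MulAut Q) :
    ∃ θ ∈ tame, ∀ w, φ (π w) = π (θ w) := by
  obtain ⟨H, -⟩ := exists_torusRep_ratFunc hπ hker hn.ne'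
  exact H.exists_tame
    (H.integralTrace_of_pow (zero_lt_one.trans hn) (map_xc_pow_eq_one hker)) φ

lemma ker_id : (MonoidHom.id F₂).ker = Subgroup.normalClosure {xc ^ 0} := by
  rw [pow_zero, MonoidHom.ker_id, Subgroup.normalClosure_eq_bot_iff.2 subset_rfl]

theorem mem_tame (φ : MulAut F₂) : φ ∈ tame := by
  obtain ⟨H, κ, hκ⟩ := exists_torusRep_ratFunc Function.surjective_id ker_id zero_ne_one
  have hle := valuation_map_le_one (f := RatFunc.C) (fun _ => degVal_C ℂ)
  obtain ⟨θ, hθ, h⟩ := H.exists_tame (H.integralTrace_id RatFunc.C hle hκ) φ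
  rwa [show φ = θ from MulEquiv.ext h]

end Lift

end TorusGroup

theorem statement_18 (n : ℕ) (hn : 1 < n) :
    (∀ φ : MulAut (FreeGroup (Fin 2)),
      ∃ ψ : MulAut (PresentedGroup
        ({((FreeGroup.of (0 : Fin 2))⁻¹ * (FreeGroup.of (1 : Fin 2))⁻¹ *
            FreeGroup.of (0 : Fin 2) * FreeGroup.of (1 : Fin 2)) ^ n} : Set (FreeGroup (Fin 2)))),
        ∀ w : FreeGroup (Fin 2),
          ψ (PresentedGroup.mk _ w) = PresentedGroup.mk _ (φ w)) ∧
    Nonempty (Out (PresentedGroup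
        ({((FreeGroup.of (0 : Fin 2))⁻¹ * (FreeGroup.of (1 : Fin 2))⁻¹ *
            FreeGroup.of (0 : Fin 2) * FreeGroup.of (1 : Fin 2)) ^ n} : Set (FreeGroup (Fin 2)))) ≃*
      Out (FreeGroup (Fin 2))) ∧
    Nonempty (Out (FreeGroup (Fin 2)) ≃* Matrix.GeneralLinearGroup (Fin 2) ℤ) := by
  have hker : (PresentedGroup.mk ({TorusGroup.xc ^ n} : Set (FreeGroup (Fin 2)))).ker =
      Subgroup.normalClosure {TorusGroup.xc ^ n} := QuotientGroup.ker_mk' _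
  have hsurj := PresentedGroup.mk_surjective ({TorusGroup.xc ^ n} : Set (FreeGroup (Fin 2)))
  obtain ⟨eG⟩ := TorusGroup.nonempty_out_equiv hsurj hker
    (TorusGroup.exists_tame_lift hsurj hker hn)
  obtain ⟨eF⟩ := TorusGroup.nonempty_out_equiv Function.surjective_id TorusGroup.ker_id
    fun φ => ⟨φ, TorusGroup.mem_tame φ, fun _ => rfl⟩
  exact ⟨fun φ => TorusGroup.exists_induced hsurj hker (TorusGroup.mem_tame φ),
    ⟨eG.trans eF.symm⟩, ⟨eF⟩⟩
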